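/- arXiv:2105.00254 — 10 statements merged into one kernel-verified Lean document; each statement's English description precedes it below -/
import Mathlib

section
/- Every connected simple graph of even order contains a 0-perfect forest, i.e., a spanning forest F such that every connected component of F is an induced subgraph of G and every vertex of F has odd degree in F. -/
open SimpleGraph

/-- The degree of `v` in `F`, defined via `Set.ncard` so that no decidability
instances are needed. -/
noncomputable def fdeg {V : Type*} (F : SimpleGraph V) (v : V) : ℕ :=
  (F.neighborSet v).ncard

/-- `F` is a semiperfect spanning forest of `G`: `F` is a spanning subgraph of `G`
that is a forest, and every connected component of `F` is an induced subgraph of `G`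
(i.e. every `G`-edge between vertices in the same component of `F` is an edge of `F`). -/
def IsSemiperfectForest {V : Type*} (G F : SimpleGraph V) : Prop :=
  F ≤ G ∧ F.IsAcyclic ∧ ∀ x y : V, F.Reachable x y → G.Adj x y → F.Adj x y

/-- degree parity -/
noncomputable def par {V : Type*} [Fintype V] (F : SimpleGraph V) (v : V) : ZMod 2 :=
  open Classical in ∑ w, if F.Adj v w then 1 else 0

/-- indicator -/
noncomputable def ind {V : Type*} (x v : V) : ZMod 2 :=
  open Classical in if v = x then 1 else 0

lemma par_eq {V : Type*} [Fintype V] (F : SimpleGraph V) (v : V) : par F v = (fdeg F v : ZMod 2) := by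
  classical
  unfold par fdeg
  rw [Finset.sum_boole, Set.ncard_eq_toFinset_card']
  congr 2
  ext w
  simp

lemma zmod2_add_self (a : ZMod 2) : a + a = 0 := by
  revert a; decide

lemma par_symmDiff {V : Type*} [Fintype V] (F H : SimpleGraph V) (v : V) :
    par (symmDiff F H) v = par F v + par H v := by
  classical
  unfold par
  rw [← Finset.sum_add_distrib]
  apply Finset.sum_congr rfl
  intro w _
  by_cases h1 : F.Adj v w <;> by_cases h2 : H.Adj v w <;>
    simp [symmDiff_def, h1, h2, zmod2_add_self]

lemma par_edge {V : Type*} [Fintype V] {x y : V} (h : x ≠ y) (v : V) :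
    par (edge x y) v = ind x v + ind y v := by
  classical
  unfold par ind
  by_cases h1 : v = x
  · subst h1
    rw [Finset.sum_eq_single y] <;> simp [edge_adj, h]
    grind
  · by_cases h2 : v = y
    · subst h2
      rw [Finset.sum_eq_single x] <;> simp [edge_adj, h, h1]
      grind
    · simp [edge_adj, h1, h2]

lemma exists_join {V : Type*} [Fintype V] (F : SimpleGraph V) {x y : V} (p : F.Walk x y) :
    ∃ H ≤ F, ∀ v, par H v = ind x v + ind y v := by
  induction p with
  | nil => exact ⟨⊥, bot_le, fun v => by rw [zmod2_add_self]; simp [par]⟩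
  | @cons a b c h p ih =>
    obtain ⟨H, hH, hp⟩ := ih
    refine ⟨symmDiff (edge a b) H, ?_, fun v => ?_⟩
    · refine symmDiff_le_sup.trans (sup_le ?_ hH)
      rw [edge_le_iff]
      exact Or.inr h
    · rw [par_symmDiff, par_edge h.ne, hp]
      have := zmod2_add_self (ind b v)
      linear_combination this

lemma exists_all {V : Type*} [Fintype V] (G : SimpleGraph V) (hG : G.Connected)
    (heven : Even (Fintype.card V)) : ∃ F ≤ G, ∀ v, par F v = 1 := by
  classical
  obtain ⟨r⟩ := hG.nonempty
  have key : ∀ S : Finset V, ∃ F ≤ G, ∀ v, par F v = ∑ u ∈ S, (ind r v + ind u v) := by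
    intro S
    induction S using Finset.induction_on with
    | empty => exact ⟨⊥, bot_le, fun v => by simp [par]⟩
    | insert a S ha ih =>
      obtain ⟨F, hF, hp⟩ := ih
      obtain ⟨p⟩ := hG.preconnected r a
      obtain ⟨H, hH, hq⟩ := exists_join G p
      refine ⟨symmDiff H F, symmDiff_le_sup.trans (sup_le hH hF), fun v => ?_⟩
      rw [par_symmDiff, hp, hq, Finset.sum_insert ha]
  obtain ⟨F, hF, hp⟩ := key Finset.univ
  refine ⟨F, hF, fun v => ?_⟩
  rw [hp, Finset.sum_add_distrib, Finset.sum_const, Finset.card_univ, nsmul_eq_mul,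
    (ZMod.natCast_eq_zero_iff_even).2 heven]
  simp [ind]

/-- Every connected simple graph of even order contains a 0-perfect forest:
a semiperfect spanning forest in which every vertex has odd degree. -/
theorem connected_even_order_has_zero_perfect_forest {V : Type*} [Fintype V]
    (G : SimpleGraph V) (hG : G.Connected) (heven : Even (Fintype.card V)) :
    ∃ F : SimpleGraph V, IsSemiperfectForest G F ∧ ∀ v : V, Odd (fdeg F v) := by
  classical
  have hne : {F : SimpleGraph V | F ≤ G ∧ ∀ v, par F v = 1}.Nonempty := by
    obtain ⟨F, h1, h2⟩ := exists_all G hG heven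
    exact ⟨F, h1, h2⟩
  obtain ⟨F, ⟨hFG, hF⟩, hmin⟩ := Set.exists_min_image _
    (fun F : SimpleGraph V => F.edgeSet.ncard) (Set.toFinite _) hne
  refine ⟨F, ⟨hFG, ?_, ?_⟩, fun v => ?_⟩
  · rw [isAcyclic_iff_forall_edge_isBridge]
    intro e
    induction e using Sym2.ind with
    | _ u v =>
    intro huv
    have huv' : F.Adj u v := huv
    rw [isBridge_iff]
    rintro ⟨p⟩
    obtain ⟨H, hH, hp⟩ := exists_join _ p
    have hHF : H ≤ F := hH.trans (deleteEdges_le _)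
    have hle : symmDiff F (symmDiff H (edge u v)) ≤ F := by
      refine symmDiff_le_sup.trans (sup_le le_rfl (symmDiff_le_sup.trans (sup_le hHF ?_)))
      rw [edge_le_iff]; exact Or.inr huv'
    have hnH : ¬ H.Adj u v := fun h => by
      have := hH h
      simp at this
    have := hmin (symmDiff F (symmDiff H (edge u v))) ⟨hle.trans hFG, fun w => by
      rw [par_symmDiff, par_symmDiff, par_edge huv'.ne, hp, hF, zmod2_add_self, add_zero]⟩
    have hlt : (symmDiff F (symmDiff H (edge u v))).edgeSet.ncard < F.edgeSet.ncard := by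
      apply Set.ncard_lt_ncard _ (Set.toFinite _)
      rw [Set.ssubset_iff_of_subset (edgeSet_mono hle)]
      refine ⟨s(u, v), huv', ?_⟩
      simp [symmDiff_def, huv', hnH, edge_adj, huv'.ne]
    exact absurd this (not_le.2 hlt)
  · rintro x y ⟨p⟩ hxy
    by_contra hn
    obtain ⟨H, hH, hp⟩ := exists_join _ p
    have := hmin (symmDiff F (symmDiff H (edge x y))) ⟨by
      refine symmDiff_le_sup.trans (sup_le hFG (symmDiff_le_sup.trans (sup_le (hH.trans hFG) ?_)))
      rw [edge_le_iff]; exact Or.inr hxy, fun w => by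
      rw [par_symmDiff, par_symmDiff, par_edge hxy.ne, hp, hF, zmod2_add_self, add_zero]⟩
    have hex : ∀ v, par H v = 1 → ∃ w, H.Adj v w := by
      intro v hv
      by_contra! h
      simp [par, h] at hv
    obtain ⟨a, ha⟩ := hex x (by rw [hp]; simp [ind, hxy.ne])
    obtain ⟨b, hb⟩ := hex y (by rw [hp]; simp [ind, hxy.ne'])
    have hne2 : s(x, a) ≠ s(y, b) := by
      intro h
      rw [Sym2.eq_iff] at h
      rcases h with ⟨h, _⟩ | ⟨h1, h2⟩
      · exact hxy.ne h
      · subst h2; exact hn (hH ha)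
    have hsub : (symmDiff F (symmDiff H (edge x y))).edgeSet ⊆
        insert s(x, y) (F.edgeSet \ {s(x, a), s(y, b)}) := by
      intro e
      induction e using Sym2.ind with
      | _ u v =>
      intro he
      by_cases huv : s(u, v) = s(x, y)
      · exact Or.inl huv
      right
      have hE : ¬ (edge x y).Adj u v := by
        intro h
        rw [edge_adj] at h
        apply huv
        rw [Sym2.eq_iff]
        exact h.1
      have hh : F.Adj u v ∧ ¬ H.Adj u v := by
        have h3 := @hH u v
        simp only [symmDiff_def, mem_edgeSet, sup_adj, sdiff_adj] at he
        tauto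
      refine ⟨hh.1, ?_⟩
      rintro (h | h)
      · exact hh.2 (by rw [← mem_edgeSet, h]; exact ha)
      · exact hh.2 (by rw [← mem_edgeSet, h]; exact hb)
    have h1 := Set.ncard_le_ncard hsub (Set.toFinite _)
    have h2 := Set.ncard_insert_le s(x, y) (F.edgeSet \ {s(x, a), s(y, b)})
    have h3 := Set.ncard_diff_add_ncard_of_subset (s := {s(x, a), s(y, b)}) (t := F.edgeSet)
      (by rintro e (rfl | rfl)
          · exact hH ha
          · exact hH hb) (Set.toFinite _)
    rw [Set.ncard_pair hne2] at h3
    omega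
  · rw [← ZMod.natCast_eq_one_iff_odd, ← par_eq]
    exact hF v
end

section
/- Let G be a connected graph and let f : V(G) → {0,1} be a function with ∑_{v ∈ V(G)} f(v) even. If H is an f-parity subgraph of G with the minimum possible number of edges (among all f-parity subgraphs of G), then H is an f-parity perfect forest, i.e., H is a forest each of whose connected components is an induced subgraph of G. -/
open SimpleGraph

theorem ncard_symmDiff_aux {α : Type*} [Finite α] (A B : Set α) :
    (symmDiff A B).ncard + 2 * (A ∩ B).ncard = A.ncard + B.ncard := by
  have h1 := Set.ncard_inter_add_ncard_diff_eq_ncard A B (Set.toFinite _)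
  have h2 := Set.ncard_inter_add_ncard_diff_eq_ncard B A (Set.toFinite _)
  have h3 : (symmDiff A B).ncard = (A \ B).ncard + (B \ A).ncard := by
    rw [Set.symmDiff_def, Set.ncard_union_eq (by
      rw [Set.disjoint_left]; intro x hx hy; exact hy.2 hx.1) (Set.toFinite _) (Set.toFinite _)]
  rw [Set.inter_comm B A] at h2
  omega

theorem cycle_contra {V : Type*} [Fintype V] (G H : SimpleGraph V) (hHG : H ≤ G) (f : V → ℕ)
    (hHpar : ∀ x : V, fdeg H x % 2 = f x)
    (hmin : ∀ H' : SimpleGraph V, H' ≤ G → (∀ x : V, fdeg H' x % 2 = f x) →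
      H.edgeSet.ncard ≤ H'.edgeSet.ncard)
    {u : V} (c : G.Walk u u) (hc : c.IsCycle) (e₀ : Sym2 V)
    (he : ∀ e ∈ c.edges, e ∈ H.edgeSet ∨ e = e₀) : False := by
  classical
  have hle : symmDiff H c.toSubgraph.spanningCoe ≤ G := by
    refine le_trans symmDiff_le_sup (sup_le hHG ?_)
    exact c.toSubgraph.spanningCoe_le
  have hdeg : ∀ x, fdeg (symmDiff H c.toSubgraph.spanningCoe) x % 2 = f x := by
    intro x
    rw [← hHpar x]
    unfold fdeg
    have h1 : (symmDiff H c.toSubgraph.spanningCoe).neighborSet x =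
        symmDiff (H.neighborSet x) (c.toSubgraph.neighborSet x) := by
      ext w
      simp [symmDiff_def, Set.mem_symmDiff]
    have h2 := ncard_symmDiff_aux (H.neighborSet x) (c.toSubgraph.neighborSet x)
    have h3 : (c.toSubgraph.neighborSet x).ncard % 2 = 0 := by
      by_cases hx : x ∈ c.support
      · rw [hc.ncard_neighborSet_toSubgraph_eq_two hx]
      · have : c.toSubgraph.neighborSet x = ∅ := by
          ext w
          simp only [Subgraph.mem_neighborSet, Set.mem_empty_iff_false, iff_false]
          intro h
          exact hx (by simpa using h.fst_mem)
        simp [this]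
    rw [h1]
    omega
  have hm := hmin _ hle hdeg
  have h1 : (symmDiff H c.toSubgraph.spanningCoe).edgeSet =
      symmDiff H.edgeSet {e | e ∈ c.edges} := by
    ext e
    simp [symmDiff_def, Set.mem_symmDiff, Subgraph.edgeSet_spanningCoe]
  have h2 := ncard_symmDiff_aux H.edgeSet {e | e ∈ c.edges}
  have h3 : {e | e ∈ c.edges}.ncard = c.length := by
    rw [← List.coe_toFinset, Set.ncard_coe_finset, List.toFinset_card_of_nodup hc.edges_nodup,
      Walk.length_edges]
  have h4 := Set.ncard_inter_add_ncard_diff_eq_ncard {e | e ∈ c.edges} H.edgeSet (Set.toFinite _)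
  have h5 : ({e | e ∈ c.edges} \ H.edgeSet).ncard ≤ 1 := by
    rw [← Set.ncard_singleton e₀]
    apply Set.ncard_le_ncard _ (Set.toFinite _)
    rintro e ⟨h, h'⟩
    exact (he e h).resolve_left h'
  have h6 := hc.three_le_length
  rw [Set.inter_comm] at h4
  rw [h1] at hm
  omega

/-- Let `G` be a connected graph and `f : V → {0,1}` an even-sum function.
If `H` is an `f`-parity spanning subgraph of `G` (i.e. `d_H(x) ≡ f(x) (mod 2)` for all `x`)
with the minimum possible number of edges among all such subgraphs, then `H` is an
`f`-parity perfect forest: a forest each of whose components is induced in `G`. -/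
theorem min_parity_subgraph_is_perfect_forest {V : Type*} [Fintype V]
    (G : SimpleGraph V) (hG : G.Connected)
    (f : V → ℕ) (hf01 : ∀ v, f v ≤ 1) (hfsum : Even (∑ v, f v))
    (H : SimpleGraph V) (hHG : H ≤ G) (hHpar : ∀ x : V, fdeg H x % 2 = f x)
    (hmin : ∀ H' : SimpleGraph V, H' ≤ G → (∀ x : V, fdeg H' x % 2 = f x) →
      H.edgeSet.ncard ≤ H'.edgeSet.ncard) :
    IsSemiperfectForest G H := by
  refine ⟨hHG, ?_, ?_⟩
  · intro v c hc
    refine cycle_contra G H hHG f hHpar hmin (c.mapLe hHG) (hc.mapLe hHG) s(v, v) ?_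
    intro e he
    left
    rw [Walk.edges_mapLe_eq_edges] at he
    exact c.edges_subset_edgeSet he
  · intro x y hr hxy
    by_contra hn
    obtain ⟨p, hp⟩ := hr.symm.exists_isPath
    have hE : ∀ e ∈ (p.mapLe hHG).edges, e ∈ H.edgeSet := by
      intro e he
      rw [Walk.edges_mapLe_eq_edges] at he
      exact p.edges_subset_edgeSet he
    refine cycle_contra G H hHG f hHpar hmin (Walk.cons hxy (p.mapLe hHG)) ?_ s(x, y) ?_
    · rw [Walk.cons_isCycle_iff]
      exact ⟨hp.mapLe hHG, fun h => hn (hE _ h)⟩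
    · intro e he
      rw [Walk.edges_cons, List.mem_cons] at he
      exact he.symm.imp_left (hE e)
end

section
/- Let G be a connected graph and let f : V(G) → {0,1} be a function with ∑_{v ∈ V(G)} f(v) even. Then there exists an f-parity perfect forest in G, i.e., a spanning forest F each of whose connected components is an induced subgraph of G and such that d_F(x) ≡ f(x) (mod 2) for every vertex x. -/
open SimpleGraph

lemma fdeg_symmDiff {V : Type*} [Fintype V] (A B : SimpleGraph V) (v : V) :
    (fdeg (symmDiff A B) v : ZMod 2) = fdeg A v + fdeg B v := by
  classical
  have h1 : (symmDiff A B).neighborSet v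
      = (A.neighborSet v \ B.neighborSet v) ∪ (B.neighborSet v \ A.neighborSet v) := by
    ext w
    simp [symmDiff]
  have h2 : ((symmDiff A B).neighborSet v).ncard
      = (A.neighborSet v \ B.neighborSet v).ncard + (B.neighborSet v \ A.neighborSet v).ncard := by
    rw [h1]
    apply Set.ncard_union_eq _ (Set.toFinite _) (Set.toFinite _)
    rw [Set.disjoint_left]
    intro w h h'
    exact h'.2 h.1
  have h3 := Set.ncard_inter_add_ncard_sdiff_eq_ncard (A.neighborSet v) (B.neighborSet v) (Set.toFinite _)
  have h4 := Set.ncard_inter_add_ncard_sdiff_eq_ncard (B.neighborSet v) (A.neighborSet v) (Set.toFinite _)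
  rw [Set.inter_comm] at h4
  unfold fdeg
  rw [← Nat.cast_add, ZMod.natCast_eq_natCast_iff']
  omega

lemma fdeg_edge {V : Type*} [DecidableEq V] (x y v : V) (h : x ≠ y) :
    (fdeg (SimpleGraph.edge x y) v : ZMod 2)
      = (if v = x then 1 else 0) + (if v = y then 1 else 0) := by
  unfold fdeg
  by_cases hx : v = x
  · subst hx
    have : (SimpleGraph.edge v y).neighborSet v = {y} := by
      ext w
      simp [SimpleGraph.edge_adj]
      grind
    rw [this]
    simp [h]
  · by_cases hy : v = y
    · subst hy
      have : (SimpleGraph.edge x v).neighborSet v = {x} := by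
        ext w
        simp [SimpleGraph.edge_adj]
        grind
      rw [this]
      simp [hx]
    · have : (SimpleGraph.edge x y).neighborSet v = ∅ := by
        ext w
        simp [SimpleGraph.edge_adj]
        grind
      rw [this]
      simp [hx, hy]

lemma symmDiff_le_of {V : Type*} {A B G : SimpleGraph V} (hA : A ≤ G) (hB : B ≤ G) :
    symmDiff A B ≤ G :=
  symmDiff_le_sup.trans (sup_le hA hB)

lemma fdeg_bot {V : Type*} (v : V) : fdeg (⊥ : SimpleGraph V) v = 0 := by
  have : (⊥ : SimpleGraph V).neighborSet v = ∅ := by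
    ext w
    simp
  simp [fdeg, this]

lemma exists_walk_graph {V : Type*} [Fintype V] [DecidableEq V] (F : SimpleGraph V) {x y : V}
    (p : F.Walk x y) : ∃ P ≤ F, ∀ v, (fdeg P v : ZMod 2)
      = (if v = x then 1 else 0) + (if v = y then 1 else 0) := by
  induction p with
  | nil =>
    refine ⟨⊥, bot_le, fun v => ?_⟩
    rw [fdeg_bot, CharTwo.add_self_eq_zero]
    simp
  | @cons a b c h p ih =>
    obtain ⟨P, hP, hd⟩ := ih
    refine ⟨symmDiff (SimpleGraph.edge a b) P, symmDiff_le_of ?_ hP, fun v => ?_⟩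
    · intro u w huw
      rw [SimpleGraph.edge_adj] at huw
      rcases huw with ⟨⟨rfl, rfl⟩ | ⟨rfl, rfl⟩, _⟩
      · exact h
      · exact h.symm
    · rw [fdeg_symmDiff, hd, fdeg_edge _ _ _ h.ne]
      have := CharTwo.add_self_eq_zero (if v = b then (1 : ZMod 2) else 0)
      linear_combination this

lemma exists_parity {V : Type*} [Fintype V] [DecidableEq V] (G : SimpleGraph V)
    (hG : G.Connected) (f : V → ℕ) (hf01 : ∀ v, f v ≤ 1) (hfsum : Even (∑ v, f v)) :
    ∃ H ≤ G, ∀ v, (fdeg H v : ZMod 2) = f v := by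
  obtain ⟨r⟩ := hG.nonempty
  have key : ∀ s : Finset V, ∃ H ≤ G, ∀ v, (fdeg H v : ZMod 2)
      = ∑ u ∈ s, (f u : ZMod 2) * ((if v = u then 1 else 0) + (if v = r then 1 else 0)) := by
    intro s
    induction s using Finset.induction_on with
    | empty => exact ⟨⊥, bot_le, fun v => by simp [fdeg_bot]⟩
    | insert a s ha ih =>
      obtain ⟨H, hH, hd⟩ := ih
      have h01 := hf01 a
      rcases Nat.le_one_iff_eq_zero_or_eq_one.1 h01 with h0 | h1
      · exact ⟨H, hH, fun v => by rw [hd, Finset.sum_insert ha, h0]; simp⟩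
      · obtain ⟨p⟩ := hG.preconnected a r
        obtain ⟨P, hP, hPd⟩ := exists_walk_graph G p
        refine ⟨symmDiff P H, symmDiff_le_of hP hH, fun v => ?_⟩
        rw [fdeg_symmDiff, hd, hPd, Finset.sum_insert ha, h1]
        simp
  obtain ⟨H, hH, hd⟩ := key Finset.univ
  refine ⟨H, hH, fun v => ?_⟩
  have hs : (∑ u, (f u : ZMod 2)) = 0 := by
    rw [← Nat.cast_sum]
    exact (ZMod.natCast_eq_zero_iff_even).2 hfsum
  rw [hd]
  simp only [mul_add, Finset.sum_add_distrib]
  rw [← Finset.sum_mul, hs]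
  simp

/-- Let `G` be a connected graph and `f : V → {0,1}` an even-sum function.
Then there exists an `f`-parity perfect forest in `G`: a semiperfect spanning forest `F`
with `d_F(x) ≡ f(x) (mod 2)` for every vertex `x`. -/
theorem exists_parity_perfect_forest {V : Type*} [Fintype V]
    (G : SimpleGraph V) (hG : G.Connected)
    (f : V → ℕ) (hf01 : ∀ v, f v ≤ 1) (hfsum : Even (∑ v, f v)) :
    ∃ F : SimpleGraph V, IsSemiperfectForest G F ∧ ∀ x : V, fdeg F x % 2 = f x := by
  classical
  obtain ⟨F, ⟨hFG, hFd⟩, hmin⟩ := (measure (fun H : SimpleGraph V => H.edgeSet.ncard)).wf.has_min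
    {H | H ≤ G ∧ ∀ v, (fdeg H v : ZMod 2) = f v}
    (by obtain ⟨H, h⟩ := exists_parity G hG f hf01 hfsum; exact ⟨H, h⟩)
  have hmin' : ∀ x y : V, ∀ P ≤ F, G.Adj x y → (∀ v, (fdeg P v : ZMod 2)
      = (if v = x then 1 else 0) + (if v = y then 1 else 0)) →
      F.edgeSet.ncard ≤ (symmDiff F (symmDiff P (SimpleGraph.edge x y))).edgeSet.ncard := by
    intro x y P hP hxy hd
    apply not_lt.1
    apply hmin
    refine ⟨symmDiff_le_of hFG (symmDiff_le_of (hP.trans hFG) ?_), fun v => ?_⟩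
    · intro u w huw
      rw [SimpleGraph.edge_adj] at huw
      rcases huw with ⟨⟨rfl, rfl⟩ | ⟨rfl, rfl⟩, _⟩
      · exact hxy
      · exact hxy.symm
    · rw [fdeg_symmDiff, fdeg_symmDiff, hd, fdeg_edge _ _ _ hxy.ne, hFd,
        CharTwo.add_self_eq_zero, add_zero]
  have hnb : ∀ (P : SimpleGraph V) (x : V), (fdeg P x : ZMod 2) = 1 → ∃ z, P.Adj x z := by
    intro P x h
    by_contra! hc
    have : P.neighborSet x = ∅ := by
      ext w
      simp [hc]
    simp [fdeg, this] at h
  refine ⟨F, ⟨hFG, ?_, ?_⟩, ?_⟩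
  · rw [SimpleGraph.isAcyclic_iff_forall_adj_isBridge]
    intro x y hxy
    rw [SimpleGraph.isBridge_iff]
    rintro ⟨p⟩
    obtain ⟨P, hP, hd⟩ := exists_walk_graph _ p
    have hPF : P ≤ F := hP.trans (by
      intro u w h
      simp at h
      exact h.1)
    have hPxy : ¬ P.Adj x y := fun h => by simpa using hP h
    have hle := hmin' x y P hPF (hFG hxy) hd
    have hlt : (symmDiff F (symmDiff P (SimpleGraph.edge x y))).edgeSet ⊂ F.edgeSet := by
      rw [SimpleGraph.edgeSet_ssubset_edgeSet]
      refine lt_of_le_of_ne (symmDiff_le_of le_rfl (symmDiff_le_of hPF ?_)) ?_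
      · intro u w huw
        rw [SimpleGraph.edge_adj] at huw
        rcases huw with ⟨⟨rfl, rfl⟩ | ⟨rfl, rfl⟩, _⟩
        · exact hxy
        · exact hxy.symm
      · intro h
        have : (symmDiff F (symmDiff P (SimpleGraph.edge x y))).Adj x y := by rw [h]; exact hxy
        simp [symmDiff, SimpleGraph.edge_adj, hxy, hPxy, hxy.ne] at this
    have := Set.ncard_lt_ncard hlt (Set.toFinite _)
    omega
  · rintro x y ⟨p⟩ hxy
    by_contra hF
    obtain ⟨P, hP, hd⟩ := exists_walk_graph _ p
    have hle := hmin' x y P hP hxy hd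
    obtain ⟨z, hz⟩ := hnb P x (by rw [hd]; simp [hxy.ne])
    obtain ⟨w, hw⟩ := hnb P y (by rw [hd]; simp [hxy.ne'])
    have hFz := hP hz
    have hFw := hP hw
    have hne : s(x, z) ≠ s(y, w) := by
      intro h
      rw [Sym2.eq_iff] at h
      rcases h with ⟨h, _⟩ | ⟨rfl, rfl⟩
      · exact hxy.ne h
      · exact hF hFz
    have hsub : (symmDiff F (symmDiff P (SimpleGraph.edge x y))).edgeSet
        ⊆ insert s(x, y) (F.edgeSet \ {s(x, z), s(y, w)}) := by
      intro e
      induction e using Sym2.ind with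
      | _ a b =>
        intro h
        by_cases he : s(a, b) = s(x, y)
        · exact Or.inl he
        · right
          have hnE : ¬ (SimpleGraph.edge x y).Adj a b := by
            rw [SimpleGraph.edge_adj]
            rw [Sym2.eq_iff] at he
            tauto
          have h' : F.Adj a b ∧ ¬ P.Adj a b := by
            have h0 : P.Adj a b → F.Adj a b := fun h => hP h
            rw [SimpleGraph.mem_edgeSet] at h
            simp only [symmDiff, SimpleGraph.sup_adj, SimpleGraph.sdiff_adj] at h
            clear * - h h0 hnE
            grind
          refine ⟨h'.1, ?_⟩
          rintro (h1 | h1)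
          · apply h'.2
            rw [← SimpleGraph.mem_edgeSet, h1]
            exact hz
          · apply h'.2
            rw [← SimpleGraph.mem_edgeSet, h1]
            exact hw
    have c1 := Set.ncard_le_ncard hsub (Set.toFinite _)
    have c2 := Set.ncard_insert_le s(x, y) (F.edgeSet \ {s(x, z), s(y, w)})
    have hs2 : ({s(x, z), s(y, w)} : Set (Sym2 V)) ⊆ F.edgeSet := by
      rintro e (rfl | rfl)
      · exact hFz
      · exact hFw
    have c3 := Set.ncard_sdiff_add_ncard_of_subset hs2 (Set.toFinite _)
    rw [Set.ncard_pair hne] at c3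
    omega
  · intro x
    have h := hFd x
    rw [ZMod.natCast_eq_natCast_iff'] at h
    have := hf01 x
    omega
end

section
/- Let B denote the family of all connected graphs in which every block is a complete graph of odd order. If G is a connected graph of odd order n ≥ 3, then G contains a proper 1-perfect forest if and only if G does not belong to B. -/
open SimpleGraph

/-- `s` is (the vertex set of) a block of `G`: the induced subgraph on `s` is connected,
has no cut-vertex, and `s` is maximal with these properties. -/
def IsGraphBlock {V : Type*} (G : SimpleGraph V) (s : Set V) : Prop :=
  (G.induce s).Connected ∧
  (∀ x ∈ s, (G.induce (s \ {x})).Preconnected) ∧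
  ∀ t : Set V, s ⊆ t → (G.induce t).Connected →
    (∀ x ∈ t, (G.induce (t \ {x})).Preconnected) → t = s

/-- `G` belongs to the family `B` of connected graphs in which every block is a
complete graph of odd order. -/
def InFamilyB {V : Type*} (G : SimpleGraph V) : Prop :=
  G.Connected ∧ ∀ s : Set V, IsGraphBlock G s →
    (∀ x ∈ s, ∀ y ∈ s, x ≠ y → G.Adj x y) ∧ Odd s.ncard

set_option linter.all false
namespace PF

variable {V : Type*} [DecidableEq V] {G : SimpleGraph V}

def Cl (G : SimpleGraph V) (X W : Finset V) : Prop :=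
  W ⊆ X ∧ ∀ w ∈ W, ∀ y ∈ X, G.Adj w y → y ∈ W

def Conn (G : SimpleGraph V) (X : Finset V) : Prop :=
  ∀ W, Cl G X W → W = ∅ ∨ W = X

def Ev (G : SimpleGraph V) (X : Finset V) : Prop :=
  ∀ W, Cl G X W → Even W.card

def Q (G : SimpleGraph V) (X : Finset V) : Prop :=
  ∃ T, T ⊆ X ∧ Conn G T ∧ Odd T.card ∧ (∃ v ∈ T, ¬ Ev G (T \ {v})) ∧ Ev G (X \ T)

def B' (G : SimpleGraph V) (X : Finset V) : Prop :=
  ∀ v ∈ X, Ev G (X \ {v}) ∧ ∀ a ∈ X, ∀ b ∈ X, G.Adj v a → G.Adj v b → a ≠ b → ¬ G.Adj a b →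
    ∃ W, Cl G (X \ {v}) W ∧ a ∈ W ∧ b ∉ W

theorem Cl.compl {X W : Finset V} (h : Cl G X W) : Cl G X (X \ W) := by
  refine ⟨Finset.sdiff_subset, ?_⟩
  intro w hw y hy ha
  simp only [Finset.mem_sdiff] at *
  exact ⟨hy, fun h' => hw.2 (h.2 y h' w hw.1 ha.symm)⟩

theorem exists_comp (X : Finset V) (a : V) (ha : a ∈ X) :
    ∃ C, Cl G X C ∧ a ∈ C ∧ (∀ A, Cl G X A → a ∈ A → C ⊆ A) ∧ Conn G C := by
  classical
  let C := X.filter (fun y => ∀ A, Cl G X A → a ∈ A → y ∈ A)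
  have hC : Cl G X C := by
    refine ⟨Finset.filter_subset _ _, ?_⟩
    intro w hw y hy hwy
    simp only [C, Finset.mem_filter] at *
    exact ⟨hy, fun A hA haA => hA.2 w (hw.2 A hA haA) y hy hwy⟩
  have haC : a ∈ C := by simp only [C, Finset.mem_filter]; exact ⟨ha, fun _ _ h => h⟩
  have hmin : ∀ A, Cl G X A → a ∈ A → C ⊆ A := by
    intro A hA haA y hy
    simp only [C, Finset.mem_filter] at hy
    exact hy.2 A hA haA
  refine ⟨C, hC, haC, hmin, ?_⟩
  have key : ∀ W, Cl G C W → Cl G X W := by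
    intro W hW
    refine ⟨hW.1.trans hC.1, fun w hw y hy h => hW.2 w hw y (hC.2 w (hW.1 hw) y hy h) h⟩
  intro W hW
  by_cases h : a ∈ W
  · right; exact Finset.Subset.antisymm hW.1 (hmin W (key W hW) h)
  · left
    have := hmin _ (key _ hW.compl) (Finset.mem_sdiff.2 ⟨haC, h⟩)
    ext z
    have h1 := @this z
    have h2 := @hW.1 z
    simp only [Finset.mem_sdiff] at h1
    simp only [Finset.notMem_empty, iff_false]
    tauto

theorem conn_three {a v b : V} (h1 : G.Adj v a) (h2 : G.Adj v b) : Conn G {a, v, b} := by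
  intro W hW
  have s := hW.1
  by_cases hv : v ∈ W
  · right
    refine Finset.Subset.antisymm s ?_
    intro y hy
    simp only [Finset.mem_insert, Finset.mem_singleton] at hy
    rcases hy with rfl | rfl | rfl
    · exact hW.2 v hv _ (by simp) h1
    · exact hv
    · exact hW.2 v hv _ (by simp) h2
  · left
    rw [Finset.eq_empty_iff_forall_notMem]
    intro y hy
    have := s hy
    simp only [Finset.mem_insert, Finset.mem_singleton] at this
    rcases this with rfl | rfl | rfl
    · exact hv (hW.2 _ hy v (by simp) h1.symm)
    · exact hv hy
    · exact hv (hW.2 _ hy v (by simp) h2.symm)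

theorem Q_of_P3 {X : Finset V} {a v b : V} (ha : a ∈ X) (hv : v ∈ X) (hb : b ∈ X)
    (h1 : G.Adj v a) (h2 : G.Adj v b) (hab : a ≠ b) (hn : ¬ G.Adj a b)
    (hE : Ev G (X \ {a, v, b})) : Q G X := by
  have n1 := h1.ne
  have n2 := h2.ne
  refine ⟨{a, v, b}, ?_, conn_three h1 h2, ?_, ⟨v, by simp, ?_⟩, hE⟩
  · intro y hy
    simp only [Finset.mem_insert, Finset.mem_singleton] at hy
    rcases hy with rfl | rfl | rfl <;> assumption
  · rw [Finset.card_eq_three.2 ⟨a, v, b, n1.symm, hab, n2, rfl⟩]; decide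
  · intro h
    have := h {a} ⟨by simp [n1.symm], by
      intro w hw y hy hwy
      simp only [Finset.mem_singleton, Finset.mem_sdiff, Finset.mem_insert] at *
      subst hw
      rcases hy with ⟨rfl | rfl | rfl, h'⟩
      · rfl
      · exact absurd rfl h'
      · exact absurd hwy hn⟩
    simp at this

theorem ev_card_compl {Y W : Finset V} (hY : Even Y.card) (hW : W ⊆ Y) (h : Even (Y \ W).card) :
    Even W.card := by
  have := Finset.card_sdiff_add_card_eq_card hW
  grind

theorem Ev.card {X : Finset V} (h : Ev G X) : Even X.card :=
  h X ⟨subset_rfl, fun _ _ y hy _ => hy⟩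

/-- To check Ev it suffices to consider closed sets avoiding z. -/
theorem ev_of_avoid {Y : Finset V} (hY : Even Y.card) (z : V)
    (h : ∀ W, Cl G Y W → z ∉ W → Even W.card) : Ev G Y := by
  intro W hW
  by_cases hz : z ∈ W
  · exact ev_card_compl hY hW.1 (h _ hW.compl (by simp [hz]))
  · exact h W hW hz

theorem lemmaR {H : Finset V} (hB : B' G H) {w c u : V} (hw : w ∈ H) (hc : c ∈ H) (hu : u ∈ H)
    (hwc : G.Adj w c) (hwu : G.Adj w u) (hcu : G.Adj c u) {W : Finset V}
    (hW : Cl G (H \ {w, c}) W) (huW : u ∉ W) : Even W.card := by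
  have n1 := hwc.ne
  have n2 := hwu.ne
  have n3 := hcu.ne
  obtain ⟨C, hC, huC, hmin, -⟩ := exists_comp (G := G) (H \ {w}) u (by simp [hu, n2.symm])
  have hcC : c ∈ C := hC.2 u huC c (by simp [hc, n1.symm]) hcu.symm
  have e1 : Even (W ∩ C).card := by
    refine (hB c hc).1 _ ⟨?_, ?_⟩
    · intro z hz
      have := @hW.1 z
      simp only [Finset.mem_inter, Finset.mem_sdiff, Finset.mem_insert, Finset.mem_singleton] at *
      tauto
    · intro z hz y hy hzy
      simp only [Finset.mem_inter, Finset.mem_sdiff, Finset.mem_singleton] at *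
      have hzH := hW.1 hz.1
      simp only [Finset.mem_sdiff, Finset.mem_insert, Finset.mem_singleton, not_or] at hzH
      by_cases hyw : y = w
      · exfalso
        subst hyw
        have hzu : z ≠ u := fun h => huW (h ▸ hz.1)
        by_cases ha : G.Adj z u
        · exact huW (hW.2 z hz.1 u (by simp [hu, n2.symm, n3.symm]) ha)
        · obtain ⟨A, hA, h1, h2⟩ := (hB y hw).2 u hu z hzH.1 hwu hzy.symm hzu.symm
            (fun h => ha h.symm)
          exact h2 (hmin A hA h1 hz.2)
      · exact ⟨hW.2 z hz.1 y (by simp [hy, hyw]) hzy, hC.2 z hz.2 y (by simp [hy, hyw]) hzy⟩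
  have e2 : Even (W \ C).card := by
    refine (hB w hw).1 _ ⟨?_, ?_⟩
    · intro z hz
      have := @hW.1 z
      simp only [Finset.mem_sdiff, Finset.mem_insert, Finset.mem_singleton] at *
      tauto
    · intro z hz y hy hzy
      have hzH := hW.1 (Finset.mem_sdiff.1 hz).1
      simp only [Finset.mem_sdiff, Finset.mem_insert, Finset.mem_singleton, not_or] at *
      have hyC : y ∉ C := fun h => hz.2 (hC.2 y h z (by simp [hzH]) hzy.symm)
      have hyc : y ≠ c := fun h => hyC (h ▸ hcC)
      exact ⟨hW.2 z hz.1 y (by simp [hy, hyc]) hzy, hyC⟩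
  have := Finset.card_inter_add_card_sdiff W C
  grind

theorem lemmaS {H : Finset V} (hH : Conn G H) (hB : B' G H) {w a : V} (hw : w ∈ H) (ha : a ∈ H)
    (haw : a ≠ w) : ∃ c ∈ H, G.Adj w c ∧ c ≠ a ∧ (∀ A, Cl G (H \ {w}) A → a ∈ A → c ∈ A) ∧
      ∀ W, Cl G (H \ {w, c}) W → a ∉ W → Even W.card := by
  obtain ⟨C, hC, haC, hmin, -⟩ := exists_comp (G := G) (H \ {w}) a (by simp [ha, haw])
  have hCH : ∀ z ∈ C, z ∈ H ∧ z ≠ w := by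
    intro z hz; simpa using hC.1 hz
  have evC := (hB w hw).1 C hC
  obtain ⟨a1, ha1C, ha1⟩ : ∃ a1 ∈ C, G.Adj w a1 := by
    by_contra! hcon
    rcases hH C ⟨fun z hz => (hCH z hz).1, fun z hz y hy hzy => by
      by_cases hyw : y = w
      · subst hyw; exact absurd hzy.symm (hcon z hz)
      · exact hC.2 z hz y (by simp [hy, hyw]) hzy⟩ with h | h
    · simp [h] at haC
    · exact (hCH w (h ▸ hw)).2 rfl
  obtain ⟨a2, ha2C, ha2, hne⟩ : ∃ a2 ∈ C, G.Adj w a2 ∧ a2 ≠ a1 := by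
    by_contra! hcon
    have : Even (C \ {a1}).card := by
      refine (hB a1 (hCH a1 ha1C).1).1 _ ⟨?_, ?_⟩
      · intro z hz
        simp only [Finset.mem_sdiff, Finset.mem_singleton] at *
        exact ⟨(hCH z hz.1).1, hz.2⟩
      · intro z hz y hy hzy
        simp only [Finset.mem_sdiff, Finset.mem_singleton] at *
        refine ⟨?_, hy.2⟩
        by_cases hyw : y = w
        · subst hyw; exact absurd (hcon z hz.1 hzy.symm) hz.2
        · exact hC.2 z hz.1 y (by simp [hy, hyw]) hzy
    have h2 := Finset.card_sdiff_add_card_eq_card (s := {a1}) (t := C) (by simpa using ha1C)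
    simp only [Finset.card_singleton] at h2
    grind
  have adj12 : G.Adj a1 a2 := by
    by_contra hn
    obtain ⟨A, hA, h1, h2⟩ := (hB w hw).2 a1 (hCH _ ha1C).1 a2 (hCH _ ha2C).1 ha1 ha2 hne.symm hn
    by_cases haA : a ∈ A
    · exact h2 (hmin A hA haA ha2C)
    · have := hmin _ hA.compl (by simp [haA, ha, haw]) ha1C
      simp [h1] at this
  -- main criterion
  have crit : ∀ c u, c ∈ C → u ∈ C → G.Adj w c → G.Adj w u → G.Adj c u → c ≠ a →
      (∀ W, Cl G (H \ {w, c}) W → u ∈ W → a ∈ W) →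
      ∃ c ∈ H, G.Adj w c ∧ c ≠ a ∧ (∀ A, Cl G (H \ {w}) A → a ∈ A → c ∈ A) ∧
      ∀ W, Cl G (H \ {w, c}) W → a ∉ W → Even W.card := by
    intro c u hc hu hwc hwu hcu hca hh
    exact ⟨c, (hCH c hc).1, hwc, hca, fun A hA h => hmin A hA h hc, fun W hW haW =>
      lemmaR hB hw (hCH c hc).1 (hCH u hu).1 hwc hwu hcu hW (fun h => haW (hh W hW h))⟩
  by_cases e1 : a = a1
  · subst e1
    exact crit a2 a ha2C ha1C ha2 ha1 adj12.symm hne (fun _ _ h => h)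
  by_cases e2 : a = a2
  · subst e2
    exact crit a1 a ha1C ha2C ha1 ha2 adj12 hne.symm (fun _ _ h => h)
  by_cases c1 : ∀ W, Cl G (H \ {w, a2}) W → a1 ∈ W → a ∈ W
  · exact crit a2 a1 ha2C ha1C ha2 ha1 adj12.symm (Ne.symm e2) c1
  by_cases c2 : ∀ W, Cl G (H \ {w, a1}) W → a2 ∈ W → a ∈ W
  · exact crit a1 a2 ha1C ha2C ha1 ha2 adj12 (Ne.symm e1) c2
  exfalso
  push Not at c1 c2
  obtain ⟨W1, hW1, p1, q1⟩ := c1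
  obtain ⟨W2, hW2, p2, q2⟩ := c2
  have hU : Cl G (H \ {w}) (W1 ∪ W2) := by
    refine ⟨?_, ?_⟩
    · intro z hz
      have := @hW1.1 z
      have := @hW2.1 z
      simp only [Finset.mem_union, Finset.mem_sdiff, Finset.mem_insert, Finset.mem_singleton] at *
      tauto
    · intro z hz y hy hzy
      simp only [Finset.mem_union, Finset.mem_sdiff, Finset.mem_singleton] at *
      by_cases y1 : y = a1
      · left; exact y1 ▸ p1
      by_cases y2 : y = a2
      · right; exact y2 ▸ p2
      rcases hz with hz | hz
      · left; exact hW1.2 z hz y (by simp [hy, y2]) hzy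
      · right; exact hW2.2 z hz y (by simp [hy, y1]) hzy
  have := hmin _ hU.compl (by simp [ha, haw, q1, q2]) ha1C
  simp [p1] at this

/-- Non-adjacent vertices in H are separated by a vertex. -/
theorem exists_sep {H : Finset V} (hH : Conn G H) (hB : B' G H) {a b : V} (ha : a ∈ H) (hb : b ∈ H)
    (hab : a ≠ b) (hn : ¬ G.Adj a b) :
    ∃ w ∈ H, a ≠ w ∧ b ≠ w ∧ ∃ A, Cl G (H \ {w}) A ∧ a ∈ A ∧ b ∉ A := by
  classical
  let P : Finset V → Prop := fun S => a ∈ S ∧ ∀ z ∈ S, z = a ∨ G.Adj a z ∨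
    ∃ w ∈ S, z ≠ w ∧ ∃ A, Cl G (H \ {w}) A ∧ a ∈ A ∧ z ∉ A
  have hne : (H.powerset.filter P).Nonempty := ⟨{a}, by simp [P, ha]⟩
  obtain ⟨S, hS, hmax⟩ := Finset.exists_max_image _ Finset.card hne
  simp only [Finset.mem_filter, Finset.mem_powerset] at hS hmax
  obtain ⟨hSH, haS, hSP⟩ := hS
  have hcl : Cl G H S := by
    refine ⟨hSH, ?_⟩
    intro z hz y hy hzy
    by_contra hyS
    have := hmax (insert y S) ⟨by
      intro t ht
      simp only [Finset.mem_insert] at ht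
      rcases ht with rfl | ht
      · exact hy
      · exact hSH ht, by simp [haS], by
      intro t ht
      simp only [Finset.mem_insert] at ht
      rcases ht with rfl | ht
      · by_cases hat : G.Adj a t
        · exact Or.inr (Or.inl hat)
        · right; right
          rcases hSP z hz with rfl | h | ⟨w, hw, hzw, A, hA, haA, hzA⟩
          · exact absurd hzy hat
          · have hta : a ≠ t := fun h => hyS (h ▸ haS)
            obtain ⟨A, hA, h1, h2⟩ := (hB z (hSH hz)).2 a ha t hy h.symm hzy hta hat
            exact ⟨z, by simp [hz], hzy.ne.symm, A, hA, h1, h2⟩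
          · have htw : t ≠ w := fun h => hyS (h ▸ hw)
            exact ⟨w, by simp [hw], htw, A, hA, haA, fun h =>
              hzA (hA.2 t h z (by simp [hSH hz, hzw]) hzy.symm)⟩
      · rcases hSP t ht with h | h | ⟨w, hw, h⟩
        · exact Or.inl h
        · exact Or.inr (Or.inl h)
        · exact Or.inr (Or.inr ⟨w, by simp [hw], h⟩)⟩
    rw [Finset.card_insert_of_notMem hyS] at this
    omega
  rcases hH S hcl with h | h
  · simp [h] at haS
  · rcases hSP b (h ▸ hb) with h' | h' | ⟨w, hw, hbw, A, hA, haA, hbA⟩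
    · exact absurd h'.symm hab
    · exact absurd h' hn
    · refine ⟨w, hSH hw, ?_, hbw, A, hA, haA, hbA⟩
      rintro rfl
      simpa using hA.1 haA

end PF
namespace PF

variable {V : Type*} [DecidableEq V] {G : SimpleGraph V}

theorem Ev.union {X Y Z : Finset V} (hX : Ev G X) (hY : Ev G Y) (h : ∀ z, z ∈ Z ↔ z ∈ X ∨ z ∈ Y)
    (hd : ∀ z ∈ X, z ∉ Y) : Ev G Z := by
  intro W hW
  have e1 : Even (W ∩ X).card := hX _ ⟨Finset.inter_subset_right, by
    intro z hz y hy hzy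
    simp only [Finset.mem_inter] at *
    exact ⟨hW.2 z hz.1 y ((h y).2 (Or.inl hy)) hzy, hy⟩⟩
  have e2 : Even (W \ X).card := by
    refine hY _ ⟨?_, ?_⟩
    · intro z hz
      simp only [Finset.mem_sdiff] at hz
      exact ((h z).1 (hW.1 hz.1)).resolve_left hz.2
    · intro z hz y hy hzy
      simp only [Finset.mem_sdiff] at *
      exact ⟨hW.2 z hz.1 y ((h y).2 (Or.inr hy)) hzy, fun h' => hd y h' hy⟩
  have := Finset.card_inter_add_card_sdiff W X
  grind

theorem ev_pair {p x : V} (h : G.Adj p x) : Ev G {p, x} := by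
  intro W hW
  have hs := hW.1
  have hne := h.ne
  by_cases hp : p ∈ W
  · have hx := hW.2 p hp x (by simp) h
    have : W = {p, x} := Finset.Subset.antisymm hs (by
      intro z hz
      simp only [Finset.mem_insert, Finset.mem_singleton] at hz
      rcases hz with rfl | rfl <;> assumption)
    rw [this, Finset.card_pair hne]; decide
  · have : W = ∅ := by
      rw [Finset.eq_empty_iff_forall_notMem]
      intro y hy
      have := hs hy
      simp only [Finset.mem_insert, Finset.mem_singleton] at this
      rcases this with rfl | rfl
      · exact hp hy
      · exact hp (hW.2 _ hy p (by simp) h.symm)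
    simp [this]

theorem exists_nbr {X H : Finset V} (hX : Conn G X) (hH : H ⊆ X) (h0 : H.Nonempty) (h1 : H ≠ X) :
    ∃ u ∈ X, u ∉ H ∧ ∃ z ∈ H, G.Adj z u := by
  by_contra! hcon
  rcases hX H ⟨hH, fun z hz y hy hzy => by
    by_contra hyH
    exact hcon y hy hyH z hz hzy⟩ with h | h
  · simp [h] at h0
  · exact h1 h

theorem Conn.insert {H : Finset V} (hH : Conn G H) {u z : V} (hz : z ∈ H) (h : G.Adj z u) :
    Conn G (insert u H) := by
  intro W hW
  have hc : Cl G H (W ∩ H) := ⟨Finset.inter_subset_right, by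
    intro w hw y hy hwy
    simp only [Finset.mem_inter] at *
    exact ⟨hW.2 w hw.1 y (by simp [hy]) hwy, hy⟩⟩
  rcases hH _ hc with h' | h'
  · left
    have hzW : z ∉ W := fun hh => by
      have : z ∈ W ∩ H := by simp [hh, hz]
      simp [h'] at this
    rw [Finset.eq_empty_iff_forall_notMem]
    intro y hy
    rcases Finset.mem_insert.1 (hW.1 hy) with rfl | hyH
    · exact hzW (hW.2 y hy z (by simp [hz]) h.symm)
    · have : y ∈ W ∩ H := by simp [hy, hyH]
      simp [h'] at this
  · right
    have hsub : H ⊆ W := Finset.inter_eq_right.1 h'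
    refine Finset.Subset.antisymm hW.1 ?_
    intro y hy
    rcases Finset.mem_insert.1 hy with rfl | hyH
    · exact hW.2 z (hsub hz) y (by simp) h
    · exact hsub hyH

theorem exists_edge_rem {X : Finset V} (hX : Conn G X) (h3 : 3 ≤ X.card)
    (hE : ∀ v ∈ X, Ev G (X \ {v})) :
    ∃ H p x, Conn G H ∧ p ∉ H ∧ x ∉ H ∧ G.Adj p x ∧ X = insert p (insert x H) ∧
      (∃ z ∈ H, G.Adj z p) ∧ (∃ z ∈ H, G.Adj z x) := by
  classical
  let P : Finset V → Prop := fun H => Conn G H ∧ H.Nonempty ∧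
    ∃ p ∈ X, ∃ x ∈ X, p ∉ H ∧ x ∉ H ∧ G.Adj p x
  have hne : (X.powerset.filter P).Nonempty := by
    obtain ⟨r, hr⟩ : X.Nonempty := Finset.card_pos.1 (by omega)
    obtain ⟨u, huX, -, z, hz, hzu⟩ := exists_nbr hX (H := {r}) (by simpa using hr) (by simp)
      (by rintro rfl; simp at h3)
    rw [Finset.mem_singleton] at hz
    subst hz
    obtain ⟨w, hw, hw2⟩ : ∃ w ∈ X, w ∉ ({z, u} : Finset V) := by
      by_contra! hcon
      have := Finset.card_le_card (show X ⊆ {z, u} from hcon)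
      have := Finset.card_le_two (a := z) (b := u)
      omega
    simp only [Finset.mem_insert, Finset.mem_singleton, not_or] at hw2
    refine ⟨{w}, ?_⟩
    simp only [Finset.mem_filter, Finset.mem_powerset, P]
    refine ⟨by simpa using hw, ?_, by simp, z, hr, u, huX, by simpa using Ne.symm hw2.1,
      by simpa using Ne.symm hw2.2, hzu⟩
    intro W hW
    exact Finset.subset_singleton_iff.1 hW.1
  obtain ⟨H, hH, hmax⟩ := Finset.exists_max_image _ Finset.card hne
  simp only [Finset.mem_filter, Finset.mem_powerset] at hH hmax
  obtain ⟨hHX, hHc, hHn, a, ha, b, hb, haH, hbH, hab⟩ := hH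
  have hmx : ∀ u ∈ X, u ∉ H → ∀ z ∈ H, G.Adj z u → ∀ y ∈ X, ∀ t ∈ X, y ∉ H → t ∉ H → y ≠ u →
      t ≠ u → ¬ G.Adj y t := by
    intro u hu huH z hz hzu y hy t ht hyH htH hyu htu hyt
    have := hmax (insert u H) ⟨by
      intro q hq
      rcases Finset.mem_insert.1 hq with rfl | hq
      · exact hu
      · exact hHX hq, hHc.insert hz hzu, by simp, y, hy, t, ht, by simp [hyu, hyH],
        by simp [htu, htH], hyt⟩
    rw [Finset.card_insert_of_notMem huH] at this
    omega
  obtain ⟨q, hqX, hqH, zq, hzq, hq⟩ := exists_nbr hX hHX hHn (by rintro rfl; exact haH ha)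
  have hall : ∀ y ∈ X, y ∉ H → ∃ z ∈ H, G.Adj z y := by
    intro y hy hyH
    by_cases hyq : y = q
    · subst hyq; exact ⟨zq, hzq, hq⟩
    by_contra! hcon
    have := hE q hqX {y} ⟨by simp [hy, hyq], by
      intro w hw t ht hwt
      simp only [Finset.mem_singleton, Finset.mem_sdiff] at *
      subst hw
      exfalso
      by_cases htH : t ∈ H
      · exact hcon t htH hwt.symm
      · exact hmx q hqX hqH zq hzq hq w hy t ht.1 hyH htH hyq ht.2 hwt⟩
    simp at this
  refine ⟨H, a, b, hHc, haH, hbH, hab, ?_, hall a ha haH, hall b hb hbH⟩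
  refine Finset.Subset.antisymm ?_ ?_
  · intro c hc
    by_contra hcn
    simp only [Finset.mem_insert, not_or] at hcn
    obtain ⟨z, hz, hzc⟩ := hall c hc hcn.2.2
    exact hmx c hc hcn.2.2 z hz hzc a ha b hb haH hbH (Ne.symm hcn.1) (Ne.symm hcn.2.1) hab
  · intro c hc
    simp only [Finset.mem_insert] at hc
    rcases hc with rfl | rfl | hc
    · exact ha
    · exact hb
    · exact hHX hc

theorem even_split {A W : Finset V} (h1 : Even (W ∩ A).card) (h2 : Even (W \ A).card) :
    Even W.card := by
  have := Finset.card_inter_add_card_sdiff W A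
  grind

theorem main_step {H : Finset V} {p x : V} (hHc : Conn G H) (hB : B' G H) (hpH : p ∉ H)
    (hxH : x ∉ H) (hpx : G.Adj p x) (hodd : Odd H.card)
    (hQ : ¬ Q G (insert p (insert x H)))
    (hE : ∀ v ∈ insert p (insert x H), Ev G ((insert p (insert x H)) \ {v})) :
    B' G (insert p (insert x H)) := by
  have hpx' := hpx.ne
  have memX : ∀ z, z ∈ insert p (insert x H) ↔ z = p ∨ z = x ∨ z ∈ H := by simp
  have cardX : (insert p (insert x H)).card = H.card + 2 := by
    rw [Finset.card_insert_of_notMem (by simp [hpx', hpH]), Finset.card_insert_of_notMem hxH]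
  generalize hX : insert p (insert x H) = X at *
  have nH : ∀ z ∈ H, z ≠ p ∧ z ≠ x := fun z hz => ⟨fun h => hpH (h ▸ hz), fun h => hxH (h ▸ hz)⟩
  have pX : p ∈ X := by simp [memX]
  have xX : x ∈ X := by simp [memX]
  have HX : ∀ z ∈ H, z ∈ X := by intro z hz; simp [memX, hz]
  have ev3 : ∀ a b c, a ∈ X → b ∈ X → c ∈ X → a ≠ b → a ≠ c → b ≠ c →
      Even (X \ {a, b, c}).card := by
    intro a b c ha hb hc h1 h2 h3
    have e : ({a, b, c} : Finset V).card = 3 := Finset.card_eq_three.2 ⟨a, b, c, h1, h2, h3, rfl⟩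
    have := Finset.card_sdiff_add_card_eq_card (s := {a, b, c}) (t := X) (by
      intro z hz; simp only [Finset.mem_insert, Finset.mem_singleton] at hz
      rcases hz with rfl | rfl | rfl <;> assumption)
    grind
  -- step 1
  have s1 : ∀ a ∈ H, G.Adj p a ↔ G.Adj x a := by
    intro a ha
    constructor
    · intro hpa
      by_contra hxa
      refine hQ (Q_of_P3 (a := a) (v := p) (b := x) (HX a ha) pX xX hpa hpx (nH a ha).2
        (fun h => hxa h.symm) ?_)
      have : X \ {a, p, x} = H \ {a} := by
        ext z; have := nH z
        simp only [Finset.mem_sdiff, memX, Finset.mem_insert, Finset.mem_singleton]; tauto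
      rw [this]; exact (hB a ha).1
    · intro hxa
      by_contra hpa
      refine hQ (Q_of_P3 (a := a) (v := x) (b := p) (HX a ha) xX pX hxa hpx.symm (nH a ha).1
        (fun h => hpa h.symm) ?_)
      have : X \ {a, x, p} = H \ {a} := by
        ext z; have := nH z
        simp only [Finset.mem_sdiff, memX, Finset.mem_insert, Finset.mem_singleton]; tauto
      rw [this]; exact (hB a ha).1
  -- step 2
  have s2 : ∀ a ∈ H, ∀ b ∈ H, G.Adj p a → G.Adj p b → a ≠ b → G.Adj a b := by
    intro a ha b hb hpa hpb hab
    by_contra hn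
    obtain ⟨w, hw, haw, hbw, A, hA, haA, hbA⟩ := exists_sep hHc hB ha hb hab hn
    obtain ⟨a', ha', hwa', haa', hinA, hRa⟩ := lemmaS hHc hB hw ha haw
    obtain ⟨b', hb', hwb', hbb', hinB, hRb⟩ := lemmaS hHc hB hw hb hbw
    have a'A := hinA A hA haA
    have b'A := hinB _ hA.compl (by simp [hb, hbw, hbA])
    simp only [Finset.mem_sdiff, Finset.mem_singleton] at b'A
    have hab' : a' ≠ b' := fun h => b'A.2 (h ▸ a'A)
    have hA' : ∀ z ∈ A, z ∈ H ∧ z ≠ w := by intro z hz; simpa using hA.1 hz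
    refine hQ (Q_of_P3 (HX a' ha') (HX w hw) (HX b' hb') hwa' hwb' hab' ?_ ?_)
    · intro h
      exact b'A.2 (hA.2 a' a'A b' (by simp [b'A]) h)
    refine ev_of_avoid (ev3 _ _ _ (HX a' ha') (HX w hw) (HX b' hb') hwa'.ne.symm hab' hwb'.ne) p ?_
    intro W hW hpW
    have hWY : ∀ z ∈ W, z ∈ X ∧ z ≠ a' ∧ z ≠ w ∧ z ≠ b' := by
      intro z hz; simpa using hW.1 hz
    have hin : ∀ z ∈ X, z ≠ a' → z ≠ w → z ≠ b' → z ∈ X \ {a', w, b'} := by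
      intro z h1 h2 h3 h4; simp [h1, h2, h3, h4]
    have pY := hin p pX (nH a' ha').1.symm (nH w hw).1.symm (nH b' hb').1.symm
    have hxW : x ∉ W := fun h => hpW (hW.2 x h p pY hpx.symm)
    have haW : a ∉ W := fun h => hpW (hW.2 a h p pY hpa.symm)
    have hbW : b ∉ W := fun h => hpW (hW.2 b h p pY hpb.symm)
    have hWH : ∀ z ∈ W, z ∈ H := by
      intro z hz
      rcases (memX z).1 (hWY z hz).1 with rfl | rfl | h
      · exact absurd hz hpW
      · exact absurd hz hxW
      · exact h
    refine even_split (A := A) (hRa _ ⟨?_, ?_⟩ (by simp [haW])) (hRb _ ⟨?_, ?_⟩ (by simp [hbW]))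
    · intro z hz
      simp only [Finset.mem_inter] at hz
      have := hWY z hz.1
      simp [hWH z hz.1, this]
    · intro z hz y hy hzy
      simp only [Finset.mem_inter, Finset.mem_sdiff, Finset.mem_insert, Finset.mem_singleton,
        not_or] at hz hy ⊢
      have yA := hA.2 z hz.2 y (by simp [hy]) hzy
      exact ⟨hW.2 z hz.1 y (hin y (HX y hy.1) hy.2.2 hy.2.1 (fun h => b'A.2 (h ▸ yA))) hzy, yA⟩
    · intro z hz
      simp only [Finset.mem_sdiff] at hz
      have := hWY z hz.1
      simp [hWH z hz.1, this]
    · intro z hz y hy hzy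
      simp only [Finset.mem_sdiff, Finset.mem_insert, Finset.mem_singleton, not_or] at hy hz ⊢
      have yA : y ∉ A := fun h => hz.2 (hA.2 y h z (by simp [hWH z hz.1, hWY z hz.1]) hzy.symm)
      exact ⟨hW.2 z hz.1 y (hin y (HX y hy.1) (fun h => yA (h ▸ a'A)) hy.2.1 hy.2.2) hzy, yA⟩
  -- step 3
  have s3 : ∀ a ∈ H, ∀ c ∈ H, ∀ b ∈ H, G.Adj p a → ¬ G.Adj p c → G.Adj a c → G.Adj p b → b ≠ a →
      ¬ G.Adj b c := by
    intro a ha c hc b hb hpa hpc hac hpb hba hbc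
    have hbc' := hbc.ne
    refine hQ (Q_of_P3 (a := p) (v := a) (b := c) pX (HX a ha) (HX c hc) hpa.symm hac
      (nH c hc).1.symm hpc ?_)
    refine ev_of_avoid (ev3 _ _ _ pX (HX a ha) (HX c hc) hpa.ne (nH c hc).1.symm hac.ne) x ?_
    intro W hW hxW
    have hWY : ∀ z ∈ W, z ∈ X ∧ z ≠ p ∧ z ≠ a ∧ z ≠ c := by
      intro z hz; simpa using hW.1 hz
    have hWH : ∀ z ∈ W, z ∈ H := by
      intro z hz
      rcases (memX z).1 (hWY z hz).1 with rfl | rfl | h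
      · exact absurd rfl (hWY _ hz).2.1
      · exact absurd hz hxW
      · exact h
    have hbW : b ∉ W := fun h => hxW (hW.2 b h x (by
      simp [xX, hpx'.symm, (nH a ha).2.symm, (nH c hc).2.symm]) ((s1 b hb).1 hpb).symm)
    refine lemmaR hB ha hc hb hac (s2 a ha b hb hpa hpb hba.symm) hbc.symm ⟨?_, ?_⟩ hbW
    · intro z hz
      simp [hWH z hz, hWY z hz]
    · intro z hz y hy hzy
      simp only [Finset.mem_sdiff, Finset.mem_insert, Finset.mem_singleton, not_or] at hy
      exact hW.2 z hz y (by simp [HX y hy.1, hy, (nH y hy.1).1]) hzy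
  -- lifting of closed sets
  have lift1 : ∀ v ∈ H, ∀ A, Cl G (H \ {v}) A → (∀ t ∈ H, G.Adj p t → t ≠ v → t ∈ A) →
      Cl G (X \ {v}) (insert p (insert x A)) := by
    intro v hv A hA hN
    refine ⟨?_, ?_⟩
    · intro z hz
      have h1 := nH v hv
      simp only [Finset.mem_insert] at hz
      rcases hz with rfl | rfl | hz
      · simp [pX, h1.1.symm]
      · simp [xX, h1.2.symm]
      · have := hA.1 hz
        simp only [Finset.mem_sdiff, Finset.mem_singleton] at this
        simp [HX z this.1, this.2]
    · intro z hz y hy hzy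
      simp only [Finset.mem_sdiff, Finset.mem_singleton, Finset.mem_insert, memX] at *
      rcases hy with ⟨rfl | rfl | hyH, hyv⟩
      · simp
      · simp
      · right; right
        rcases hz with rfl | rfl | hz
        · exact hN y hyH hzy hyv
        · exact hN y hyH ((s1 y hyH).2 hzy) hyv
        · exact hA.2 z hz y (by simp [hyH, hyv]) hzy
  have lift2 : ∀ v ∈ H, ∀ A, Cl G (H \ {v}) A → (∀ t ∈ H, G.Adj p t → t ∉ A) →
      Cl G (X \ {v}) A := by
    intro v hv A hA hN
    have hAH : ∀ z ∈ A, z ∈ H ∧ z ≠ v := by intro z hz; simpa using hA.1 hz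
    refine ⟨?_, ?_⟩
    · intro z hz
      simp [HX z (hAH z hz).1, (hAH z hz).2]
    · intro z hz y hy hzy
      simp only [Finset.mem_sdiff, Finset.mem_singleton, memX] at hy
      rcases hy with ⟨rfl | rfl | hyH, hyv⟩
      · exact absurd hz (hN z (hAH z hz).1 hzy.symm)
      · exact absurd hz (hN z (hAH z hz).1 ((s1 z (hAH z hz).1).2 hzy.symm))
      · exact hA.2 z hz y (by simp [hyH, hyv]) hzy
  -- separation of p,x from z
  have sepx : ∀ v ∈ H, ∀ z ∈ H, G.Adj v z → G.Adj p v → ¬ G.Adj p z →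
      ∃ W, Cl G (X \ {v}) W ∧ p ∈ W ∧ x ∈ W ∧ z ∉ W := by
    intro v hv z hz hvz hpv hpz
    by_cases hb : ∃ b ∈ H, G.Adj p b ∧ b ≠ v
    · obtain ⟨b, hb, hpb, hbv⟩ := hb
      have hnbz := s3 v hv z hz b hb hpv hpz hvz hpb hbv
      obtain ⟨A, hA, hbA, hzA⟩ := (hB v hv).2 b hb z hz (s2 v hv b hb hpv hpb hbv.symm) hvz
        (fun h => hpz (h ▸ hpb)) hnbz
      refine ⟨_, lift1 v hv A hA ?_, by simp, by simp, ?_⟩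
      · intro t ht hpt htv
        by_cases htb : t = b
        · exact htb ▸ hbA
        · exact hA.2 b hbA t (by simp [ht, htv]) (s2 b hb t ht hpb hpt (Ne.symm htb))
      · simp [hzA, nH z hz]
    · push Not at hb
      refine ⟨_, lift1 v hv ∅ ⟨by simp, by simp⟩ ?_, by simp, by simp, ?_⟩
      · intro t ht hpt htv
        exact absurd (hb t ht hpt) htv
      · simp [nH z hz]
  -- final
  intro v hv
  refine ⟨hE v hv, ?_⟩
  intro y hy z hz hvy hvz hyz hn
  rcases (memX v).1 hv with rfl | rfl | hvH
  · exfalso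
    rcases (memX y).1 hy with rfl | rfl | hyH
    · exact hvy.ne rfl
    · rcases (memX z).1 hz with rfl | rfl | hzH
      · exact hvz.ne rfl
      · exact hyz rfl
      · exact hn ((s1 z hzH).1 hvz)
    · rcases (memX z).1 hz with rfl | rfl | hzH
      · exact hvz.ne rfl
      · exact hn ((s1 y hyH).1 hvy).symm
      · exact hn (s2 y hyH z hzH hvy hvz hyz)
  · exfalso
    rcases (memX y).1 hy with rfl | rfl | hyH
    · rcases (memX z).1 hz with rfl | rfl | hzH
      · exact hyz rfl
      · exact hvz.ne rfl
      · exact hn ((s1 z hzH).2 hvz)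
    · exact hvy.ne rfl
    · rcases (memX z).1 hz with rfl | rfl | hzH
      · exact hn ((s1 y hyH).2 hvy).symm
      · exact hvz.ne rfl
      · exact hn (s2 y hyH z hzH ((s1 y hyH).2 hvy) ((s1 z hzH).2 hvz) hyz)
  · by_cases hyH : y ∈ H
    · by_cases hzH : z ∈ H
      · obtain ⟨A, hA, hyA, hzA⟩ := (hB v hvH).2 y hyH z hzH hvy hvz hyz hn
        by_cases hb : ∃ b ∈ H, G.Adj p b ∧ b ∈ A
        · obtain ⟨b, hb, hpb, hbA⟩ := hb
          refine ⟨_, lift1 v hvH A hA ?_, by simp [hyA], by simp [hzA, nH z hzH]⟩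
          intro t ht hpt htv
          by_cases htb : t = b
          · exact htb ▸ hbA
          · exact hA.2 b hbA t (by simp [ht, htv]) (s2 b hb t ht hpb hpt (Ne.symm htb))
        · push Not at hb
          exact ⟨A, lift2 v hvH A hA hb, hyA, hzA⟩
      · have hpv : G.Adj p v := by
          rcases (memX z).1 hz with rfl | rfl | h
          · exact hvz.symm
          · exact (s1 v hvH).2 hvz.symm
          · exact absurd h hzH
        have hpy : ¬ G.Adj p y := by
          rcases (memX z).1 hz with rfl | rfl | h
          · exact fun h => hn h.symm
          · exact fun h => hn ((s1 y hyH).1 h).symm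
          · exact absurd h hzH
        obtain ⟨W, hW, h1, h2, h3⟩ := sepx v hvH y hyH hvy hpv hpy
        refine ⟨_, hW.compl, ?_, ?_⟩
        · simp [hy, h3, hvy.ne.symm]
        · rcases (memX z).1 hz with rfl | rfl | h
          · simp [h1]
          · simp [h2]
          · exact absurd h hzH
    · by_cases hzH : z ∈ H
      · have hpv : G.Adj p v := by
          rcases (memX y).1 hy with rfl | rfl | h
          · exact hvy.symm
          · exact (s1 v hvH).2 hvy.symm
          · exact absurd h hyH
        have hpz : ¬ G.Adj p z := by
          rcases (memX y).1 hy with rfl | rfl | h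
          · exact hn
          · exact fun h => hn ((s1 z hzH).1 h)
          · exact absurd h hyH
        obtain ⟨W, hW, h1, h2, h3⟩ := sepx v hvH z hzH hvz hpv hpz
        refine ⟨_, hW, ?_, h3⟩
        rcases (memX y).1 hy with rfl | rfl | h
        · exact h1
        · exact h2
        · exact absurd h hyH
      · exfalso
        rcases (memX y).1 hy with rfl | rfl | h
        · rcases (memX z).1 hz with rfl | rfl | h
          · exact hyz rfl
          · exact hn hpx
          · exact hzH h
        · rcases (memX z).1 hz with rfl | rfl | h
          · exact hn hpx.symm
          · exact hyz rfl
          · exact hzH h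
        · exact hyH h

theorem B'_of_not_Q (n : ℕ) : ∀ X : Finset V, X.card = n → Conn G X → Odd X.card → ¬ Q G X →
    B' G X := by
  induction n using Nat.strong_induction_on with
  | _ n ih =>
  intro X hn hX hodd hQ
  have hE : ∀ v ∈ X, Ev G (X \ {v}) := by
    intro v hv
    by_contra h
    refine hQ ⟨X, subset_rfl, hX, hodd, ⟨v, hv, h⟩, ?_⟩
    intro W hW
    have : W = ∅ := by simpa using hW.1
    simp [this]
  by_cases h3 : 3 ≤ X.card
  · obtain ⟨H, p, x, hHc, hpH, hxH, hpx, rfl, -, -⟩ := exists_edge_rem hX h3 hE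
    have cardX : (insert p (insert x H)).card = H.card + 2 := by
      rw [Finset.card_insert_of_notMem (by simp [hpx.ne, hpH]), Finset.card_insert_of_notMem hxH]
    have hHodd : Odd H.card := by grind
    have hQH : ¬ Q G H := by
      rintro ⟨T, hT, h1, h2, h3, h4⟩
      refine hQ ⟨T, fun z hz => by simp [hT hz], h1, h2, h3, ?_⟩
      refine Ev.union h4 (ev_pair hpx) ?_ ?_
      · intro z
        have := @hT z
        simp only [Finset.mem_sdiff, Finset.mem_insert, Finset.mem_singleton]
        constructor
        · tauto
        · rintro (h | rfl | rfl) <;> tauto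
      · intro z hz h
        simp only [Finset.mem_sdiff, Finset.mem_insert, Finset.mem_singleton] at *
        rcases h with rfl | rfl <;> tauto
    exact main_step hHc (ih H.card (by omega) H rfl hHc hHodd hQH) hpH hxH hpx hHodd hQ hE
  · have : X.card = 1 := by grind
    obtain ⟨r, rfl⟩ := Finset.card_eq_one.1 this
    intro v hv
    refine ⟨hE v hv, ?_⟩
    intro a ha b hb h1 h2 hab
    simp only [Finset.mem_singleton] at *
    exact absurd (ha.trans hb.symm) hab

end PF
namespace PF

variable {V : Type*} [Fintype V] [DecidableEq V] {G : SimpleGraph V}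

open Classical in
noncomputable def d (J : SimpleGraph V) (x : V) : ZMod 2 := ∑ y, if J.Adj x y then 1 else 0

theorem d_symmDiff (J E : SimpleGraph V) (x : V) : d (symmDiff J E) x = d J x + d E x := by
  classical
  unfold d
  rw [← Finset.sum_add_distrib]
  refine Finset.sum_congr rfl fun y _ => ?_
  simp only [symmDiff_def, SimpleGraph.sup_adj, SimpleGraph.sdiff_adj]
  by_cases h1 : J.Adj x y <;> by_cases h2 : E.Adj x y <;> simp [h1, h2]
  decide

theorem d_bot (x : V) : d (⊥ : SimpleGraph V) x = 0 := by
  simp [d]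

theorem d_edge {u v : V} (h : u ≠ v) (x : V) :
    d (SimpleGraph.edge u v) x = (if x = u then 1 else 0) + (if x = v then 1 else 0) := by
  classical
  unfold d
  simp only [SimpleGraph.edge_adj]
  by_cases h1 : x = u
  · subst h1
    rw [Finset.sum_eq_single v]
    · simp [h]
    · intro b _ hb
      rw [if_neg]; tauto
    · simp
  · by_cases h2 : x = v
    · subst h2
      rw [Finset.sum_eq_single u]
      · simp [h1]
      · intro b _ hb
        rw [if_neg]; tauto
      · simp
    · simp [h1, h2]

theorem toggle {K : SimpleGraph V} {u w : V} (p : K.Walk u w) :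
    ∃ E ≤ K, ∀ x, d E x = (if x = u then 1 else 0) + (if x = w then 1 else 0) := by
  induction p with
  | nil =>
    refine ⟨⊥, bot_le, fun x => ?_⟩
    rw [d_bot]
    split_ifs <;> decide
  | @cons u v w h p ih =>
    obtain ⟨E, hE, hd⟩ := ih
    refine ⟨symmDiff E (SimpleGraph.edge u v), ?_, ?_⟩
    · refine le_trans symmDiff_le_sup (sup_le hE ?_)
      exact (SimpleGraph.edge_le_iff _).2 (Or.inr h)
    · intro x
      rw [d_symmDiff, hd, d_edge h.ne]
      split_ifs <;> decide

theorem handshake (J : SimpleGraph V) [DecidableRel J.Adj] (W : Finset V) :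
    ∑ x ∈ W, ∑ y ∈ W, (if J.Adj x y then (1 : ZMod 2) else 0) = 0 := by
  rw [← Finset.sum_product']
  refine Finset.sum_involution (fun a _ => (a.2, a.1)) ?_ ?_ ?_ ?_
  · intro a _
    simp only [J.adj_comm a.2 a.1]
    split_ifs <;> decide
  · rintro ⟨a, b⟩ _ h
    simp only [ne_eq, ite_eq_right_iff, one_ne_zero, imp_false, not_not, Prod.mk.injEq] at *
    intro h'
    exact h.ne h'.2
  · intro a ha
    simp only [Finset.mem_product] at *
    exact ⟨ha.2, ha.1⟩
  · intro a _; rfl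

theorem sum_d_closed (J : SimpleGraph V) (W : Finset V) (h : ∀ x ∈ W, ∀ y, J.Adj x y → y ∈ W) :
    ∑ x ∈ W, d J x = 0 := by
  classical
  rw [← handshake J W]
  refine Finset.sum_congr rfl fun x hx => ?_
  unfold d
  symm
  refine Finset.sum_subset (Finset.subset_univ _) ?_
  intro y _ hy
  rw [if_neg]
  exact fun h' => hy (h x hx y h')

theorem z2 (a : ZMod 2) (h : a ≠ 0) : a = 1 := by
  revert h; revert a; decide

theorem exists_join (K : SimpleGraph V) (t : V → ZMod 2)
    (h : ∀ U : Finset V, (∀ x ∈ U, ∀ y, K.Adj x y → y ∈ U) → ∑ x ∈ U, t x = 0) :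
    ∃ J ≤ K, ∀ x, d J x = t x := by
  classical
  obtain ⟨J, hJ, hmin⟩ := Set.exists_min_image {J : SimpleGraph V | J ≤ K}
    (fun J => (Finset.univ.filter (fun x => d J x ≠ t x)).card) (Set.toFinite _) ⟨⊥, show ⊥ ≤ K from bot_le⟩
  refine ⟨J, hJ, ?_⟩
  by_contra! hcon
  obtain ⟨u, hu⟩ := hcon
  let U : Finset V := Finset.univ.filter (fun y => K.Reachable u y)
  have hU : ∀ x ∈ U, ∀ y, K.Adj x y → y ∈ U := by
    intro x hx y hxy
    simp only [U, Finset.mem_filter, Finset.mem_univ, true_and] at *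
    exact hx.trans hxy.reachable
  have s1 := h U hU
  have s2 := sum_d_closed J U (fun x hx y hxy => hU x hx y (hJ hxy))
  have s3 : ∑ x ∈ U, (d J x - t x) = 0 := by rw [Finset.sum_sub_distrib, s1, s2, sub_zero]
  obtain ⟨w, hw, hwu, hwt⟩ : ∃ w ∈ U, w ≠ u ∧ d J w - t w ≠ 0 := by
    by_contra! hc
    rw [Finset.sum_eq_single u hc (fun h => absurd (by simp [U]) h)] at s3
    exact hu (sub_eq_zero.1 s3)
  simp only [U, Finset.mem_filter, Finset.mem_univ, true_and] at hw
  obtain ⟨p⟩ := hw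
  obtain ⟨E, hE, hd⟩ := toggle p
  have := hmin (symmDiff J E) (le_trans symmDiff_le_sup (sup_le hJ hE))
  refine absurd this (not_le.2 (Finset.card_lt_card ?_))
  rw [Finset.ssubset_iff_of_subset]
  · refine ⟨u, by simp [hu], ?_⟩
    simp only [Finset.mem_filter, Finset.mem_univ, true_and, not_not, d_symmDiff, hd]
    have h1 := z2 _ (sub_ne_zero.2 hu)
    rw [if_pos trivial, if_neg hwu.symm, sub_eq_iff_eq_add.1 h1]
    generalize t u = a
    revert a; decide
  · intro x hx
    simp only [Finset.mem_filter, Finset.mem_univ, true_and, d_symmDiff, hd] at *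
    by_cases hxu : x = u
    · subst hxu; exact hu
    by_cases hxw : x = w
    · subst hxw; exact sub_ne_zero.1 hwt
    simpa [hxu, hxw] using hx

theorem min_join (K : SimpleGraph V) (t : V → ZMod 2) (h : ∃ J ≤ K, ∀ x, d J x = t x) :
    ∃ J ≤ K, (∀ x, d J x = t x) ∧ J.IsAcyclic ∧
      ∀ x y, J.Reachable x y → K.Adj x y → J.Adj x y := by
  classical
  let m : SimpleGraph V → ℕ := fun J =>
    (Finset.univ.filter (fun p : V × V => J.Adj p.1 p.2)).card
  obtain ⟨J, ⟨hJ, hJt⟩, hmin⟩ := Set.exists_min_image {J : SimpleGraph V | J ≤ K ∧ ∀ x, d J x = t x}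
    m (Set.toFinite _) h
  refine ⟨J, hJ, hJt, ?_, ?_⟩
  · rw [SimpleGraph.isAcyclic_iff_forall_adj_isBridge]
    intro u v huv
    rw [SimpleGraph.isBridge_iff]
    rintro ⟨p⟩
    obtain ⟨E, hE, hd⟩ := toggle p
    have hEJ : E ≤ J := hE.trans (by intro a b hab; simp at hab; exact hab.1)
    have hEuv : ¬ E.Adj u v := fun h => by
      have := hE h
      simp at this
    have := hmin (symmDiff J (symmDiff E (SimpleGraph.edge u v))) ⟨by
      refine le_trans symmDiff_le_sup (sup_le hJ (le_trans symmDiff_le_sup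
        (sup_le (hEJ.trans hJ) ?_)))
      exact (SimpleGraph.edge_le_iff _).2 (Or.inr (hJ huv)), by
      intro x
      rw [d_symmDiff, d_symmDiff, hd, d_edge huv.ne, hJt]
      generalize t x = a
      split_ifs <;> revert a <;> decide⟩
    refine absurd this (not_le.2 (Finset.card_lt_card ?_))
    rw [Finset.ssubset_iff_of_subset]
    · refine ⟨(u, v), by simp [huv], ?_⟩
      simp [symmDiff_def, SimpleGraph.edge_adj, huv, hEuv, huv.ne]
    · rintro ⟨a, b⟩ hab
      have h1 := @hEJ a b
      simp only [Finset.mem_filter, Finset.mem_univ, true_and, symmDiff_def, SimpleGraph.sup_adj,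
        SimpleGraph.sdiff_adj, SimpleGraph.edge_adj] at *
      have h2 : (a = u ∧ b = v ∨ a = v ∧ b = u) → J.Adj a b := by
        rintro (⟨rfl, rfl⟩ | ⟨rfl, rfl⟩)
        · exact huv
        · exact huv.symm
      tauto
  · rintro x y ⟨p⟩ hxy
    by_contra hn
    obtain ⟨E, hE, hd⟩ := toggle p
    have hxy' := hxy.ne
    obtain ⟨z, hz⟩ : ∃ z, E.Adj x z := by
      by_contra! hc
      have := hd x
      simp [d, hc, hxy'] at this
    have hzy : z ≠ y := fun h => hn (hE (h ▸ hz))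
    obtain ⟨s, hs, hsx⟩ : ∃ s, E.Adj z s ∧ s ≠ x := by
      by_contra! hc
      have h1 := hd z
      unfold d at h1
      rw [Finset.sum_eq_single x, if_pos hz.symm, if_neg hz.ne.symm, if_neg hzy] at h1
      · simp at h1
      · intro b _ hb
        rw [if_neg]
        exact fun h => hb (hc b h)
      · simp
    have := hmin (symmDiff (symmDiff J E) (SimpleGraph.edge x y)) ⟨by
      refine le_trans symmDiff_le_sup (sup_le (le_trans symmDiff_le_sup (sup_le hJ (hE.trans hJ))) ?_)
      exact (SimpleGraph.edge_le_iff _).2 (Or.inr hxy), by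
      intro q
      rw [d_symmDiff, d_symmDiff, hd, d_edge hxy', hJt]
      generalize t q = a
      split_ifs <;> revert a <;> decide⟩
    refine absurd this (not_le.2 ?_)
    let S : Finset (V × V) := {(x, z), (z, x), (z, s)}
    have hS : S.card = 3 := by
      refine Finset.card_eq_three.2 ⟨_, _, _, ?_, ?_, ?_, rfl⟩
      · simp [hz.ne]
      · simp [hz.ne]
      · simp [hsx.symm]
    have hSJ : S ⊆ Finset.univ.filter (fun p : V × V => J.Adj p.1 p.2) := by
      intro q hq
      simp only [S, Finset.mem_insert, Finset.mem_singleton] at hq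
      rcases hq with rfl | rfl | rfl
      · simpa using hE hz
      · simpa using hE hz.symm
      · simpa using hE hs
    have hsub : Finset.univ.filter (fun p : V × V =>
        (symmDiff (symmDiff J E) (SimpleGraph.edge x y)).Adj p.1 p.2) ⊆
        (Finset.univ.filter (fun p : V × V => J.Adj p.1 p.2) \ S) ∪ {(x, y), (y, x)} := by
      rintro ⟨a, b⟩ hab
      have hEJ := @hE a b
      have hSE : (a, b) ∈ S → E.Adj a b := by
        intro hq
        simp only [S, Finset.mem_insert, Finset.mem_singleton, Prod.mk.injEq] at hq
        rcases hq with ⟨rfl, rfl⟩ | ⟨rfl, rfl⟩ | ⟨rfl, rfl⟩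
        · exact hz
        · exact hz.symm
        · exact hs
      simp only [Finset.mem_filter, Finset.mem_univ, true_and, symmDiff_def, SimpleGraph.sup_adj,
        SimpleGraph.sdiff_adj, SimpleGraph.edge_adj, Finset.mem_union, Finset.mem_sdiff,
        Finset.mem_insert, Finset.mem_singleton, Prod.mk.injEq] at *
      tauto
    have c1 := Finset.card_le_card hsub
    have c2 := Finset.card_union_le
      (Finset.univ.filter (fun p : V × V => J.Adj p.1 p.2) \ S) {(x, y), (y, x)}
    have c3 := Finset.card_sdiff_add_card_eq_card hSJ
    have c4 := Finset.card_le_two (a := (x, y)) (b := (y, x))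
    simp only [m]
    omega

theorem fdeg_cast (F : SimpleGraph V) (v : V) : (fdeg F v : ZMod 2) = d F v := by
  classical
  unfold fdeg d
  rw [Finset.sum_boole, Set.ncard_eq_toFinset_card']
  congr 2
  ext y
  simp

theorem fdeg_even (F : SimpleGraph V) (v : V) : Even (fdeg F v) ↔ d F v = 0 := by
  rw [← fdeg_cast, ZMod.natCast_eq_zero_iff_even]

theorem fdeg_pos (F : SimpleGraph V) (v : V) : 0 < fdeg F v ↔ ∃ w, F.Adj v w := by
  unfold fdeg
  rw [Set.ncard_pos]
  rfl

theorem card_z2 {W : Finset V} (h : Even W.card) : ∑ x ∈ W, (1 : ZMod 2) = 0 := by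
  simpa using (ZMod.natCast_eq_zero_iff_even).2 h

theorem forest_of_Q (hQ : Q G Finset.univ) : ∃ F : SimpleGraph V, IsSemiperfectForest G F ∧
        (∃! v : V, Even (fdeg F v)) ∧ ∀ v : V, 0 < fdeg F v := by
  classical
  obtain ⟨T, -, hT, hTodd, ⟨v, hvT, hv⟩, hE⟩ := hQ
  let K : SimpleGraph V :=
    { Adj := fun x y => G.Adj x y ∧ (x ∈ T ↔ y ∈ T)
      symm := ⟨fun x y h => ⟨h.1.symm, h.2.symm⟩⟩
      loopless := ⟨fun x h => h.1.ne rfl⟩ }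
  have hKG : K ≤ G := fun x y h => h.1
  obtain ⟨J, hJ, hJt, hac, hsemi⟩ := min_join K (fun x => if x = v then 0 else 1) (by
    apply exists_join
    intro U hU
    have e : ∀ W : Finset V, Even (W \ {v}).card →
        ∑ x ∈ W, (if x = v then (0 : ZMod 2) else 1) = 0 := by
      intro W hW
      refine Eq.trans ?_ (card_z2 hW)
      rw [← Finset.sum_subset (Finset.sdiff_subset (s := W) (t := {v}))]
      · refine Finset.sum_congr rfl fun x hx => ?_
        rw [if_neg]
        simp only [Finset.mem_sdiff, Finset.mem_singleton] at hx
        exact hx.2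
      · intro x hx hx2
        simp only [Finset.mem_sdiff, Finset.mem_singleton] at hx2
        rw [if_pos]
        tauto
    rw [← Finset.sum_inter_add_sum_sdiff U T]
    rw [e, e, add_zero]
    · have : (U \ T) \ {v} = U \ T := by
        ext x
        simp only [Finset.mem_sdiff, Finset.mem_singleton]
        constructor
        · tauto
        · rintro ⟨h1, h2⟩
          exact ⟨⟨h1, h2⟩, fun h => h2 (h ▸ hvT)⟩
      rw [this]
      refine hE _ ⟨?_, ?_⟩
      · intro x hx; simp only [Finset.mem_sdiff, Finset.mem_univ, true_and] at *; exact hx.2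
      · intro x hx y hy hxy
        simp only [Finset.mem_sdiff, Finset.mem_univ, true_and] at *
        exact ⟨hU x hx.1 y ⟨hxy, by tauto⟩, hy⟩
    · have hc : Cl G T (U ∩ T) := ⟨Finset.inter_subset_right, by
        intro x hx y hy hxy
        simp only [Finset.mem_inter] at *
        exact ⟨hU x hx.1 y ⟨hxy, by tauto⟩, hy⟩⟩
      rcases hT _ hc with h | h
      · simp [h]
      · rw [h]
        have := Finset.card_sdiff_add_card_eq_card (s := {v}) (t := T) (by simpa using hvT)
        simp only [Finset.card_singleton] at this
        grind)
  have hne : ∀ x, x ≠ v → d J x = 1 := by intro x hx; rw [hJt, if_neg hx]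
  have hJv : d J v = 0 := by rw [hJt, if_pos rfl]
  have hT' : ∀ x y, J.Reachable x y → (x ∈ T ↔ y ∈ T) := by
    rintro x y ⟨p⟩
    induction p with
    | nil => rfl
    | cons h p ih => exact (hJ h).2.trans ih
  refine ⟨J, ⟨hJ.trans hKG, hac, ?_⟩, ⟨v, (fdeg_even J v).2 hJv, ?_⟩, ?_⟩
  · intro x y hr hxy
    exact hsemi x y hr ⟨hxy, hT' x y hr⟩
  · intro x hx
    by_contra hxv
    have := (fdeg_even J x).1 hx
    rw [hne x hxv] at this
    simp at this
  · intro x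
    rw [fdeg_pos]
    by_contra! hc
    by_cases hxv : x = v
    · subst hxv
      apply hv
      intro W hW
      have hWT : ∀ z ∈ W, z ∈ T ∧ z ≠ x := by intro z hz; simpa using hW.1 hz
      have := sum_d_closed J W (by
        intro z hz y hzy
        have hyx : y ≠ x := fun h => hc z (h ▸ hzy.symm)
        exact hW.2 z hz y (by simp [hyx, ← (hJ hzy).2, (hWT z hz).1]) (hJ hzy).1)
      rw [Finset.sum_congr rfl (fun z hz => hne z (hWT z hz).2)] at this
      simpa [ZMod.natCast_eq_zero_iff_even] using this
    · have := hne x hxv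
      simp [d, hc] at this

theorem no_forest_of_B' (hB : B' G Finset.univ) (F : SimpleGraph V) (hF : IsSemiperfectForest G F)
    (v : V) (hv : ∀ x, x ≠ v → d F x = 1) (hpos : ∃ w, F.Adj v w) : False := by
  classical
  obtain ⟨a, ha⟩ := hpos
  obtain ⟨hle, hac, hsemi⟩ := hF
  obtain ⟨C, hC, haC, hmin, -⟩ := exists_comp (G := G) (Finset.univ \ {v}) a (by simp [ha.ne.symm])
  have hCv : ∀ z ∈ C, z ≠ v := by intro z hz; simpa using hC.1 hz
  have huniq : ∀ b ∈ C, F.Adj v b → b = a := by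
    intro b hb hvb
    by_contra hba
    have hab : F.Adj a b := by
      apply hsemi a b (ha.symm.reachable.trans hvb.reachable)
      by_contra hn
      obtain ⟨W, hW, h1, h2⟩ := (hB v (by simp)).2 a (by simp) b (by simp) (hle ha) (hle hvb)
        (Ne.symm hba) hn
      exact h2 (hmin W hW h1 hb)
    refine hac (SimpleGraph.Walk.cons ha (SimpleGraph.Walk.cons hab
      (SimpleGraph.Walk.cons hvb.symm SimpleGraph.Walk.nil))) ?_
    simp [SimpleGraph.Walk.isCycle_def, SimpleGraph.Walk.isTrail_def, ha.ne, ha.ne.symm, hab.ne,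
      hab.ne.symm, hvb.ne, hvb.ne.symm]
  have s0 : ∑ x ∈ C, d F x = 0 := by
    rw [Finset.sum_congr rfl (fun z hz => hv z (hCv z hz))]
    exact card_z2 ((hB v (by simp)).1 C hC)
  have s1 : ∀ x ∈ C, d F x = (∑ y ∈ C, if F.Adj x y then (1 : ZMod 2) else 0) +
      (if x = a then 1 else 0) := by
    intro x hx
    have hvC : v ∉ C := fun h => hCv v h rfl
    have e : (if x = a then (1 : ZMod 2) else 0) = if F.Adj x v then 1 else 0 := by
      by_cases h : x = a
      · subst h; simp [ha.symm]
      · rw [if_neg h, if_neg (fun h' => h (huniq x hx h'.symm))]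
    rw [e, add_comm, ← Finset.sum_insert (f := fun y => if F.Adj x y then (1 : ZMod 2) else 0) hvC]
    unfold d
    symm
    refine Finset.sum_subset (Finset.subset_univ _) ?_
    intro y _ hy
    rw [if_neg]
    intro hxy
    simp only [Finset.mem_insert, not_or] at hy
    exact hy.2 (hC.2 x hx y (by simp [hy.1]) (hle hxy))
  rw [Finset.sum_congr rfl s1, Finset.sum_add_distrib, handshake, zero_add,
    Finset.sum_ite_eq' C a] at s0
  simp [haC] at s0

end PF
namespace PF

variable {V : Type*} [Fintype V] [DecidableEq V] {G : SimpleGraph V}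

theorem preconn_iff (s : Finset V) : (G.induce (s : Set V)).Preconnected ↔ Conn G s := by
  classical
  constructor
  · intro h W hW
    by_cases h0 : W = ∅
    · exact Or.inl h0
    right
    obtain ⟨w, hw⟩ := Finset.nonempty_iff_ne_empty.2 h0
    refine Finset.Subset.antisymm hW.1 ?_
    intro y hy
    obtain ⟨p⟩ := h ⟨w, hW.1 hw⟩ ⟨y, hy⟩
    have key : ∀ (a b : (s : Set V)), (G.induce (s : Set V)).Walk a b → a.1 ∈ W → b.1 ∈ W := by
      intro a b p
      induction p with
      | nil => exact id
      | @cons a c b h p ih =>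
        intro ha
        exact ih (hW.2 a.1 ha c.1 c.2 h)
    exact key _ _ p hw
  · rintro h ⟨a, ha⟩ ⟨b, hb⟩
    let W := s.filter (fun y => ∃ hy : y ∈ (s : Set V), (G.induce (s : Set V)).Reachable ⟨a, ha⟩ ⟨y, hy⟩)
    have hW : Cl G s W := by
      refine ⟨Finset.filter_subset _ _, ?_⟩
      intro w hw y hy hwy
      simp only [W, Finset.mem_filter] at *
      obtain ⟨hw1, hw2, hr⟩ := hw
      refine ⟨hy, hy, hr.trans ?_⟩
      apply SimpleGraph.Adj.reachable
      exact hwy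
    have haW : a ∈ W := by
      simp only [W, Finset.mem_filter]
      exact ⟨ha, ha, SimpleGraph.Reachable.refl _⟩
    rcases h W hW with h0 | h0
    · simp [h0] at haW
    · have : b ∈ W := by rw [h0]; exact hb
      simp only [W, Finset.mem_filter] at this
      exact this.2.2

def Two (G : SimpleGraph V) (s : Finset V) : Prop :=
  Conn G s ∧ ∀ x ∈ s, Conn G (s \ {x})

def FB (G : SimpleGraph V) (s : Finset V) : Prop :=
  s.Nonempty ∧ Two G s ∧ ∀ t, s ⊆ t → Two G t → t = s

theorem two_iff (s : Finset V) (hs : s.Nonempty) : Two G s ↔ ((G.induce (s : Set V)).Connected ∧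
    ∀ x ∈ (s : Set V), (G.induce ((s : Set V) \ {x})).Preconnected) := by
  have e : ∀ x, ((s : Set V) \ {x}) = ((s \ {x} : Finset V) : Set V) := by intro x; simp
  have : Nonempty (s : Set V) := ⟨⟨hs.choose, hs.choose_spec⟩⟩
  have key : ∀ x, (G.induce ((s : Set V) \ {x})).Preconnected ↔ Conn G (s \ {x}) := by
    intro x
    rw [e x]
    exact preconn_iff _
  rw [SimpleGraph.connected_iff, preconn_iff]
  exact ⟨fun h => ⟨⟨h.1, this⟩, fun x hx => (key x).2 (h.2 x hx)⟩,
    fun h => ⟨h.1.1, fun x hx => (key x).1 (h.2 x hx)⟩⟩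

theorem fb_iff (s : Finset V) : IsGraphBlock G (s : Set V) ↔ FB G s := by
  classical
  constructor
  · rintro ⟨h1, h2, h3⟩
    have hs : s.Nonempty := by
      obtain ⟨a, ha⟩ := h1.nonempty
      exact ⟨a, ha⟩
    refine ⟨hs, (two_iff s hs).2 ⟨h1, h2⟩, ?_⟩
    intro t hst ht
    have := (two_iff t (hs.mono hst)).1 ht
    exact_mod_cast h3 (t : Set V) (by exact_mod_cast hst) this.1 this.2
  · rintro ⟨hs, h1, h2⟩
    have := (two_iff s hs).1 h1
    refine ⟨this.1, this.2, ?_⟩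
    intro t hst ht1 ht2
    have e : t = (t.toFinset : Set V) := by simp
    have hst' : s ⊆ t.toFinset := by
      intro x hx; simpa using hst hx
    rw [e] at ht1 ht2 ⊢
    rw [h2 _ hst' ((two_iff _ (hs.mono hst')).2 ⟨ht1, ht2⟩)]

theorem conn_union {A D : Finset V} (hA : Conn G A) (hD : Conn G D) {a z : V} (ha : a ∈ A)
    (hz : z ∈ D) (haz : G.Adj a z) : Conn G (A ∪ D) := by
  have key : ∀ W, Cl G (A ∪ D) W → a ∉ W → W = ∅ := by
    intro W hW haW
    have hzW : z ∉ W := fun h => haW (hW.2 z h a (by simp [ha]) haz.symm)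
    have c1 : Cl G A (W ∩ A) := ⟨Finset.inter_subset_right, by
      intro w hw y hy hwy
      simp only [Finset.mem_inter] at *
      exact ⟨hW.2 w hw.1 y (by simp [hy]) hwy, hy⟩⟩
    have c2 : Cl G D (W ∩ D) := ⟨Finset.inter_subset_right, by
      intro w hw y hy hwy
      simp only [Finset.mem_inter] at *
      exact ⟨hW.2 w hw.1 y (by simp [hy]) hwy, hy⟩⟩
    have e1 : W ∩ A = ∅ := (hA _ c1).resolve_right (fun h => haW (Finset.inter_eq_right.1 h ha))
    have e2 : W ∩ D = ∅ := (hD _ c2).resolve_right (fun h => hzW (Finset.inter_eq_right.1 h hz))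
    rw [Finset.eq_empty_iff_forall_notMem] at *
    intro y hy
    have := hW.1 hy
    have h1 := e1 y
    have h2 := e2 y
    simp only [Finset.mem_inter, Finset.mem_union] at *
    tauto
  intro W hW
  by_cases h : a ∈ W
  · right
    have := key _ hW.compl (by simp [h])
    exact Finset.Subset.antisymm hW.1 (Finset.sdiff_eq_empty_iff_subset.1 this)
  · exact Or.inl (key W hW h)

theorem ear {s : Finset V} (hs : FB G s) {v u : V} (hv : v ∈ s) (hu : u ∈ s) (huv : u ≠ v)
    {C : Finset V} (hCs : ∀ z ∈ C, z ∉ s) (hC : Conn G C) (h1 : ∃ z ∈ C, G.Adj z v)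
    (h2 : ∃ z ∈ C, G.Adj z u) : False := by
  classical
  let P : Finset V → Prop := fun D => (∀ z ∈ D, z ∉ s) ∧ Conn G D ∧ (∃ z ∈ D, G.Adj z v) ∧
    (∃ z ∈ D, G.Adj z u)
  have hne : (Finset.univ.filter P).Nonempty := ⟨C, by simp only [Finset.mem_filter, Finset.mem_univ, true_and]; exact ⟨hCs, hC, h1, h2⟩⟩
  obtain ⟨D, hD, hmin⟩ := Finset.exists_min_image _ Finset.card hne
  simp only [Finset.mem_filter, Finset.mem_univ, true_and] at hD hmin
  obtain ⟨hDs, hDc, ⟨z1, hz1, hz1v⟩, ⟨z2, hz2, hz2u⟩⟩ := hD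
  obtain ⟨-, ⟨hsc, hs2⟩, hsmax⟩ := hs
  have := hsmax (s ∪ D) Finset.subset_union_left ⟨conn_union hsc hDc hv hz1 hz1v.symm, ?_⟩
  · exact hDs z1 hz1 (by rw [← this]; simp [hz1])
  intro x hx
  by_cases hxs : x ∈ s
  · have e : (s ∪ D) \ {x} = (s \ {x}) ∪ D := by
      ext y
      have := hDs y
      simp only [Finset.mem_sdiff, Finset.mem_union, Finset.mem_singleton]
      constructor
      · tauto
      · rintro (h | h)
        · tauto
        · exact ⟨Or.inr h, fun h' => hDs y h (h' ▸ hxs)⟩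
    rw [e]
    by_cases hxv : x = v
    · exact conn_union (hs2 x hxs) hDc (a := u) (by simp [hu, hxv, huv]) hz2 hz2u.symm
    · exact conn_union (hs2 x hxs) hDc (a := v) (by simp [hv, Ne.symm hxv]) hz1 hz1v.symm
  · have hxD : x ∈ D := (Finset.mem_union.1 hx).resolve_left hxs
    have hin : ∀ y, (y ∈ s ∨ y ∈ D) → y ≠ x → y ∈ (s ∪ D) \ {x} := by
      intro y h1 h2; simp [h1, h2]
    have hsx : ∀ y ∈ s, y ≠ x := fun y hy h => hxs (h ▸ hy)
    have key : ∀ U, Cl G ((s ∪ D) \ {x}) U → (∀ z ∈ s, z ∉ U) → U = ∅ := by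
      intro U hU hUs
      have hUD : ∀ z ∈ U, z ∈ D ∧ z ≠ x := by
        intro z hz
        have := hU.1 hz
        have := hUs z
        simp only [Finset.mem_sdiff, Finset.mem_union, Finset.mem_singleton] at *
        tauto
      have hUa : ∀ z ∈ U, ∀ y ∈ s, ¬ G.Adj z y := fun z hz y hy h =>
        hUs y hy (hU.2 z hz y (hin y (Or.inl hy) (hsx y hy)) h)
      have hconn : Conn G (D \ U) := by
        have key2 : ∀ P, Cl G (D \ U) P → x ∉ P → P = ∅ := by
          intro P hP hxP
          have hPD : ∀ z ∈ P, z ∈ D ∧ z ∉ U := by intro z hz; simpa using hP.1 hz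
          refine (hDc P ⟨fun z hz => (hPD z hz).1, ?_⟩).resolve_right (fun h => hxP (h ▸ hxD))
          intro z hz y hy hzy
          by_cases hyU : y ∈ U
          · exfalso
            exact (hPD z hz).2 (hU.2 y hyU z (hin z (Or.inr (hPD z hz).1)
              (fun h => hxP (h ▸ hz))) hzy.symm)
          · exact hP.2 z hz y (by simp [hy, hyU]) hzy
        intro P hP
        by_cases h : x ∈ P
        · right
          have := key2 _ hP.compl (by simp [h])
          exact Finset.Subset.antisymm hP.1 (Finset.sdiff_eq_empty_iff_subset.1 this)
        · exact Or.inl (key2 P hP h)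
      have h5 := hmin (D \ U) ⟨fun z hz => hDs z (Finset.mem_sdiff.1 hz).1, hconn,
        ⟨z1, Finset.mem_sdiff.2 ⟨hz1, fun h => hUa z1 h v hv hz1v⟩, hz1v⟩,
        ⟨z2, Finset.mem_sdiff.2 ⟨hz2, fun h => hUa z2 h u hu hz2u⟩, hz2u⟩⟩
      have := Finset.card_sdiff_add_card_eq_card (s := U) (t := D) (fun z hz => (hUD z hz).1)
      exact Finset.card_eq_zero.1 (by omega)
    intro U hU
    have hc : Cl G s (U ∩ s) := ⟨Finset.inter_subset_right, by
      intro w hw y hy hwy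
      simp only [Finset.mem_inter] at hw ⊢
      exact ⟨hU.2 w hw.1 y (hin y (Or.inl hy) (hsx y hy)) hwy, hy⟩⟩
    rcases hsc _ hc with h | h
    · left
      apply key U hU
      intro z hz hzU
      have : z ∈ U ∩ s := by simp [hz, hzU]
      simp [h] at this
    · right
      have hsub := Finset.inter_eq_right.1 h
      have := key _ hU.compl (fun z hz h' => (Finset.mem_sdiff.1 h').2 (hsub hz))
      exact Finset.Subset.antisymm hU.1 (Finset.sdiff_eq_empty_iff_subset.1 this)

theorem dec {s : Finset V} (hG : Conn G Finset.univ) (hs : FB G s) :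
    ∃ D : V → Finset V, (∀ u ∈ s, Cl G (Finset.univ \ {u}) (D u) ∧ ∀ z ∈ D u, z ∉ s) ∧
      ∀ W : Finset V, (W \ s).card = ∑ u ∈ s, (W ∩ D u).card := by
  classical
  let D : V → Finset V := fun u => Finset.univ.filter (fun z => ∃ C, Cl G (Finset.univ \ s) C ∧
    Conn G C ∧ z ∈ C ∧ ∃ y ∈ C, G.Adj y u)
  have memD : ∀ u z, z ∈ D u ↔ ∃ C, Cl G (Finset.univ \ s) C ∧
    Conn G C ∧ z ∈ C ∧ ∃ y ∈ C, G.Adj y u := by intro u z; simp [D]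
  have hCs : ∀ C, Cl G (Finset.univ \ s) C → ∀ z ∈ C, z ∉ s := by
    intro C hC z hz; simpa using hC.1 hz
  have hDs : ∀ u, ∀ z ∈ D u, z ∉ s := by
    intro u z hz
    obtain ⟨C, hC, -, hzC, -⟩ := (memD u z).1 hz
    exact hCs C hC z hzC
  refine ⟨D, ?_, ?_⟩
  · intro u hu
    refine ⟨⟨?_, ?_⟩, hDs u⟩
    · intro z hz
      have : z ≠ u := fun h => hDs u z hz (h ▸ hu)
      simp [this]
    · intro z hz y hy hzy
      simp only [Finset.mem_sdiff, Finset.mem_univ, true_and, Finset.mem_singleton] at hy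
      obtain ⟨C, hC, hCc, hzC, hCu⟩ := (memD u z).1 hz
      rw [memD]
      by_cases hys : y ∈ s
      · exact (ear hs hys hu (Ne.symm hy) (hCs C hC) hCc ⟨z, hzC, hzy⟩ hCu).elim
      · exact ⟨C, hC, hCc, hC.2 z hzC y (by simp [hys]) hzy, hCu⟩
  · intro W
    have e : W \ s = s.biUnion (fun u => W ∩ D u) := by
      ext z
      simp only [Finset.mem_sdiff, Finset.mem_biUnion, Finset.mem_inter]
      constructor
      · rintro ⟨hzW, hzs⟩
        obtain ⟨C, hC, hzC, -, hCc⟩ := exists_comp (G := G) (Finset.univ \ s) z (by simp [hzs])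
        obtain ⟨u, -, huC, y, hyC, hyu⟩ := exists_nbr hG (Finset.subset_univ C) ⟨z, hzC⟩ (by
          obtain ⟨q, hq⟩ := hs.1
          intro h
          exact hCs C hC q (by simp [h]) hq)
        have hus : u ∈ s := by
          by_contra h
          exact huC (hC.2 y hyC u (by simp [h]) hyu)
        exact ⟨u, hus, hzW, (memD u z).2 ⟨C, hC, hCc, hzC, y, hyC, hyu⟩⟩
      · rintro ⟨u, hu, hzW, hz⟩
        exact ⟨hzW, hDs u z hz⟩
    rw [e, Finset.card_biUnion]
    intro u hu u' hu' huu
    show Disjoint (W ∩ D u) (W ∩ D u')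
    rw [Finset.disjoint_left]
    intro z hz hz'
    simp only [Finset.mem_inter] at hz hz'
    obtain ⟨C, hC, hCc, hzC, hCu⟩ := (memD u z).1 hz.2
    obtain ⟨C', hC', hCc', hzC', hCu'⟩ := (memD u' z).1 hz'.2
    have hsub : ∀ A B, Cl G (Finset.univ \ s) A → Cl G (Finset.univ \ s) B → Conn G A → z ∈ A →
        z ∈ B → A ⊆ B := by
      intro A B hA hB hAc hzA hzB
      have hc : Cl G A (B ∩ A) := ⟨Finset.inter_subset_right, by
        intro w hw y hy hwy
        simp only [Finset.mem_inter] at hw ⊢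
        exact ⟨hB.2 w hw.1 y (hA.1 hy) hwy, hy⟩⟩
      rcases hAc _ hc with h | h
      · have : z ∈ B ∩ A := by simp [hzA, hzB]
        simp [h] at this
      · exact Finset.inter_eq_right.1 h
    have : C = C' := Finset.Subset.antisymm (hsub _ _ hC hC' hCc hzC hzC')
      (hsub _ _ hC' hC hCc' hzC' hzC)
    subst this
    exact ear hs hu hu' huu.symm (hCs C hC) hCc hCu hCu'

theorem exists_block {v a : V} (h : G.Adj v a) : ∃ s, FB G s ∧ v ∈ s ∧ a ∈ s := by
  classical
  have single : ∀ z : V, Conn G {z} := fun z W hW => Finset.subset_singleton_iff.1 hW.1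
  have hne : (Finset.univ.filter (fun t => v ∈ t ∧ a ∈ t ∧ Two G t)).Nonempty := by
    refine ⟨{v, a}, ?_⟩
    simp only [Finset.mem_filter, Finset.mem_univ, true_and]
    refine ⟨by simp, by simp, ?_, ?_⟩
    · exact (single a).insert (u := v) (z := a) (by simp) h.symm
    · intro x hx
      simp only [Finset.mem_insert, Finset.mem_singleton] at hx
      have n := h.ne
      rcases hx with rfl | rfl
      · have : ({x, a} : Finset V) \ {x} = {a} := by ext y; simp; grind
        rw [this]; exact single a
      · have : ({v, x} : Finset V) \ {x} = {v} := by ext y; simp; grind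
        rw [this]; exact single v
  obtain ⟨s, hs, hmax⟩ := Finset.exists_max_image _ Finset.card hne
  simp only [Finset.mem_filter, Finset.mem_univ, true_and] at hs hmax
  refine ⟨s, ⟨⟨v, hs.1⟩, hs.2.2, ?_⟩, hs.1, hs.2.1⟩
  intro t hst ht
  exact (Finset.eq_of_subset_of_card_le hst (hmax t ⟨hst hs.1, hst hs.2.1, ht⟩)).symm

theorem fb_of_B' (hG : Conn G Finset.univ) (hodd : Odd (Fintype.card V)) (hB : B' G Finset.univ)
    {s : Finset V} (hs : FB G s) : (∀ x ∈ s, ∀ y ∈ s, x ≠ y → G.Adj x y) ∧ Odd s.card := by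
  classical
  constructor
  · intro x hx
    have hc : Cl G s (s.filter (fun z => x ≠ z → G.Adj x z)) := by
      refine ⟨Finset.filter_subset _ _, ?_⟩
      intro z hz y hy hzy
      simp only [Finset.mem_filter] at *
      refine ⟨hy, fun hxy => ?_⟩
      by_cases hxz : x = z
      · exact hxz ▸ hzy
      by_contra hn
      obtain ⟨W, hW, h1, h2⟩ := (hB z (by simp)).2 x (by simp) y (by simp) (hz.2 hxz).symm hzy hxy hn
      have hc2 : Cl G (s \ {z}) (W ∩ (s \ {z})) := ⟨Finset.inter_subset_right, by
        intro w hw q hq hwq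
        simp only [Finset.mem_inter, Finset.mem_sdiff, Finset.mem_singleton] at hw hq ⊢
        exact ⟨hW.2 w hw.1 q (by simp [hq]) hwq, hq⟩⟩
      rcases hs.2.1.2 z hz.1 _ hc2 with h | h
      · have : x ∈ W ∩ (s \ {z}) := by simp [h1, hx, hxz]
        simp [h] at this
      · exact h2 (Finset.inter_eq_right.1 h (by simp [hy, hzy.ne.symm]))
    rcases hs.2.1.1 _ hc with h | h
    · have : x ∈ s.filter (fun z => x ≠ z → G.Adj x z) := by simp [hx]
      simp [h] at this
    · intro y hy hxy
      have : y ∈ s.filter (fun z => x ≠ z → G.Adj x z) := by rw [h]; exact hy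
      exact (Finset.mem_filter.1 this).2 hxy
  · obtain ⟨D, hD, hcard⟩ := dec hG hs
    have h1 := hcard Finset.univ
    have h2 : Even (∑ u ∈ s, (Finset.univ ∩ D u).card) := by
      refine Finset.even_sum _ (fun u hu => ?_)
      rw [Finset.univ_inter]
      exact (hB u (by simp)).1 _ (hD u hu).1
    have h3 := Finset.card_sdiff_add_card_eq_card (Finset.subset_univ s)
    rw [Finset.card_univ] at h3
    grind

theorem B'_of_fb (hG : Conn G Finset.univ)
    (hB : ∀ s, FB G s → (∀ x ∈ s, ∀ y ∈ s, x ≠ y → G.Adj x y) ∧ Odd s.card) :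
    B' G Finset.univ := by
  classical
  have hev : ∀ n, ∀ v, ∀ W : Finset V, W.card = n → Cl G (Finset.univ \ {v}) W → Even W.card := by
    intro n
    induction n using Nat.strong_induction_on with
    | _ n ih =>
    intro v W hn hW
    have hWv : ∀ z ∈ W, z ≠ v := by intro z hz; simpa using hW.1 hz
    rcases W.eq_empty_or_nonempty with h0 | h0
    · simp [h0]
    obtain ⟨u, -, huW, a, ha, hau⟩ := exists_nbr hG (Finset.subset_univ W) h0 (by
      intro h
      exact hWv v (by simp [h]) rfl)
    have : u = v := by
      by_contra h
      exact huW (hW.2 a ha u (by simp [h]) hau)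
    subst this
    obtain ⟨s, hs, hus, has⟩ := exists_block hau.symm
    obtain ⟨hcl, hso⟩ := hB s hs
    obtain ⟨D, hD, hcard⟩ := dec hG hs
    have e1 : W ∩ s = s \ {u} := by
      ext z
      simp only [Finset.mem_inter, Finset.mem_sdiff, Finset.mem_singleton]
      constructor
      · rintro ⟨h1, h2⟩; exact ⟨h2, hWv z h1⟩
      · rintro ⟨h1, h2⟩
        refine ⟨?_, h1⟩
        by_cases hza : z = a
        · exact hza ▸ ha
        · exact hW.2 a ha z (by simp [h2]) (hcl a has z h1 (Ne.symm hza))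
    have e2 := Finset.card_sdiff_add_card_eq_card (s := {u}) (t := s) (by simpa using hus)
    simp only [Finset.card_singleton] at e2
    have e3 : Even (∑ q ∈ s, (W ∩ D q).card) := by
      refine Finset.even_sum _ (fun q hq => ?_)
      refine ih _ ?_ q _ rfl ⟨?_, ?_⟩
      · rw [← hn]
        apply Finset.card_lt_card
        rw [Finset.ssubset_iff_of_subset Finset.inter_subset_left]
        exact ⟨a, ha, fun h => (hD q hq).2 a (Finset.mem_inter.1 h).2 has⟩
      · exact Finset.inter_subset_right.trans (hD q hq).1.1
      · intro z hz y hy hzy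
        simp only [Finset.mem_inter] at hz ⊢
        have hyD := (hD q hq).1.2 z hz.2 y hy hzy
        have hyu : y ≠ u := fun h => (hD q hq).2 y hyD (h ▸ hus)
        exact ⟨hW.2 z hz.1 y (by simp [hyu]) hzy, hyD⟩
    have e4 := Finset.card_inter_add_card_sdiff W s
    rw [e1, hcard W] at e4
    grind
  intro v _
  refine ⟨fun W hW => hev _ v W rfl hW, ?_⟩
  intro a _ b _ hva hvb hab hn
  obtain ⟨s, hs, hvs, has⟩ := exists_block hva
  have hbs : b ∉ s := fun h => hn ((hB s hs).1 a has b h hab)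
  obtain ⟨C, hC, hbC, -, hCc⟩ := exists_comp (G := G) (Finset.univ \ s) b (by simp [hbs])
  have hCs : ∀ z ∈ C, z ∉ s := by intro z hz; simpa using hC.1 hz
  have hcl : Cl G (Finset.univ \ {v}) C := by
    refine ⟨?_, ?_⟩
    · intro z hz
      have : z ≠ v := fun h => hCs z hz (h ▸ hvs)
      simp [this]
    · intro z hz y hy hzy
      simp only [Finset.mem_sdiff, Finset.mem_univ, true_and, Finset.mem_singleton] at hy
      by_cases hys : y ∈ s
      · exact (ear hs hvs hys hy hCs hCc ⟨b, hbC, hvb.symm⟩ ⟨z, hz, hzy⟩).elim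
      · exact hC.2 z hz y (by simp [hys]) hzy
  refine ⟨_, hcl.compl, ?_, by simp [hbC]⟩
  have : a ∉ C := fun h => hCs a h has
  simp [this, hva.ne.symm]

theorem inB_iff (hG : G.Connected) (hodd : Odd (Fintype.card V)) :
    InFamilyB G ↔ B' G Finset.univ := by
  classical
  have hc : Conn G Finset.univ := by
    rw [← preconn_iff]
    rw [Finset.coe_univ]
    exact (SimpleGraph.induceUnivIso G).preconnected_iff.2 hG.preconnected
  constructor
  · rintro ⟨-, h⟩
    refine B'_of_fb hc (fun s hs => ?_)
    have := h s ((fb_iff s).2 hs)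
    simpa using this
  · intro hB
    refine ⟨hG, fun s hs => ?_⟩
    have e : s = (s.toFinset : Set V) := by simp
    rw [e] at hs ⊢
    have := fb_of_B' hc hodd hB ((fb_iff _).1 hs)
    rw [Set.ncard_coe_finset]
    exact ⟨fun x hx y hy => this.1 x hx y hy, this.2⟩

end PF

/-- If `G` is a connected graph of odd order `n ≥ 3`, then `G` contains a proper
1-perfect forest (a semiperfect spanning forest with exactly one vertex of even degree
and no isolated vertices) if and only if `G` does not belong to the family `B`. -/
theorem proper_one_perfect_forest_iff_not_in_B {V : Type*} [Fintype V]
    (G : SimpleGraph V) (hG : G.Connected) (hodd : Odd (Fintype.card V))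
    (h3 : 3 ≤ Fintype.card V) :
    (∃ F : SimpleGraph V, IsSemiperfectForest G F ∧
        (∃! v : V, Even (fdeg F v)) ∧ ∀ v : V, 0 < fdeg F v) ↔ ¬ InFamilyB G := by
  classical
  have hc : PF.Conn G Finset.univ := by
    rw [← PF.preconn_iff, Finset.coe_univ]
    exact (SimpleGraph.induceUnivIso G).preconnected_iff.2 hG.preconnected
  rw [PF.inB_iff hG hodd]
  constructor
  · rintro ⟨F, hF, ⟨v, hv, huniq⟩, hpos⟩ hB
    refine PF.no_forest_of_B' hB F hF v (fun x hx => ?_) ((PF.fdeg_pos F v).1 (hpos v))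
    exact PF.z2 _ (fun h => hx (huniq x ((PF.fdeg_even F x).2 h)))
  · intro hB
    apply PF.forest_of_Q
    by_contra hQ
    exact hB (PF.B'_of_not_Q _ Finset.univ rfl hc (by simpa using hodd) hQ)
end

section
/- Let B denote the family of all connected graphs in which every block is a complete graph of odd order. Every connected graph G of odd order n ≥ 3 that does not belong to B contains a proper 1-perfect forest. -/
open SimpleGraph

open Finset in
open scoped Classical in
/-- degree of a vertex in an edge set -/
noncomputable def ed {V : Type*} (E : Finset (Sym2 V)) (u : V) : ℕ := (E.filter (fun e => u ∈ e)).card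

/-- all degrees odd except at `v` -/
def JJ {V : Type*} (G : SimpleGraph V) (v : V) (E : Finset (Sym2 V)) : Prop :=
  (∀ e ∈ E, e ∈ G.edgeSet) ∧ ∀ u, Odd (ed E u) ↔ u ≠ v

/-- minimal such set -/
def Stt {V : Type*} (G : SimpleGraph V) (v : V) (E : Finset (Sym2 V)) : Prop :=
  JJ G v E ∧ ∀ v' E', JJ G v' E' → E.card ≤ E'.card

/-- the goal -/
def Goal {V : Type*} (G : SimpleGraph V) : Prop :=
  ∃ F : SimpleGraph V, IsSemiperfectForest G F ∧
      (∃! v : V, Even (fdeg F v)) ∧ ∀ v : V, 0 < fdeg F v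

section aux
open scoped Classical
variable {V : Type*} {G : SimpleGraph V}

lemma ed_symmDiff (E P : Finset (Sym2 V)) (u : V) :
    ed (symmDiff E P) u + 2 * ed (E ∩ P) u = ed E u + ed P u := by
  unfold ed
  have h1 : (symmDiff E P).filter (fun e => u ∈ e) =
      (E.filter (fun e => u ∈ e) \ P.filter (fun e => u ∈ e)) ∪
      (P.filter (fun e => u ∈ e) \ E.filter (fun e => u ∈ e)) := by
    ext e; simp [Finset.mem_symmDiff]; tauto
  have h2 : (E ∩ P).filter (fun e => u ∈ e) =
      E.filter (fun e => u ∈ e) ∩ P.filter (fun e => u ∈ e) := by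
    ext e; simp; tauto
  rw [h1, h2, Finset.card_union_of_disjoint]
  · have a := Finset.card_sdiff_add_card_inter (E.filter (fun e => u ∈ e)) (P.filter (fun e => u ∈ e))
    have b := Finset.card_sdiff_add_card_inter (P.filter (fun e => u ∈ e)) (E.filter (fun e => u ∈ e))
    rw [Finset.inter_comm] at b
    omega
  · rw [Finset.disjoint_left]; intro e; simp; tauto

lemma odd_ed_symmDiff (E P : Finset (Sym2 V)) (u : V) :
    Odd (ed (symmDiff E P) u) ↔ (Odd (ed E u) ↔ ¬ Odd (ed P u)) := by
  have := ed_symmDiff E P u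
  simp only [Nat.odd_iff]
  omega

lemma card_symmDiff' {α : Type*} [DecidableEq α] (E P : Finset α) :
    (symmDiff E P).card + 2 * (E ∩ P).card = E.card + P.card := by
  have h1 : symmDiff E P = (E \ P) ∪ (P \ E) := rfl
  rw [h1, Finset.card_union_of_disjoint]
  · have a := Finset.card_sdiff_add_card_inter E P
    have b := Finset.card_sdiff_add_card_inter P E
    rw [Finset.inter_comm] at b
    omega
  · rw [Finset.disjoint_left]; intro e; simp; tauto

lemma odd_ed_trail {x y : V} (p : G.Walk x y) (hp : p.IsTrail) (u : V) :
    Odd (ed p.edges.toFinset u) ↔ (x ≠ y ∧ (u = x ∨ u = y)) := by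
  have h := hp.even_countP_edges_iff u
  have h2 : ed p.edges.toFinset u = p.edges.countP (fun e => u ∈ e) := by
    unfold ed
    rw [List.countP_eq_length_filter, ← List.toFinset_card_of_nodup (hp.edges_nodup.filter _)]
    congr 1
    ext e; simp
  rw [h2, ← Nat.not_even_iff_odd, h]
  tauto

lemma JJ.sd_closed {v : V} {E : Finset (Sym2 V)} (h : JJ G v E) {x : V} (p : G.Walk x x)
    (hp : p.IsTrail) : JJ G v (symmDiff E p.edges.toFinset) := by
  refine ⟨fun e he => ?_, fun u => ?_⟩
  · rw [Finset.mem_symmDiff] at he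
    rcases he with he | he
    · exact h.1 e he.1
    · exact p.edges_subset_edgeSet (by simpa using he.1)
  · rw [odd_ed_symmDiff, odd_ed_trail p hp, h.2]; simp

lemma odd_ed_singleton (a b u : V) : Odd (ed {s(a,b)} u) ↔ (u = a ∨ u = b) := by
  unfold ed
  rw [Finset.filter_singleton]
  by_cases h : u ∈ s(a,b)
  · rw [if_pos h]; simpa using h
  · rw [if_neg h]; simpa using h

lemma JJ.sd_edge {v w : V} {E : Finset (Sym2 V)} (h : JJ G v E) (hvw : G.Adj v w) :
    JJ G w (symmDiff E {s(v,w)}) := by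
  refine ⟨fun e he => ?_, fun u => ?_⟩
  · rw [Finset.mem_symmDiff] at he
    rcases he with he | he
    · exact h.1 e he.1
    · have := he.1
      simp only [Finset.mem_singleton] at this
      subst this; exact hvw
  · rw [odd_ed_symmDiff, odd_ed_singleton, h.2]
    have := hvw.ne
    by_cases h1 : u = v
    · subst h1; simp [this]
    · simp [h1]

lemma exists_JJ [Fintype V] (hG : G.Connected) (hodd : Odd (Fintype.card V)) (r : V) :
    ∃ E, JJ G r E := by
  have key : ∀ T : Finset V, r ∉ T → ∃ E : Finset (Sym2 V), (∀ e ∈ E, e ∈ G.edgeSet) ∧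
      (∀ u, u ≠ r → (Odd (ed E u) ↔ u ∈ T)) ∧ (Odd (ed E r) ↔ Odd T.card) := by
    intro T
    induction T using Finset.induction_on with
    | empty => intro _; exact ⟨∅, by simp, by simp [ed], by simp [ed]⟩
    | insert t T ht ih =>
      intro hr
      simp only [Finset.mem_insert, not_or] at hr
      obtain ⟨E, h1, h2, h3⟩ := ih hr.2
      obtain ⟨p, hp⟩ := (hG.preconnected t r).exists_isPath
      refine ⟨symmDiff E p.edges.toFinset, ?_, ?_, ?_⟩
      · intro e he
        rw [Finset.mem_symmDiff] at he
        rcases he with he | he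
        · exact h1 e he.1
        · exact p.edges_subset_edgeSet (by simpa using he.1)
      · intro u hu
        rw [odd_ed_symmDiff, odd_ed_trail p hp.isTrail, h2 u hu]
        have : t ≠ r := fun h => hr.1 h.symm
        by_cases hut : u = t
        · subst hut; simp [ht, hu]
        · simp [hu, hut]
      · rw [odd_ed_symmDiff, odd_ed_trail p hp.isTrail, h3, Finset.card_insert_of_notMem ht]
        have : t ≠ r := fun h => hr.1 h.symm
        simp [this, Nat.odd_add_one]
  obtain ⟨E, h1, h2, h3⟩ := key (Finset.univ.erase r) (by simp)
  refine ⟨E, h1, fun u => ?_⟩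
  by_cases hu : u = r
  · subst hu
    rw [h3, Finset.card_erase_of_mem (Finset.mem_univ _), Finset.card_univ]
    obtain ⟨k, hk⟩ := hodd
    rw [hk]; simp
  · rw [h2 u hu]; simp

lemma exists_Stt [Fintype V] (hG : G.Connected) (hodd : Odd (Fintype.card V)) :
    ∃ v E, Stt G v E := by
  have hr : Nonempty V := hG.nonempty
  obtain ⟨r⟩ := hr
  obtain ⟨E, hE⟩ := exists_JJ hG hodd r
  have hne : ∃ n, ∃ v E, JJ G v E ∧ E.card = n := ⟨_, r, E, hE, rfl⟩
  obtain ⟨v, E, h1, h2⟩ := Nat.find_spec hne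
  refine ⟨v, E, h1, fun v' E' h' => ?_⟩
  rw [h2]
  exact Nat.find_min' hne ⟨v', E', h', rfl⟩

lemma fdeg_eq {E : Finset (Sym2 V)} (hE : ∀ e ∈ E, e ∈ G.edgeSet) (u : V) :
    fdeg (fromEdgeSet (E : Set (Sym2 V))) u = ed E u := by
  unfold fdeg ed
  rw [← Set.ncard_coe_finset, ← Set.ncard_image_of_injective (f := fun t => s(u,t))]
  · congr 1
    ext e
    simp only [Set.mem_image, mem_neighborSet, fromEdgeSet_adj, Finset.mem_coe, Finset.coe_filter,
      Set.mem_ofPred_eq]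
    constructor
    · rintro ⟨t, ⟨h1, h2⟩, rfl⟩
      exact ⟨h1, by simp⟩
    · rintro ⟨h1, h2⟩
      obtain ⟨t, rfl⟩ := Sym2.mem_iff_exists.1 h2
      exact ⟨t, ⟨h1, G.ne_of_adj (hE _ h1)⟩, rfl⟩
  · intro a b h
    exact Sym2.congr_right.1 h

lemma fes_le {E : Finset (Sym2 V)} (hE : ∀ e ∈ E, e ∈ G.edgeSet) :
    fromEdgeSet (E : Set (Sym2 V)) ≤ G := by
  intro a b h
  exact hE _ ((fromEdgeSet_adj _).1 h).1

lemma goal_of {v : V} {E : Finset (Sym2 V)} (h : JJ G v E) (hv : ed E v ≠ 0)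
    (hs : IsSemiperfectForest G (fromEdgeSet (E : Set (Sym2 V)))) : Goal G := by
  refine ⟨_, hs, ⟨v, ?_, ?_⟩, ?_⟩
  · simp only [fdeg_eq h.1]
    rw [← Nat.not_odd_iff_even, h.2]; simp
  · intro u hu
    simp only [fdeg_eq h.1] at hu
    rw [← Nat.not_odd_iff_even, h.2] at hu
    simpa using hu
  · intro u
    rw [fdeg_eq h.1]
    by_cases hu : u = v
    · subst hu; omega
    · exact ((h.2 u).2 hu).pos

lemma walk_cases {F : SimpleGraph V} {x y : V} (p : F.Walk x y) (hxy : x ≠ y) (hn : ¬ F.Adj x y) :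
    3 ≤ p.length ∨ ∃ z, p.edges = [s(x,z), s(z,y)] := by
  cases p with
  | nil => exact absurd rfl hxy
  | cons a p =>
    cases p with
    | nil => exact absurd a hn
    | cons b p =>
      cases p with
      | nil => right; exact ⟨_, rfl⟩
      | cons d p => left; simp

lemma not_semi {w : V} {E : Finset (Sym2 V)} (h : JJ G w E)
    (hs : ¬ IsSemiperfectForest G (fromEdgeSet (E : Set (Sym2 V)))) :
    (∃ E', JJ G w E' ∧ E'.card + 2 ≤ E.card) ∨
    (∃ x z y, s(x,z) ∈ E ∧ s(z,y) ∈ E ∧ x ≠ y ∧ G.Adj x y ∧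
      ∃ E', JJ G w E' ∧ E'.card + 1 = E.card ∧ ∀ e ∈ E, e ≠ s(x,z) → e ≠ s(z,y) → e ∈ E') := by
  set F := fromEdgeSet (E : Set (Sym2 V)) with hF
  have hle : F ≤ G := fes_le h.1
  have hsub : ∀ e ∈ F.edgeSet, e ∈ E := by
    intro e he
    rw [hF, edgeSet_fromEdgeSet] at he
    exact he.1
  by_cases hac : F.IsAcyclic
  · have : ¬ ∀ x y : V, F.Reachable x y → G.Adj x y → F.Adj x y := fun h' => hs ⟨hle, hac, h'⟩
    push Not at this
    obtain ⟨x, y, hr, hxy, hn⟩ := this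
    have hxyE : s(x,y) ∉ E := fun h' => hn ((fromEdgeSet_adj _).2 ⟨h', hxy.ne⟩)
    obtain ⟨p, hp⟩ := hr.exists_isPath
    have hpe : ∀ e ∈ p.edges, e ∈ E := fun e he => hsub e (p.edges_subset_edgeSet he)
    let q : G.Walk x y := p.mapLe hle
    have hqe : q.edges = p.edges := by simp [q]
    have hq : q.IsPath := hp.mapLe hle
    have hnq : s(y,x) ∉ q.edges := by
      rw [hqe]; intro h'; exact hxyE (by rw [Sym2.eq_swap]; exact hpe _ h')
    let c : G.Walk y y := Walk.cons hxy.symm q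
    have hc : c.IsTrail := (Walk.isTrail_cons _ _).2 ⟨hq.isTrail, hnq⟩
    have hJ := h.sd_closed c hc
    have hce : c.edges.toFinset = insert s(y,x) p.edges.toFinset := by
      simp [c, hqe]
    have hcard := card_symmDiff' E c.edges.toFinset
    have hint : E ∩ c.edges.toFinset = p.edges.toFinset := by
      rw [hce]; ext e
      simp only [Finset.mem_inter, Finset.mem_insert, List.mem_toFinset]
      constructor
      · rintro ⟨h1, rfl | h2⟩
        · exact absurd h1 (by rwa [Sym2.eq_swap])
        · exact h2
      · intro h1; exact ⟨hpe _ h1, Or.inr h1⟩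
    have hc2 : c.edges.toFinset.card = p.length + 1 := by
      rw [List.toFinset_card_of_nodup hc.edges_nodup]; simp [c, q]
    have hc3 : p.edges.toFinset.card = p.length := by
      rw [List.toFinset_card_of_nodup hp.isTrail.edges_nodup]; simp
    rw [hint, hc2, hc3] at hcard
    rcases walk_cases p hxy.ne hn with hl | ⟨z, hz⟩
    · left
      exact ⟨_, hJ, by omega⟩
    · right
      have hl : p.length = 2 := by rw [← Walk.length_edges, hz]; rfl
      refine ⟨x, z, y, hpe _ (by simp [hz]), hpe _ (by simp [hz]), hxy.ne, hxy, _, hJ, by omega, ?_⟩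
      intro e he h1 h2
      rw [Finset.mem_symmDiff]
      left
      refine ⟨he, ?_⟩
      rw [hce, hz]
      simp only [Finset.mem_insert, List.mem_toFinset, List.mem_cons, not_or]
      refine ⟨?_, h1, h2, by simp⟩
      rintro rfl
      exact hxyE (by rwa [Sym2.eq_swap])
  · left
    unfold IsAcyclic at hac
    push Not at hac
    obtain ⟨x, c, hc⟩ := hac
    have hpe : ∀ e ∈ c.edges, e ∈ E := fun e he => hsub e (c.edges_subset_edgeSet he)
    have hc' : (c.mapLe hle).IsTrail := (hc.mapLe hle).isTrail
    refine ⟨_, h.sd_closed (c.mapLe hle) hc', ?_⟩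
    have hcard := card_symmDiff' E (c.mapLe hle).edges.toFinset
    have hqe : (c.mapLe hle).edges = c.edges := by simp
    rw [hqe] at hcard ⊢
    rw [Finset.inter_eq_right.2 (by intro e he; exact hpe e (by simpa using he))] at hcard
    have hc3 : c.edges.toFinset.card = c.length := by
      rw [List.toFinset_card_of_nodup hc.isTrail.edges_nodup]; simp
    have := hc.three_le_length
    omega

lemma Stt.deg_zero (hn : ¬ Goal G) {v : V} {E : Finset (Sym2 V)} (h : Stt G v E) : ed E v = 0 := by
  by_contra hv
  apply hn
  apply goal_of h.1 hv
  by_contra hs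
  rcases not_semi h.1 hs with ⟨E', h1, h2⟩ | ⟨x, z, y, -, -, -, -, E', h1, h2, -⟩
  · have := h.2 _ _ h1; omega
  · have := h.2 _ _ h1; omega

lemma ed_zero_iff {E : Finset (Sym2 V)} {v : V} : ed E v = 0 ↔ ∀ t, s(v,t) ∉ E := by
  unfold ed
  rw [Finset.card_eq_zero, Finset.filter_eq_empty_iff]
  constructor
  · intro h t ht; exact h ht (by simp)
  · intro h e he hv
    obtain ⟨t, rfl⟩ := Sym2.mem_iff_exists.1 hv
    exact h t he

lemma Stt.step (hn : ¬ Goal G) {v w : V} {E : Finset (Sym2 V)} (h : Stt G v E) (hvw : G.Adj v w) :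
    ∃ w', G.Adj v w' ∧ s(w,w') ∈ E ∧ (∀ t, s(w,t) ∈ E → t = w') ∧
      ∃ E', Stt G w E' ∧ s(v,w') ∈ E' ∧ ∀ e ∈ E, e ≠ s(w,w') → e ∈ E' := by
  have hv0 := ed_zero_iff.1 (h.deg_zero hn)
  have hwE : ∃ w', s(w,w') ∈ E := by
    have := (h.1.2 w).2 hvw.ne'
    by_contra hc
    push Not at hc
    rw [ed_zero_iff.2 hc] at this
    simp at this
  obtain ⟨w', hw'⟩ := hwE
  have hww : G.Adj w w' := h.1.1 _ hw'
  have hvw' : v ≠ w' := by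
    rintro rfl; rw [Sym2.eq_swap] at hw'; exact hv0 _ hw'
  have hJ1 := h.1.sd_edge hvw
  have hE1 : symmDiff E {s(v,w)} = insert s(v,w) E := by
    ext e; simp only [Finset.mem_symmDiff, Finset.mem_insert, Finset.mem_singleton]
    have := hv0 w
    by_cases he : e = s(v,w)
    · subst he; simp [this]
    · simp [he]
  rw [hE1] at hJ1
  have hcard1 : (insert s(v,w) E).card = E.card + 1 := Finset.card_insert_of_notMem (hv0 w)
  have hd1 : ed (insert s(v,w) E) w ≠ 0 := by
    intro h0
    exact ed_zero_iff.1 h0 v (by rw [Sym2.eq_swap]; simp)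
  have hns : ¬ IsSemiperfectForest G (fromEdgeSet ((insert s(v,w) E : Finset (Sym2 V)) : Set (Sym2 V))) :=
    fun hs => hn (goal_of hJ1 hd1 hs)
  have key : G.Adj v w' ∧ ∀ t, s(w,t) ∈ E → t = w' := by
    rcases not_semi hJ1 hns with ⟨E', h1, h2⟩ | ⟨x, z, y, hxz, hzy, hxy, hadj, E', h1, h2, h3⟩
    · have := h.2 _ _ h1; omega
    · have hS : Stt G w E' := ⟨h1, fun v' E'' h'' => by have := h.2 _ _ h''; omega⟩
      have hw0 := ed_zero_iff.1 (hS.deg_zero hn)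
      have cl : ∀ t, s(w,t) ∈ insert s(v,w) E → s(w,t) = s(x,z) ∨ s(w,t) = s(z,y) := by
        intro t ht
        by_contra hc
        push Not at hc
        exact hw0 t (h3 _ ht hc.1 hc.2)
      have c1 := cl v (by rw [Sym2.eq_swap]; simp)
      have c2 : ∀ t, s(w,t) ∈ E → s(w,t) = s(x,z) ∨ s(w,t) = s(z,y) :=
        fun t ht => cl t (Finset.mem_insert_of_mem ht)
      have c3 : ∀ t, s(w,t) ∈ E → t ≠ v := by
        rintro t ht rfl; rw [Sym2.eq_swap] at ht; exact hv0 _ ht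
      have hwv := hvw.ne'
      have hwt : ∀ t, s(w,t) ∈ E → w ≠ t := fun t ht => G.ne_of_adj (h.1.1 _ ht)
      have e1 := c2 w' hw'
      have e3 := c3 w' hw'
      simp only [Sym2.eq_iff] at c1 c2 e1
      have hadj' := hadj.symm
      have main : z = w ∧ ((x = v ∧ y = w') ∨ (x = w' ∧ y = v)) := by
        grind
      obtain ⟨rfl, hh⟩ := main
      constructor
      · rcases hh with ⟨rfl, rfl⟩ | ⟨rfl, rfl⟩
        · exact hadj
        · exact hadj'
      · intro t ht
        have := c2 t ht
        have := c3 t ht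
        have := hwt t ht
        grind
  refine ⟨w', key.1, hw', key.2, ?_⟩
  have hJ2 := (h.1.sd_edge key.1).sd_edge hww.symm
  have hE2 : symmDiff (symmDiff E {s(v,w')}) {s(w',w)} = insert s(v,w') (E.erase s(w,w')) := by
    ext e; simp only [Finset.mem_symmDiff, Finset.mem_insert, Finset.mem_singleton, Finset.mem_erase]
    have := hv0 w'
    have hne : s(v,w') ≠ s(w,w') := by
      intro h'; rw [h'] at this; exact this hw'
    rw [Sym2.eq_swap (a := w') (b := w)]
    by_cases he : e = s(v,w')
    · subst he; simp [this, hne]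
    · by_cases he' : e = s(w,w')
      · subst he'; simp [hw', hne.symm]
      · simp [he, he']
  rw [hE2] at hJ2
  refine ⟨_, ⟨hJ2, fun v' E'' h'' => ?_⟩, by simp, ?_⟩
  · have h1 := h.2 _ _ h''
    have h2 := Finset.card_erase_add_one hw'
    have h3 := Finset.card_insert_le s(v,w') (E.erase s(w,w'))
    omega
  · intro e he hne
    simp [he, hne]

lemma Stt.all (hn : ¬ Goal G) {v u : V} (p : G.Walk v u) : ∀ {E}, Stt G v E → ∃ E', Stt G u E' := by
  induction p with
  | nil => intro E h; exact ⟨E, h⟩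
  | cons a p ih =>
    intro E h
    obtain ⟨_, _, _, _, E', h', _⟩ := h.step hn a
    exact ih h'

lemma claimA (hn : ¬ Goal G) {u z x y : V} (p : G.Walk u z) : ∀ {E}, Stt G u E → s(y,x) ∈ E →
    y ∉ p.support → x ∉ p.support → G.Adj z y → G.Adj z x := by
  induction p with
  | nil =>
    intro E h hyx _ _ hzy
    obtain ⟨w, h1, h2, h3, _⟩ := h.step hn hzy
    rw [h3 x hyx]; exact h1
  | @cons u t z a p ih =>
    intro E h hyx hy hx hzy
    simp only [Walk.support_cons, List.mem_cons, not_or] at hy hx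
    obtain ⟨t', h1, h2, h3, E', h4, h5, h6⟩ := h.step hn a
    refine ih h4 (h6 _ hyx ?_) hy.2 hx.2 hzy
    intro he
    have : t ∈ s(y,x) := by rw [he]; simp
    rcases Sym2.mem_iff.1 this with rfl | rfl
    · exact hy.2 p.start_mem_support
    · exact hx.2 p.start_mem_support

lemma claimB (hn : ¬ Goal G) {x y z : V} (hS : ∃ E, Stt G y E) (hx : G.Adj y x) (hz : G.Adj y z)
    (hxz : x ≠ z) (p : G.Walk x z) (hp : p.IsPath) (hy : y ∉ p.support) : G.Adj x z := by
  obtain ⟨E, hE⟩ := hS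
  obtain ⟨x', h1, h2, h3, E', h4, h5, h6⟩ := hE.step hn hx
  obtain ⟨x2, g1, g2, g3, E2, g4, g5, g6⟩ := hE.step hn h1
  have : x = x2 := g3 x (by rw [Sym2.eq_swap]; exact h2)
  subst this
  have hxx' : G.Adj x x' := hE.1.1 _ h2
  by_cases hm : x' ∈ p.support
  · have hq : x ∉ (p.dropUntil x' hm).support := by
      intro hxq
      have hnd := hp.support_nodup
      rw [← p.take_spec hm, Walk.support_append] at hnd
      have hd := List.disjoint_of_nodup_append hnd
      have hxt : x ∈ (p.dropUntil x' hm).support.tail := by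
        rw [← Walk.cons_tail_support, List.mem_cons] at hxq
        rcases hxq with h | h
        · exact absurd h hxx'.ne
        · exact h
      exact hd (Walk.start_mem_support _) hxt
    exact (claimA hn (p.dropUntil x' hm) g4 g5
      (fun h => hy (p.support_dropUntil_subset_support hm h)) hq hz.symm).symm
  · have hzx' : G.Adj z x' := claimA hn p h4 h5 hy hm hz.symm
    refine (claimA hn (Walk.cons hzx'.symm Walk.nil) g4 g5 ?_ ?_ hz.symm).symm
    · simp [h1.ne, hz.ne]
    · simp [hxx'.ne, hxz]

lemma conn_of_hub {t : Set V} {h : V} (hh : h ∈ t) (H : ∀ u ∈ t, u ≠ h → G.Adj h u) :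
    (G.induce t).Connected := by
  have hr : ∀ u : t, (G.induce t).Reachable ⟨h, hh⟩ u := by
    rintro ⟨u, hu⟩
    by_cases he : u = h
    · subst he; exact Reachable.refl _
    · exact Adj.reachable (by simpa using H u hu he)
  have : Nonempty t := ⟨⟨h, hh⟩⟩
  exact ⟨fun a b => (hr a).symm.trans (hr b)⟩

end aux

/-- Every connected graph of odd order `n ≥ 3` that does not belong to the family `B`
(of connected graphs in which every block is a complete graph of odd order)
contains a proper 1-perfect forest. -/
theorem proper_one_perfect_forest_of_not_in_B {V : Type*} [Fintype V]
    (G : SimpleGraph V) (hG : G.Connected) (hodd : Odd (Fintype.card V))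
    (h3 : 3 ≤ Fintype.card V) (hB : ¬ InFamilyB G) :
    ∃ F : SimpleGraph V, IsSemiperfectForest G F ∧
      (∃! v : V, Even (fdeg F v)) ∧ ∀ v : V, 0 < fdeg F v := by
  classical
  by_contra hn'
  have hn : ¬ Goal G := hn'
  apply hB
  have hall : ∀ y, ∃ E, Stt G y E := by
    intro y
    obtain ⟨v, E, hE⟩ := exists_Stt hG hodd
    obtain ⟨p⟩ := hG.preconnected v y
    exact Stt.all hn p hE
  refine ⟨hG, fun s hs => ?_⟩
  obtain ⟨hs1, hs2, hs3⟩ := hs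
  have hcl : ∀ x ∈ s, ∀ y ∈ s, x ≠ y → G.Adj x y := by
    intro x hx y hy hxy
    have key : ∀ b : s, (G.induce s).Reachable ⟨x, hx⟩ b → b.1 = x ∨ G.Adj x b.1 := by
      intro b hb
      rw [reachable_iff_reflTransGen] at hb
      induction hb with
      | refl => left; rfl
      | @tail c d _ hcd ih =>
        have hcd' : G.Adj c.1 d.1 := by simpa using hcd
        by_cases hd : d.1 = x
        · left; exact hd
        right
        rcases ih with ih | ih
        · rw [← ih]; exact hcd'
        · have hr := hs2 c.1 c.2 ⟨x, hx, by simpa using ih.ne⟩ ⟨d.1, d.2, by simpa using hcd'.ne'⟩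
          obtain ⟨p, hp⟩ := hr.exists_isPath
          let f : G.induce (s \ {c.1}) ↪g G := SimpleGraph.Embedding.induce _
          let q := p.map f.toHom
          have hq : q.IsPath := hp.map f.injective
          refine claimB hn (hall c.1) ih.symm hcd' (fun h => hd h.symm) q hq ?_
          intro hmem
          have hsupp : q.support = p.support.map f.toHom := Walk.support_map _ _
          have hmem' : c.1 ∈ p.support.map f.toHom := hsupp ▸ hmem
          obtain ⟨a, _, ha⟩ := List.mem_map.1 hmem'
          exact a.2.2 ha
    rcases key ⟨y, hy⟩ (hs1.preconnected _ _) with h | h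
    · exact absurd h.symm hxy
    · exact h
  refine ⟨hcl, ?_⟩
  obtain ⟨⟨v, hv⟩⟩ := hs1.nonempty
  obtain ⟨E, hE⟩ := hall v
  have hpart : ∀ w ∈ s, w ≠ v → ∃ w', w' ∈ s ∧ w' ≠ v ∧ s(w,w') ∈ E ∧ ∀ t, s(w,t) ∈ E → t = w' := by
    intro w hw hwv
    have hvw := hcl v hv w hw hwv.symm
    obtain ⟨w', h1, h2, h3, -⟩ := hE.step hn hvw
    refine ⟨w', ?_, h1.ne', h2, h3⟩
    have hww' : G.Adj w w' := hE.1.1 _ h2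
    have ht := hs3 (insert w' s) (Set.subset_insert _ _) ?_ ?_
    · rw [← ht]; exact Set.mem_insert _ _
    · refine conn_of_hub (h := v) (Set.mem_insert_of_mem _ hv) ?_
      rintro u (rfl | hu) hne
      · exact h1
      · exact hcl v hv u hu hne.symm
    · intro x hx
      by_cases hxv : x = v
      · refine (conn_of_hub (t := insert w' s \ {x}) (h := w) ⟨Set.mem_insert_of_mem _ hw, by simpa [hxv] using hwv⟩ ?_).preconnected
        rintro u ⟨rfl | hu, _⟩ hne
        · exact hww'
        · exact hcl w hw u hu hne.symm
      · refine (conn_of_hub (t := insert w' s \ {x}) (h := v) ⟨Set.mem_insert_of_mem _ hv, fun h => hxv h.symm⟩ ?_).preconnected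
        rintro u ⟨rfl | hu, _⟩ hne
        · exact h1
        · exact hcl v hv u hu hne.symm
  choose! m hm1 hm2 hm3 hm4 using hpart
  have hsum : ∑ _u ∈ s.toFinset.erase v, (1 : ZMod 2) = 0 := by
    refine Finset.sum_involution (fun a _ => m a) ?_ ?_ ?_ ?_
    · intro a ha; decide
    · intro a ha _ he
      simp only [Finset.mem_erase, Set.mem_toFinset] at ha
      have := G.ne_of_adj (hE.1.1 _ (hm3 a ha.2 ha.1))
      exact this he.symm
    · intro a ha
      simp only [Finset.mem_erase, Set.mem_toFinset] at ha ⊢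
      exact ⟨hm2 a ha.2 ha.1, hm1 a ha.2 ha.1⟩
    · intro a ha
      simp only [Finset.mem_erase, Set.mem_toFinset] at ha
      refine (hm4 _ (hm1 a ha.2 ha.1) (hm2 a ha.2 ha.1) a ?_).symm
      rw [Sym2.eq_swap]; exact hm3 a ha.2 ha.1
  rw [Finset.sum_const, nsmul_one, ZMod.natCast_eq_zero_iff_even] at hsum
  have h5 := Finset.card_erase_add_one (s := s.toFinset) (a := v) (by simpa using hv)
  rw [Set.ncard_eq_toFinset_card', ← h5]
  exact hsum.add_one
end

section
/- Let B denote the family of all connected graphs in which every block is a complete graph of odd order. If G is a connected graph of odd order and G belongs to B, then G contains no proper 1-perfect forest. -/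
open SimpleGraph

def Bico {V : Type*} (G : SimpleGraph V) (s : Set V) : Prop :=
  (G.induce s).Connected ∧ ∀ x ∈ s, (G.induce (s \ {x})).Preconnected

theorem precon_of_hub {V : Type*} {G : SimpleGraph V} {s : Set V} (c : V)
    (h : ∀ z ∈ s, ∃ p : G.Walk z c, ∀ y ∈ p.support, y ∈ s) : (G.induce s).Preconnected := by
  rintro ⟨a, ha⟩ ⟨b, hb⟩
  obtain ⟨p, hp⟩ := h a ha
  obtain ⟨q, hq⟩ := h b hb
  have hr : ∀ y ∈ (p.append q.reverse).support, y ∈ s := by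
    intro y hy
    rw [Walk.mem_support_append_iff] at hy
    rcases hy with hy | hy
    · exact hp y hy
    · exact hq y (by simpa using hy)
  exact ⟨(p.append q.reverse).induce s hr⟩

theorem hub_walk {V : Type*} {G : SimpleGraph V} {s : Set V} {z c : V} (hz : z ∈ s) (hc : c ∈ s)
    (h : z = c ∨ G.Adj z c) : ∃ p : G.Walk z c, ∀ y ∈ p.support, y ∈ s := by
  rcases h with rfl | h
  · exact ⟨Walk.nil, by simpa using hz⟩
  · exact ⟨h.toWalk, by simp [hz, hc]⟩

theorem bico_of_hubs {V : Type*} {G : SimpleGraph V} {s : Set V} {u v : V} (hu : u ∈ s)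
    (hv : v ∈ s) (huv : u ≠ v) (h1 : ∀ z ∈ s, z = u ∨ G.Adj z u)
    (h2 : ∀ z ∈ s, z = v ∨ G.Adj z v) : Bico G s := by
  have : Nonempty s := ⟨⟨u, hu⟩⟩
  refine ⟨⟨precon_of_hub u fun z hz => hub_walk hz hu (h1 z hz)⟩, fun x hx => ?_⟩
  by_cases hxu : u = x
  · subst hxu
    exact precon_of_hub v fun z hz => hub_walk hz ⟨hv, fun h => huv h.symm⟩ (h2 z hz.1)
  · exact precon_of_hub u fun z hz => hub_walk hz ⟨hu, hxu⟩ (h1 z hz.1)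

theorem bico_cycle {V : Type*} {G : SimpleGraph V} {x u v : V} (p : G.Walk u v) (hp : p.IsPath)
    (hx : x ∉ p.support) (hu : G.Adj x u) (hv : G.Adj x v) :
    Bico G (insert x {z | z ∈ p.support}) := by
  classical
  set s : Set V := insert x {z | z ∈ p.support} with hs
  have : Nonempty s := ⟨⟨x, by simp [hs]⟩⟩
  have key1 : ∀ z ∈ p.support, ∀ y, z ≠ y → y ≠ x →
      ∃ q : G.Walk z x, ∀ t ∈ q.support, t ∈ s \ {y} := by
    intro z hz y hzy hyx
    by_cases hy : y ∈ (p.takeUntil z hz).support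
    · have hy' : y ∉ (p.dropUntil z hz).support := by
        intro hy'
        have hn := hp.support_nodup
        rw [← p.take_spec hz, Walk.support_append, List.nodup_append] at hn
        have h3 : y ∈ (p.dropUntil z hz).support.tail := by
          rw [← Walk.cons_tail_support] at hy'
          exact (List.mem_cons.1 hy').resolve_left (Ne.symm hzy)
        exact hn.2.2 y hy y h3 rfl
      refine ⟨(p.dropUntil z hz).concat hv.symm, fun t ht => ?_⟩
      rw [Walk.support_concat, List.mem_append, List.mem_singleton] at ht
      rcases ht with ht | rfl
      · exact ⟨Or.inr (p.support_dropUntil_subset hz ht), fun h => hy' (h ▸ ht)⟩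
      · exact ⟨Or.inl rfl, fun h => hyx h.symm⟩
    · refine ⟨(p.takeUntil z hz).reverse.concat hu.symm, fun t ht => ?_⟩
      rw [Walk.support_concat, List.mem_append, List.mem_singleton] at ht
      rcases ht with ht | rfl
      · rw [Walk.support_reverse, List.mem_reverse] at ht
        exact ⟨Or.inr (p.support_takeUntil_subset hz ht), fun h => hy (h ▸ ht)⟩
      · exact ⟨Or.inl rfl, fun h => hyx h.symm⟩
  have key2 : ∀ z ∈ p.support, ∃ q : G.Walk z u, ∀ t ∈ q.support, t ∈ s \ {x} := by
    intro z hz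
    refine ⟨(p.takeUntil z hz).reverse, fun t ht => ?_⟩
    rw [Walk.support_reverse, List.mem_reverse] at ht
    have := p.support_takeUntil_subset hz ht
    exact ⟨Or.inr this, fun h => hx (h ▸ this)⟩
  refine ⟨⟨precon_of_hub x ?_⟩, fun y hy => ?_⟩
  · rintro z (rfl | hz)
    · exact ⟨Walk.nil, by simp [hs]⟩
    · obtain ⟨q, hq⟩ := key2 z hz
      refine ⟨q.concat hu.symm, fun t ht => ?_⟩
      rw [Walk.support_concat, List.mem_append, List.mem_singleton] at ht
      rcases ht with ht | rfl
      · exact (hq t ht).1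
      · exact Or.inl rfl
  · by_cases hyx : y = x
    · subst hyx
      refine precon_of_hub u ?_
      rintro z ⟨rfl | hz, hzy⟩
      · exact absurd rfl hzy
      · exact key2 z hz
    · refine precon_of_hub x ?_
      rintro z ⟨rfl | hz, hzy⟩
      · exact ⟨Walk.nil, by simpa [hs] using fun h => hyx h.symm⟩
      · exact key1 z hz y hzy hyx

theorem exists_block {V : Type*} [Finite V] {G : SimpleGraph V} {s : Set V} (h : Bico G s) :
    ∃ t, s ⊆ t ∧ IsGraphBlock G t := by
  obtain ⟨t, hst, ht⟩ := Set.Finite.exists_le_maximal (Set.toFinite {t | Bico G t}) h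
  exact ⟨t, hst, ht.prop.1, ht.prop.2, fun r hr h1 h2 =>
    (ht.eq_of_le (show Bico G r from ⟨h1, h2⟩) hr).symm⟩

theorem even_of_matched {V : Type*} [Finite V] {G F : SimpleGraph V}
    (hF : IsSemiperfectForest G F) {B : Set V} (hB : ∀ x ∈ B, ∀ y ∈ B, x ≠ y → G.Adj x y)
    (h : ∀ x ∈ B, ∃ y ∈ B, F.Adj x y) : Even B.ncard := by
  classical
  have := Fintype.ofFinite V
  let M : F.Subgraph :=
    { verts := B
      Adj := fun a b => F.Adj a b ∧ a ∈ B ∧ b ∈ B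
      adj_sub := fun h => h.1
      edge_vert := fun h => h.2.1
      symm := ⟨fun a b h => ⟨h.1.symm, h.2.2, h.2.1⟩⟩ }
  have hM : M.IsMatching := by
    intro x hx
    obtain ⟨y, hy, hxy⟩ := h x hx
    refine ⟨y, ⟨hxy, hx, hy⟩, ?_⟩
    rintro z ⟨hxz, -, hz⟩
    by_contra hzy
    have h1 : F.Adj z y := hF.2.2 z y (hxz.symm.reachable.trans hxy.reachable) (hB z hz y hy hzy)
    have h3 : (Walk.cons hxz (Walk.cons h1 (Walk.cons hxy.symm Walk.nil))).IsCycle := by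
      simp [Walk.isCycle_def, Walk.isTrail_def, hxz.ne, hxy.ne, h1.ne, hxz.ne', hxy.ne', h1.ne']
    exact hF.2.1 _ h3
  have := hM.even_card
  rwa [← Set.ncard_eq_toFinset_card'] at this

theorem main_step {V : Type*} [Finite V] {G F : SimpleGraph V} (hB : InFamilyB G)
    (hF : IsSemiperfectForest G F) (hpos : ∀ v, ∃ w, F.Adj v w) (A : Set V) :
    ∀ v, v ∉ A → (∀ w, F.Adj v w → w ∉ A) → (∀ a ∈ A, ∀ b, G.Adj a b → b ≠ v → b ∈ A) →
      (∀ a ∈ A, ∃ p : G.Walk v a, ∀ z ∈ p.support, z = v ∨ z ∈ A) → False := by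
  classical
  induction A using WellFoundedGT.induction with
  | ind A ih =>
  intro v hv hFA hcl hwalk
  obtain ⟨w, hw⟩ := hpos v
  have hGw := hF.1 hw
  obtain ⟨B, hsB, hBB⟩ := exists_block (G := G) (s := {v, w})
    (bico_of_hubs (u := v) (v := w) (by simp) (by simp) hGw.ne
      (by rintro z (rfl | rfl); exacts [Or.inl rfl, Or.inr hGw.symm])
      (by rintro z (rfl | rfl); exacts [Or.inr hGw, Or.inl rfl]))
  have hvB : v ∈ B := hsB (by simp)
  have hwB : w ∈ B := hsB (by simp)
  obtain ⟨hcq, hodd⟩ := hB.2 B hBB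
  have hx : ∃ x ∈ B, ∀ y ∈ B, ¬ F.Adj x y := by
    by_contra hcon
    push Not at hcon
    exact (Nat.not_even_iff_odd.2 hodd) (even_of_matched hF hcq hcon)
  obtain ⟨x, hxB, hxF⟩ := hx
  have hxv : x ≠ v := fun h => hxF w hwB (h ▸ hw)
  have hxw : x ≠ w := fun h => hxF v hvB (h ▸ hw.symm)
  have hxA : x ∉ A := fun h => hFA w hw (hcl x h w (hcq x hxB w hwB hxw) hGw.ne')
  have hGxv : G.Adj x v := hcq x hxB v hvB hxv
  have hlt : A < {z | ∃ p : G.Walk v z, x ∉ p.support} := by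
    refine Set.ssubset_iff_of_subset ?_ |>.2 ⟨v, ⟨Walk.nil, by simpa using hxv⟩, hv⟩
    intro a ha
    obtain ⟨p, hp⟩ := hwalk a ha
    exact ⟨p, fun h => (hp x h).elim hxv hxA⟩
  refine ih _ hlt x ?_ ?_ ?_ ?_
  · rintro ⟨p, hp⟩
    exact hp p.end_mem_support
  · rintro y hy ⟨p, hp⟩
    have hyB : y ∉ B := fun h => hxF y h hy
    have hvy : v ≠ y := fun h => hyB (h ▸ hvB)
    have hGxy := hF.1 hy
    obtain ⟨C, hsC, hC⟩ := exists_block (bico_cycle p.bypass p.bypass_isPath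
      (fun h => hp (p.support_bypass_subset h)) hGxv hGxy)
    have hGvy : G.Adj v y := (hB.2 C hC).1 v (hsC (Or.inr (Walk.start_mem_support _))) y
      (hsC (Or.inr (Walk.end_mem_support _))) hvy
    have hbi : Bico G (insert y B) := by
      refine bico_of_hubs (u := x) (v := v) (Or.inr hxB) (Or.inr hvB) hxv ?_ ?_
      · rintro z (rfl | hz)
        · exact Or.inr hGxy.symm
        · exact or_iff_not_imp_left.2 fun h => hcq z hz x hxB h
      · rintro z (rfl | hz)
        · exact Or.inr hGvy.symm
        · exact or_iff_not_imp_left.2 fun h => hcq z hz v hvB h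
    have := hBB.2.2 _ (Set.subset_insert y B) hbi.1 hbi.2
    exact hyB (this ▸ Set.mem_insert y B)
  · rintro a ⟨p, hp⟩ b hab hbx
    refine ⟨p.concat hab, ?_⟩
    rw [Walk.support_concat, List.mem_append, List.mem_singleton]
    rintro (h | h)
    exacts [hp h, hbx h.symm]
  · rintro a ⟨p, hp⟩
    refine ⟨Walk.cons hGxv p, fun z hz => ?_⟩
    rw [Walk.support_cons, List.mem_cons] at hz
    refine hz.imp id fun hz => ⟨p.takeUntil z hz, fun h => hp (p.support_takeUntil_subset hz h)⟩

/-- If `G` is a connected graph of odd order and `G` belongs to the family `B`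
(of connected graphs in which every block is a complete graph of odd order),
then `G` contains no proper 1-perfect forest. -/
theorem no_proper_one_perfect_forest_of_in_B {V : Type*} [Fintype V]
    (G : SimpleGraph V) (hG : G.Connected) (hodd : Odd (Fintype.card V))
    (hB : InFamilyB G) :
    ¬ ∃ F : SimpleGraph V, IsSemiperfectForest G F ∧
        (∃! v : V, Even (fdeg F v)) ∧ ∀ v : V, 0 < fdeg F v := by
  rintro ⟨F, hF, -, hpos⟩
  obtain ⟨v⟩ := hG.nonempty
  refine main_step hB hF (fun v => ?_) ∅ v (by simp) (by simp) (by simp) (by simp)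
  exact Set.nonempty_of_ncard_ne_zero (hpos v).ne'
end

section
/- Let G be a connected graph of even order and let xy be an edge of G such that G − {x,y} is connected. If G − x belongs to B and G − y belongs to B, where B is the family of all connected graphs in which every block is a complete graph of odd order, then the closed neighbourhoods of x and y in G coincide: N_G[x] = N_G[y]. -/
open SimpleGraph

def TCset {V : Type*} (G : SimpleGraph V) (s : Set V) : Prop :=
  (G.induce s).Connected ∧ ∀ x ∈ s, (G.induce (s \ {x})).Preconnected

def BProp {V : Type*} (G : SimpleGraph V) (S : Set V) : Prop :=
  ∀ t ⊆ S, TCset G t → ∃ t', t ⊆ t' ∧ t' ⊆ S ∧ G.IsClique t' ∧ Odd t'.ncard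

noncomputable def indIso {V : Type*} (G : SimpleGraph V) (S : Set V) (t : Set S) :
    (G.induce S).induce t ≃g G.induce (Subtype.val '' t) where
  toEquiv := Equiv.Set.image Subtype.val t Subtype.val_injective
  map_rel_iff' := by intro a b; rfl

lemma TC_ind {V : Type*} (G : SimpleGraph V) (S : Set V) (t : Set S) :
    TCset (G.induce S) t ↔ TCset G (Subtype.val '' t) := by
  unfold TCset
  rw [(indIso G S t).connected_iff]
  have : ∀ a : S, Subtype.val '' (t \ {a}) = Subtype.val '' t \ {a.1} := by
    intro a
    rw [Set.image_sdiff Subtype.val_injective, Set.image_singleton]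
  constructor
  · rintro ⟨h, h2⟩
    refine ⟨h, ?_⟩
    rintro _ ⟨a, ha, rfl⟩
    rw [← this]
    exact (indIso G S _).preconnected_iff.1 (h2 a ha)
  · rintro ⟨h, h2⟩
    refine ⟨h, fun a ha => ?_⟩
    rw [(indIso G S _).preconnected_iff, this]
    exact h2 _ ⟨a, ha, rfl⟩

lemma bprop_of {V : Type*} [Finite V] (G : SimpleGraph V) (S : Set V)
    (h : InFamilyB (G.induce S)) : BProp G S := by
  intro t htS ht
  have e : Subtype.val '' (Subtype.val ⁻¹' t : Set S) = t := by
    rw [Subtype.image_preimage_coe, Set.inter_eq_right.2 htS]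
  have h1 : TCset (G.induce S) (Subtype.val ⁻¹' t) := by rw [TC_ind, e]; exact ht
  obtain ⟨m, hm, hmax⟩ := Finite.exists_le_maximal (p := TCset (G.induce S)) h1
  have hb : IsGraphBlock (G.induce S) m :=
    ⟨hmax.1.1, hmax.1.2, fun t' h h1 h2 => (hmax.2 ⟨h1, h2⟩ h).antisymm h⟩
  obtain ⟨hc, ho⟩ := h.2 m hb
  refine ⟨Subtype.val '' m, ?_, ?_, ?_, ?_⟩
  · rw [← e]; exact Set.image_mono hm
  · rintro _ ⟨a, _, rfl⟩; exact a.2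
  · rintro _ ⟨a, ha, rfl⟩ _ ⟨b, hb, rfl⟩ hab
    exact hc a ha b hb (fun h => hab (by rw [h]))
  · rwa [Set.ncard_image_of_injective _ Subtype.val_injective]

lemma hub {V : Type*} (G : SimpleGraph V) (s : Set V) (c : V) (hc : c ∈ s)
    (h : ∀ v ∈ s, v ≠ c → G.Adj c v) : (G.induce s).Connected := by
  apply G.induce_connected_of_patches c hc
  intro v hv
  by_cases hvc : v = c
  · subst hvc; exact ⟨s, subset_rfl, hc, hc, Reachable.refl _⟩
  · exact ⟨s, subset_rfl, hc, hv, Adj.reachable (h v hv hvc)⟩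

lemma two_cliques {V : Type*} (G : SimpleGraph V) (A B : Set V) (hA : G.IsClique A)
    (hB : G.IsClique B) (a b : V) (hab : a ≠ b) (ha : a ∈ A ∩ B) (hb : b ∈ A ∩ B) :
    TCset G (A ∪ B) := by
  have key : ∀ c ∈ A ∩ B, ∀ v ∈ A ∪ B, v ≠ c → G.Adj c v := by
    rintro c ⟨h1, h2⟩ v (hv | hv) hne
    · exact hA h1 hv hne.symm
    · exact hB h2 hv hne.symm
  refine ⟨hub G _ a (Or.inl ha.1) (key a ha), fun v hv => ?_⟩
  by_cases hva : v = a
  · subst hva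
    exact (hub G ((A ∪ B) \ {v}) b ⟨Or.inl hb.1, hab.symm⟩ fun w hw => key b hb w hw.1).preconnected
  · exact (hub G ((A ∪ B) \ {v}) a ⟨Or.inl ha.1, fun h => hva h.symm⟩ fun w hw => key a ha w hw.1).preconnected

lemma clique_TC {V : Type*} (G : SimpleGraph V) (A : Set V) (hA : G.IsClique A)
    (hne : A.Nonempty) : TCset G A := by
  obtain ⟨a, ha⟩ := hne
  refine ⟨hub G _ a ha fun v hv h => hA ha hv h.symm, fun v hv => ?_⟩
  rintro ⟨p, hp⟩ ⟨q, hq⟩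
  exact (hub G _ p hp fun v hv h => hA hp.1 hv.1 h.symm).preconnected _ _

lemma path_split {V : Type*} [DecidableEq V] (G : SimpleGraph V) {w z : V} (p : G.Walk w z)
    (hp : p.IsPath)
    (u v : V) (hu : u ∈ p.support) (huv : u ≠ v) :
    v ∉ (p.takeUntil u hu).support ∨ v ∉ (p.dropUntil u hu).support := by
  by_contra! hcon
  obtain ⟨h1, h2⟩ := hcon
  have h3 := hp.support_nodup
  rw [← p.take_spec hu, Walk.support_append, List.nodup_append] at h3
  rw [Walk.mem_support_iff] at h2
  rcases h2 with h2 | h2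
  · exact huv h2.symm
  · exact h3.2.2 v h1 v h2 rfl

lemma cycle_TC {V : Type*} (G : SimpleGraph V) {w z y : V} (p : G.Walk w z) (hp : p.IsPath)
    (hy : y ∉ p.support) (hw : G.Adj y w) (hz : G.Adj y z) :
    TCset G (insert y {v | v ∈ p.support}) := by
  classical
  have ins : ∀ {a b : V} (q : G.Walk a b), ∀ c ∈ q.support, G.Adj y c →
      (G.induce (insert y {v | v ∈ q.support})).Connected := by
    intro a b q c hc hyc
    have h1 := induce_union_connected (G := G) (s := {y, c}) (t := {v | v ∈ q.support})
      (induce_pair_connected_of_adj hyc).preconnected q.connected_induce_support.preconnected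
      ⟨c, by simp, hc⟩
    convert h1 using 2
    all_goals
      ext v
      simp only [Set.mem_insert_iff, Set.mem_ofPred_eq, Set.mem_union, Set.mem_singleton_iff]
      constructor
      · tauto
      · rintro ((h | rfl) | h)
        · exact Or.inl h
        · exact Or.inr hc
        · exact Or.inr h
  refine ⟨ins p w p.start_mem_support hw, fun v hv => ?_⟩
  by_cases hvy : v = y
  · subst hvy
    rw [Set.insert_sdiff_self_of_notMem (by exact hy)]
    exact p.connected_induce_support.preconnected
  · have : (G.induce (insert y {v | v ∈ p.support} \ {v})).Connected := by
      have hys : y ∈ insert y {v | v ∈ p.support} \ {v} := ⟨Or.inl rfl, fun h => hvy h.symm⟩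
      apply G.induce_connected_of_patches y hys
      rintro u ⟨hu, huv⟩
      rcases hu with rfl | hu
      · exact ⟨_, subset_rfl, ⟨Or.inl rfl, fun h => hvy h.symm⟩,
          ⟨Or.inl rfl, fun h => hvy h.symm⟩, Reachable.refl _⟩
      · rcases path_split G p hp u v hu huv with h | h
        · refine ⟨insert y {v | v ∈ (p.takeUntil u hu).support}, ?_, Or.inl rfl,
            Or.inr (Walk.end_mem_support _), (ins _ w (Walk.start_mem_support _) hw).preconnected _ _⟩
          rintro a (rfl | ha)
          · exact ⟨Or.inl rfl, fun h => hvy h.symm⟩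
          · exact ⟨Or.inr (p.support_takeUntil_subset_support hu ha), by rintro rfl; exact h ha⟩
        · refine ⟨insert y {v | v ∈ (p.dropUntil u hu).support}, ?_, Or.inl rfl,
            Or.inr (Walk.start_mem_support _), (ins _ z (Walk.end_mem_support _) hz).preconnected _ _⟩
          rintro a (rfl | ha)
          · exact ⟨Or.inl rfl, fun h => hvy h.symm⟩
          · exact ⟨Or.inr (p.support_dropUntil_subset_support hu ha), by rintro rfl; exact h ha⟩
    exact this.preconnected

lemma half {V : Type*} [Finite V] (G : SimpleGraph V) (x y : V) (hxy : x ≠ y)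
    (hconn : (G.induce (({x, y} : Set V)ᶜ)).Connected)
    (hc : (G.induce (({x} : Set V)ᶜ)).Connected) (hB : BProp G {x}ᶜ) :
    ∃ K : Set V, (∀ v, v ∈ K ↔ G.Adj y v ∧ v ≠ x) ∧ K.Nonempty ∧
      G.IsClique (insert y K) ∧ Odd (insert y K).ncard := by
  refine ⟨{v | G.Adj y v ∧ v ≠ x}, fun v => Iff.rfl, ?_, ?_⟩
  · obtain ⟨⟨h, hh⟩⟩ := hconn.nonempty
    simp only [Set.mem_compl_iff, Set.mem_insert_iff, Set.mem_singleton_iff, not_or] at hh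
    haveI : Nontrivial (({x} : Set V)ᶜ : Set V) :=
      ⟨⟨y, hxy.symm⟩, ⟨h, hh.1⟩, fun e => hh.2 (congrArg Subtype.val e).symm⟩
    obtain ⟨w, hw⟩ := hc.preconnected.exists_adj_of_nontrivial ⟨y, hxy.symm⟩
    exact ⟨w.1, hw, w.2⟩
  have hcl : G.IsClique (insert y {v | G.Adj y v ∧ v ≠ x}) := by
    rw [isClique_insert]
    refine ⟨?_, fun b hb _ => hb.1⟩
    rintro w ⟨hw, hwx⟩ z ⟨hz, hzx⟩ hwz
    obtain ⟨p, hp⟩ := hconn.preconnected.exists_isPath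
      ⟨w, by simp [hwx, hw.ne']⟩ ⟨z, by simp [hzx, hz.ne']⟩
    let f := (Embedding.induce (G := G) (({x, y} : Set V)ᶜ)).toHom
    have hsup : ∀ v ∈ (p.map f).support, v ≠ x ∧ v ≠ y := by
      intro v hv
      rw [Walk.support_map, List.mem_map] at hv
      obtain ⟨a, _, rfl⟩ := hv
      have h2 : ¬ (a.1 = x ∨ a.1 = y) := a.2
      exact not_or.1 h2
    have hTC := cycle_TC G (p.map f) (Walk.map_isPath_of_injective Subtype.val_injective hp)
      (fun h => (hsup y h).2 rfl) hw hz
    obtain ⟨t, ht, -, htc, -⟩ := hB _ (by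
      rintro v (rfl | hv)
      · exact hxy.symm
      · exact (hsup v hv).1) hTC
    exact htc (ht (Or.inr (Walk.start_mem_support _))) (ht (Or.inr (Walk.end_mem_support _))) hwz
  refine ⟨hcl, ?_⟩
  obtain ⟨t, ht, htx, htc, hodd⟩ := hB _ (by
      rintro v (rfl | hv)
      · exact hxy.symm
      · exact hv.2) (clique_TC G _ hcl ⟨y, Or.inl rfl⟩)
  have : insert y {v | G.Adj y v ∧ v ≠ x} = t := by
    refine ht.antisymm fun v hv => ?_
    by_cases hvy : v = y
    · exact Or.inl hvy
    · exact Or.inr ⟨htc (ht (Or.inl rfl)) hv (Ne.symm hvy), htx hv⟩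
  rwa [this]

lemma incl {V : Type*} [Finite V] (G : SimpleGraph V) (x y : V) (hxy : x ≠ y)
    (hconn : (G.induce (({x, y} : Set V)ᶜ)).Connected)
    (hc : (G.induce (({x} : Set V)ᶜ)).Connected) (hB : BProp G {x}ᶜ) (hB' : BProp G {y}ᶜ) (v : V)
    (hv : G.Adj y v) (hvx : v ≠ x) : G.Adj x v := by
  obtain ⟨K, hK, hne, hcl, hodd⟩ := half G x y hxy hconn hc hB
  have hyK : y ∉ K := fun h => G.irrefl ((hK y).1 h).1
  rw [Set.ncard_insert_of_notMem hyK] at hodd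
  have hKcl : G.IsClique K := hcl.subset (Set.subset_insert _ _)
  obtain ⟨t, ht, hty, htc, hto⟩ := hB' K (fun v h e => hyK (by rw [← Set.mem_singleton_iff.1 e]; exact h))
    (clique_TC G K hKcl hne)
  have hvK : v ∈ K := (hK v).2 ⟨hv, hvx⟩
  by_cases hxt : x ∈ t
  · exact htc hxt (ht hvK) hvx.symm
  exfalso
  have hEven : Even K.ncard := by
    rcases Nat.even_or_odd K.ncard with h | h
    · exact h
    · exact absurd hodd (by rw [Nat.not_odd_iff_even]; exact h.add_one)
  have hlt : 1 < K.ncard := by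
    have : 0 < K.ncard := (Set.ncard_pos).2 hne
    obtain ⟨k, hk⟩ := hEven
    omega
  obtain ⟨a, ha, b, hb, hab⟩ := (Set.one_lt_ncard).1 hlt
  obtain ⟨T, hT, hTx, hTc, -⟩ := hB (insert y K ∪ t) (by
      rintro u ((rfl | hu) | hu)
      · exact hxy.symm
      · exact ((hK u).1 hu).2
      · rintro rfl; exact hxt hu)
    (two_cliques G _ _ hcl htc a b hab ⟨Or.inr ha, ht ha⟩ ⟨Or.inr hb, ht hb⟩)
  have : t = K := by
    refine Set.Subset.antisymm (fun u hu => (hK u).2 ⟨?_, ?_⟩) ht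
    · exact hTc (hT (Or.inl (Or.inl rfl))) (hT (Or.inr hu)) (fun e => hty hu e.symm)
    · rintro rfl; exact hxt hu
  rw [this] at hto
  exact (Nat.not_odd_iff_even.2 hEven) hto

/-- Let `G` be a connected graph of even order and let `xy` be an edge of `G` such that
`G − {x,y}` is connected. If `G − x ∈ B` and `G − y ∈ B`, then the closed neighbourhoods
of `x` and `y` in `G` coincide: `N_G[x] = N_G[y]`. -/
theorem closed_nbhds_eq_of_in_B {V : Type*} [Fintype V]
    (G : SimpleGraph V) (hG : G.Connected) (heven : Even (Fintype.card V))
    (x y : V) (hxy : G.Adj x y)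
    (hconn : (G.induce (({x, y} : Set V)ᶜ)).Connected)
    (hx : InFamilyB (G.induce (({x} : Set V)ᶜ)))
    (hy : InFamilyB (G.induce (({y} : Set V)ᶜ))) :
    insert x (G.neighborSet x) = insert y (G.neighborSet y) := by
  have hB := bprop_of G _ hx
  have hB' := bprop_of G _ hy
  have hconn' : (G.induce (({y, x} : Set V)ᶜ)).Connected := by
    rw [Set.pair_comm]; exact hconn
  ext v
  simp only [Set.mem_insert_iff, mem_neighborSet]
  by_cases h1 : v = x
  · subst h1; simp [hxy.symm]
  by_cases h2 : v = y
  · subst h2; simp [hxy]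
  simp only [h1, h2, false_or]
  exact ⟨fun h => incl G y x hxy.ne' hconn' hy.1 hB' hB v h h2,
    fun h => incl G x y hxy.ne hconn hx.1 hB hB' v h h1⟩
end

section
/- A connected graph G of order n has a 0-perfect forest with at least n − 1 edges if and only if G is a tree in which every vertex has odd degree. -/
open SimpleGraph

/-- A connected graph `G` of order `n` has a 0-perfect forest with at least `n − 1` edges
if and only if `G` is a tree in which every vertex has odd degree. -/
theorem zero_perfect_forest_card_sub_one_iff {V : Type*} [Fintype V]
    (G : SimpleGraph V) (hG : G.Connected) :
    (∃ F : SimpleGraph V, IsSemiperfectForest G F ∧ (∀ v : V, Odd (fdeg F v)) ∧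
        Fintype.card V - 1 ≤ F.edgeSet.ncard) ↔
      (G.IsTree ∧ ∀ v : V, Odd (fdeg G v)) := by
  constructor
  · rintro ⟨F, ⟨hle, hac, hind⟩, hodd, hcard⟩
    obtain ⟨T, hFT, hTG, hT⟩ := hG.exists_isTree_le_of_le_of_isAcyclic hle hac
    have h1 := (isTree_iff_connected_and_card.mp hT).2
    rw [Nat.card_eq_fintype_card (α := V), Nat.card_coe_set_eq] at h1
    have h2 : F.edgeSet = T.edgeSet :=
      Set.eq_of_subset_of_ncard_le (edgeSet_mono hFT) (by omega) (Set.toFinite _)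
    have h3 : F = T := edgeSet_injective h2
    subst h3
    have h4 : F = G :=
      le_antisymm hle (fun x y h => hind x y (hT.connected.preconnected x y) h)
    subst h4
    exact ⟨hT, hodd⟩
  · rintro ⟨hT, hodd⟩
    refine ⟨G, ⟨le_rfl, hT.isAcyclic, fun _ _ _ h => h⟩, hodd, ?_⟩
    have h1 := (isTree_iff_connected_and_card.mp hT).2
    rw [Nat.card_eq_fintype_card (α := V), Nat.card_coe_set_eq] at h1
    omega
end

section
/- Let G be a graph of order n. Then every 0-perfect forest of G has at least n/2 edges, and G has a 0-perfect forest with exactly n/2 edges if and only if G has a perfect matching. -/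
open SimpleGraph

theorem aux_handshake {V : Type*} [Fintype V] (F : SimpleGraph V) :
    ∑ v : V, fdeg F v = 2 * F.edgeSet.ncard := by
  classical
  have h := F.sum_degrees_eq_twice_card_edges
  have h1 : F.edgeSet.ncard = F.edgeFinset.card := by
    rw [← SimpleGraph.coe_edgeFinset, Set.ncard_coe_finset]
  have h2 : ∀ v, fdeg F v = F.degree v := by
    intro v
    unfold fdeg
    rw [← SimpleGraph.card_neighborFinset_eq_degree, ← Set.ncard_coe_finset,
      SimpleGraph.coe_neighborFinset]
  rw [h1, ← h]
  exact Finset.sum_congr rfl (fun v _ => h2 v)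

theorem aux_fdeg_one {V : Type*} (F : SimpleGraph V) (v : V) :
    fdeg F v = 1 ↔ ∃! w, F.Adj v w := by
  unfold fdeg
  rw [Set.ncard_eq_one]
  constructor
  · rintro ⟨a, ha⟩
    have h : ∀ w, F.Adj v w ↔ w = a := fun w => by
      rw [← SimpleGraph.mem_neighborSet, ha, Set.mem_singleton_iff]
    exact ⟨a, (h a).2 rfl, fun w hw => (h w).1 hw⟩
  · rintro ⟨a, ha, hu⟩
    refine ⟨a, Set.ext fun w => ?_⟩
    rw [SimpleGraph.mem_neighborSet, Set.mem_singleton_iff]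
    exact ⟨hu w, fun h => h ▸ ha⟩

/-- Let `G` be a graph of order `n`. Then every 0-perfect forest of `G` has at least
`n/2` edges (stated as `n ≤ 2·|E(F)|`), and `G` has a 0-perfect forest with exactly
`n/2` edges (stated as `2·|E(F)| = n`) if and only if `G` has a perfect matching. -/
theorem zero_perfect_forest_min_edges_and_perfect_matching {V : Type*} [Fintype V]
    (G : SimpleGraph V) :
    (∀ F : SimpleGraph V, IsSemiperfectForest G F → (∀ v : V, Odd (fdeg F v)) →
        Fintype.card V ≤ 2 * F.edgeSet.ncard) ∧
    ((∃ F : SimpleGraph V, IsSemiperfectForest G F ∧ (∀ v : V, Odd (fdeg F v)) ∧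
        2 * F.edgeSet.ncard = Fintype.card V) ↔
      ∃ M : G.Subgraph, M.IsPerfectMatching) := by
  have hone : ∀ F : SimpleGraph V, (∀ v : V, Odd (fdeg F v)) → ∀ v ∈ Finset.univ, 1 ≤ fdeg F v :=
    fun F h v _ => (h v).pos
  refine ⟨?_, ?_, ?_⟩
  · intro F _ hodd
    have h := Finset.sum_le_sum (hone F hodd)
    rw [aux_handshake] at h
    simpa using h
  · rintro ⟨F, hF, hodd, hcard⟩
    have h : ∑ v : V, 1 = ∑ v : V, fdeg F v := by
      rw [aux_handshake, hcard]; simp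
    have h1 := (Finset.sum_eq_sum_iff_of_le (hone F hodd)).1 h
    refine ⟨SimpleGraph.toSubgraph F hF.1, ?_⟩
    rw [Subgraph.isPerfectMatching_iff]
    intro v
    exact (aux_fdeg_one F v).1 (h1 v (Finset.mem_univ v)).symm
  · rintro ⟨M, hM⟩
    rw [Subgraph.isPerfectMatching_iff] at hM
    have hu : ∀ v, ∃! w, M.spanningCoe.Adj v w := hM
    have hd : ∀ v, fdeg M.spanningCoe v = 1 := fun v => (aux_fdeg_one _ v).2 (hu v)
    refine ⟨M.spanningCoe, ⟨M.spanningCoe_le, ?_, ?_⟩, ?_, ?_⟩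
    · intro v c hc
      exact hc.snd_ne_penultimate
        ((hu v).unique (c.adj_snd hc.not_nil) (c.adj_penultimate hc.not_nil).symm)
    · intro x y hr hxy
      have key : ∀ y, M.spanningCoe.Reachable x y → y = x ∨ M.spanningCoe.Adj x y := by
        intro z hz
        rw [SimpleGraph.reachable_iff_reflTransGen] at hz
        induction hz with
        | refl => exact Or.inl rfl
        | @tail b c _ hbc ih =>
          rcases ih with h | h
          · exact Or.inr (h ▸ hbc)
          · exact Or.inl ((hu b).unique hbc h.symm)
      rcases key y hr with h | h
      · exact absurd h hxy.ne'
      · exact h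
    · intro v; rw [hd v]; exact odd_one
    · rw [← aux_handshake]; simp [hd]
end

section
/- Let G be a connected graph, let e = uv be an edge of G, and let f : V(G) → {0,1} be a function with ∑_{z ∈ V(G)} f(z) even. Suppose x is a cut-vertex of G, let C be the connected component of G − x containing u and v (there is exactly one such component since uv ∈ E(G)), let G' be the subgraph of G induced by V(C) ∪ {x}, and let f' : V(G') → {0,1} satisfy f'(w) = f(w) for all w ∈ V(C) with f'(x) ∈ {0,1} chosen so that ∑_{z ∈ V(G')} f'(z) is even. Then G has an f-parity perfect forest not containing the edge e if and only if G' has an f'-parity perfect forest not containing the edge e. -/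
open SimpleGraph

open scoped Classical

theorem fdeg_add {V : Type*} [Fintype V] (F : SimpleGraph V) (a b : V) (hab : a ≠ b)
    (h : ¬ F.Adj a b) (w : V) :
    fdeg (F ⊔ edge a b) w = fdeg F w + ((if w = a then 1 else 0) + (if w = b then 1 else 0)) := by
  unfold fdeg
  have h' : ¬ F.Adj b a := fun q => h q.symm
  by_cases h1 : w = a
  · subst h1
    have : (F ⊔ edge w b).neighborSet w = insert b (F.neighborSet w) := by
      ext y; simp [edge_adj, mem_neighborSet]; grind
    rw [this, Set.ncard_insert_of_notMem (by simpa using h)]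
    simp [hab]
  by_cases h2 : w = b
  · subst h2
    have : (F ⊔ edge a w).neighborSet w = insert a (F.neighborSet w) := by
      ext y; simp [edge_adj, mem_neighborSet]; grind
    rw [this, Set.ncard_insert_of_notMem (by simpa using h')]
    simp [h1]
  have : (F ⊔ edge a b).neighborSet w = (F.neighborSet w) := by
      ext y; simp [edge_adj, mem_neighborSet]; grind
  simp [this, h1, h2]

theorem ecard_add {V : Type*} [Fintype V] (F : SimpleGraph V) (a b : V) (hab : a ≠ b)
    (h : ¬ F.Adj a b) : (F ⊔ edge a b).edgeSet.ncard = F.edgeSet.ncard + 1 := by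
  have : (F ⊔ edge a b).edgeSet = insert s(a,b) F.edgeSet := by
    ext y; induction y with | _ c d => simp [edge_adj]; grind
  rw [this, Set.ncard_insert_of_notMem (by simpa using h)]

theorem del_add {V : Type*} (F : SimpleGraph V) (a b : V) (h : F.Adj a b) :
    (F.deleteEdges {s(a,b)}) ⊔ edge a b = F := by
  ext c d
  have := h.symm
  have := h.ne
  simp [edge_adj]; grind

theorem toggle {V : Type*} [Fintype V] (H F : SimpleGraph V) (hF : F ≤ H) (a b : V)
    (h : H.Adj a b) : ∃ F' ≤ H, ∀ w, fdeg F' w % 2 =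
      (fdeg F w + ((if w = a then 1 else 0) + (if w = b then 1 else 0))) % 2 := by
  by_cases hab : F.Adj a b
  · refine ⟨F.deleteEdges {s(a,b)}, (deleteEdges_le _).trans hF, fun w => ?_⟩
    have := fdeg_add (F.deleteEdges {s(a,b)}) a b h.ne (by simp) w
    rw [del_add F a b hab] at this
    omega
  · refine ⟨F ⊔ edge a b, sup_le hF ?_, fun w => ?_⟩
    · intro c d; have := h.symm; simp [edge_adj]; grind
    · rw [fdeg_add F a b h.ne hab w]

theorem toggle_walk {V : Type*} [Fintype V] (H : SimpleGraph V) (a b : V) (p : H.Walk a b) :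
    ∀ F : SimpleGraph V, F ≤ H → ∃ F' ≤ H, ∀ w, fdeg F' w % 2 =
      (fdeg F w + ((if w = a then 1 else 0) + (if w = b then 1 else 0))) % 2 := by
  induction p with
  | nil => intro F hF; exact ⟨F, hF, fun w => by omega⟩
  | cons h q ih =>
    intro F hF
    obtain ⟨F1, h1, h1'⟩ := toggle H F hF _ _ h
    obtain ⟨F2, h2, h2'⟩ := ih F1 h1
    refine ⟨F2, h2, fun w => ?_⟩
    have := h1' w
    have := h2' w
    omega

theorem exists_join_s11 {V : Type*} [Fintype V] (H : SimpleGraph V) (hH : H.Connected) (x : V)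
    (g : V → ℕ) (hg : ∀ w, g w ≤ 1) : ∃ F ≤ H, ∀ w, w ≠ x → fdeg F w % 2 = g w := by
  have key : ∀ n : ℕ, ∀ F ≤ H, {w | w ≠ x ∧ fdeg F w % 2 ≠ g w}.ncard = n →
      ∃ F ≤ H, ∀ w, w ≠ x → fdeg F w % 2 = g w := by
    intro n
    induction n using Nat.strong_induction_on with
    | _ n ih =>
      intro F hF hn
      by_cases hc : ∀ w, w ≠ x → fdeg F w % 2 = g w
      · exact ⟨F, hF, hc⟩
      push Not at hc
      obtain ⟨a, hax, ha⟩ := hc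
      obtain ⟨p⟩ := hH.preconnected a x
      obtain ⟨F1, h1, h1'⟩ := toggle_walk H a x p F hF
      refine ih _ ?_ F1 h1 rfl
      rw [← hn]
      apply Set.ncard_lt_ncard _ (Set.toFinite _)
      rw [Set.ssubset_iff_of_subset]
      · refine ⟨a, ⟨hax, ha⟩, ?_⟩
        have := h1' a
        have := hg a
        simp [hax] at *
        omega
      · rintro w ⟨hw, hw'⟩
        refine ⟨hw, fun h => hw' ?_⟩
        have h3 := h1' w
        have : w ≠ a := by rintro rfl; exact ha h
        simp [hw, this] at h3
        omega
  exact key _ ⊥ bot_le rfl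

theorem del_path {V : Type*} [Fintype V] (n : ℕ) : ∀ (F : SimpleGraph V) (a b : V) (p : F.Walk a b),
    p.IsPath → p.length = n → ∃ F' ≤ F, F'.edgeSet.ncard + p.length = F.edgeSet.ncard ∧
    ∀ w, fdeg F' w % 2 =
      (fdeg F w + ((if w = a then 1 else 0) + (if w = b then 1 else 0))) % 2 := by
  induction n with
  | zero =>
    intro F a b p hp hn
    have := Walk.eq_of_length_eq_zero hn
    subst this
    exact ⟨F, le_rfl, by omega, fun w => by omega⟩
  | succ n ih =>
    intro F a b p hp hn
    cases p with
    | nil => simp at hn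
    | @cons _ c _ h q =>
      rw [Walk.cons_isPath_iff] at hp
      have hq : s(a,c) ∉ q.edges := fun hh => hp.2 (q.fst_mem_support_of_mem_edges hh)
      have hl : (q.toDeleteEdge s(a,c) hq).length = n := by
        simp [Walk.toDeleteEdge, Walk.toDeleteEdges] at hn ⊢; exact hn
      obtain ⟨F1, h1, h2, h3⟩ := ih _ c b (q.toDeleteEdge s(a,c) hq)
        (hp.1.toDeleteEdges _ _ _) hl
      refine ⟨F1, h1.trans (deleteEdges_le _), ?_, fun w => ?_⟩
      · have := ecard_add (F.deleteEdges {s(a,c)}) a c h.ne (by simp)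
        rw [del_add F a c h] at this
        omega
      · have := fdeg_add (F.deleteEdges {s(a,c)}) a c h.ne (by simp) w
        rw [del_add F a c h] at this
        have := h3 w
        omega

theorem exists_spf {V : Type*} [Fintype V] (H : SimpleGraph V) (hH : H.Connected) (x : V)
    (g : V → ℕ) (hg : ∀ w, g w ≤ 1) :
    ∃ F, IsSemiperfectForest H F ∧ ∀ w, w ≠ x → fdeg F w % 2 = g w := by
  let P : ℕ → Prop := fun n => ∃ F ≤ H, (∀ w, w ≠ x → fdeg F w % 2 = g w) ∧ F.edgeSet.ncard = n
  have hP : ∃ n, P n := by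
    obtain ⟨F, h1, h2⟩ := exists_join_s11 H hH x g hg
    exact ⟨_, F, h1, h2, rfl⟩
  obtain ⟨F, h1, h2, h3⟩ := Nat.find_spec hP
  have hmin : ∀ F' ≤ H, (∀ w, w ≠ x → fdeg F' w % 2 = g w) →
      F.edgeSet.ncard ≤ F'.edgeSet.ncard := by
    intro F' h4 h5
    rw [h3]
    exact Nat.find_min' hP ⟨F', h4, h5, rfl⟩
  refine ⟨F, ⟨h1, ?_, ?_⟩, h2⟩
  · rw [isAcyclic_iff_forall_adj_isBridge]
    intro a b hab
    rw [isBridge_iff]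
    intro hr
    change (F.deleteEdges {s(a,b)}).Reachable a b at hr
    obtain ⟨p, hp⟩ := hr.exists_isPath
    obtain ⟨F1, h4, h5, h6⟩ := del_path _ _ a b p hp rfl
    have e1 := ecard_add (F.deleteEdges {s(a,b)}) a b hab.ne (by simp)
    rw [del_add F a b hab] at e1
    have := hmin F1 (h4.trans ((deleteEdges_le _).trans h1)) (fun w hw => by
      have e2 := fdeg_add (F.deleteEdges {s(a,b)}) a b hab.ne (by simp) w
      rw [del_add F a b hab] at e2
      have := h6 w
      have := h2 w hw
      omega)
    omega
  · intro a b hr hab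
    by_contra hF
    obtain ⟨p, hp⟩ := hr.exists_isPath
    obtain ⟨F1, h4, h5, h6⟩ := del_path _ _ a b p hp rfl
    have hF1 : ¬ F1.Adj a b := fun h => hF (h4 h)
    have l0 : p.length ≠ 0 := fun h => hab.ne (Walk.eq_of_length_eq_zero h)
    have l1 : p.length ≠ 1 := fun h => hF (Walk.adj_of_length_eq_one h)
    have e1 := ecard_add F1 a b hab.ne hF1
    have := hmin (F1 ⊔ edge a b) (sup_le (h4.trans h1) (by
        intro c d; have := hab.symm; simp [edge_adj]; grind)) (fun w hw => by
      have e2 := fdeg_add F1 a b hab.ne hF1 w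
      have := h6 w
      have := h2 w hw
      omega)
    omega

theorem reach_map {V W : Type*} (F : SimpleGraph V) (K : SimpleGraph W) (r : V → W)
    (h : ∀ c d, F.Adj c d → r c = r d ∨ K.Adj (r c) (r d)) (a b : V) (hr : F.Reachable a b) :
    K.Reachable (r a) (r b) := by
  obtain ⟨p⟩ := hr
  induction p with
  | nil => rfl
  | cons hh q ih =>
    rcases h _ _ hh with h | h
    · rw [h]; exact ih
    · exact h.reachable.trans ih

/-- glue two graphs -/
def glue {V : Type*} (A B : Set V) (FA : SimpleGraph A) (FB : SimpleGraph B) : SimpleGraph V where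
  Adj a b := (∃ ha hb, FA.Adj ⟨a, ha⟩ ⟨b, hb⟩) ∨ (∃ ha hb, FB.Adj ⟨a, ha⟩ ⟨b, hb⟩)
  symm := ⟨by
    rintro a b (⟨ha, hb, h⟩ | ⟨ha, hb, h⟩)
    · exact Or.inl ⟨hb, ha, h.symm⟩
    · exact Or.inr ⟨hb, ha, h.symm⟩⟩
  loopless := ⟨by
    rintro a (⟨ha, hb, h⟩ | ⟨ha, hb, h⟩)
    · exact h.ne rfl
    · exact h.ne rfl⟩

theorem glue_comm {V : Type*} (A B : Set V) (FA : SimpleGraph A) (FB : SimpleGraph B) :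
    glue A B FA FB = glue B A FB FA := by
  ext a b; exact or_comm

/-- retraction -/
noncomputable def retr {V : Type*} (A : Set V) (x : V) (hx : x ∈ A) (c : V) : A :=
  if h : c ∈ A then ⟨c, h⟩ else ⟨x, hx⟩

theorem retr_eq {V : Type*} (A B : Set V) (x : V) (hx : x ∈ A)
    (hAB : ∀ w, w ∈ A → w ∈ B → w = x) (c : V) (hc : c ∈ B) : retr A x hx c = ⟨x, hx⟩ := by
  unfold retr
  split_ifs with h
  · exact Subtype.ext (hAB c h hc)
  · rfl

theorem glue_reach {V : Type*} (A B : Set V) (x : V) (hx : x ∈ A)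
    (hAB : ∀ w, w ∈ A → w ∈ B → w = x) (FA : SimpleGraph A) (FB : SimpleGraph B)
    (a b : V) (ha : a ∈ A) (hb : b ∈ A) (hr : (glue A B FA FB).Reachable a b) :
    FA.Reachable ⟨a, ha⟩ ⟨b, hb⟩ := by
  have := reach_map _ FA (retr A x hx) (by
    rintro c d (⟨hc, hd, h⟩ | ⟨hc, hd, h⟩)
    · right; simpa [retr, hc, hd] using h
    · left; rw [retr_eq A B x hx hAB c hc, retr_eq A B x hx hAB d hd]) a b hr
  simpa [retr, ha, hb] using this

theorem glue_bridge {V : Type*} (A B : Set V) (x : V) (hx : x ∈ A)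
    (hAB : ∀ w, w ∈ A → w ∈ B → w = x) (FA : SimpleGraph A) (FB : SimpleGraph B)
    (hA : FA.IsAcyclic)
    (a b : V) (ha : a ∈ A) (hb : b ∈ A) (hab : FA.Adj ⟨a, ha⟩ ⟨b, hb⟩) :
    (glue A B FA FB).IsBridge s(a, b) := by
  rw [isBridge_iff]
  intro hr
  have h1 := isAcyclic_iff_forall_adj_isBridge.1 hA hab
  rw [isBridge_iff] at h1
  apply h1
  apply glue_reach A B x hx hAB _ FB
  refine hr.mono ?_
  intro c d hcd
  rw [deleteEdges_adj] at hcd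
  rcases hcd with ⟨⟨hc, hd, h⟩ | h, hn⟩
  · left
    refine ⟨hc, hd, ?_⟩
    rw [deleteEdges_adj]
    refine ⟨h, ?_⟩
    simpa using hn
  · exact Or.inr h

theorem glue_spf {V : Type*} (G : SimpleGraph V) (A B : Set V) (x : V) (hxA : x ∈ A) (hxB : x ∈ B)
    (hAB : ∀ w, w ∈ A → w ∈ B → w = x)
    (hG : ∀ a b, G.Adj a b → (a ∈ A ∧ b ∈ A) ∨ (a ∈ B ∧ b ∈ B))
    (FA : SimpleGraph A) (FB : SimpleGraph B)
    (hA : IsSemiperfectForest (G.induce A) FA) (hB : IsSemiperfectForest (G.induce B) FB) :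
    IsSemiperfectForest G (glue A B FA FB) := by
  have hBA : ∀ w, w ∈ B → w ∈ A → w = x := fun w h1 h2 => hAB w h2 h1
  refine ⟨?_, ?_, ?_⟩
  · rintro a b (⟨ha, hb, h⟩ | ⟨ha, hb, h⟩)
    · exact hA.1 h
    · exact hB.1 h
  · rw [isAcyclic_iff_forall_adj_isBridge]
    rintro a b (⟨ha, hb, h⟩ | ⟨ha, hb, h⟩)
    · exact glue_bridge A B x hxA hAB FA FB hA.2.1 a b ha hb h
    · rw [glue_comm]
      exact glue_bridge B A x hxB hBA FB FA hB.2.1 a b ha hb h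
  · intro a b hr hab
    rcases hG a b hab with ⟨ha, hb⟩ | ⟨ha, hb⟩
    · exact Or.inl ⟨ha, hb, hA.2.2 _ _ (glue_reach A B x hxA hAB FA FB a b ha hb hr) hab⟩
    · rw [glue_comm] at hr
      exact Or.inr ⟨ha, hb, hB.2.2 _ _ (glue_reach B A x hxB hBA FB FA a b ha hb hr) hab⟩

theorem fdeg_image {V : Type*} (A : Set V) (F : SimpleGraph V) (FA : SimpleGraph A) (w : V)
    (hw : w ∈ A) (h : ∀ y, F.Adj w y ↔ ∃ hy, FA.Adj ⟨w, hw⟩ ⟨y, hy⟩) :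
    fdeg F w = fdeg FA ⟨w, hw⟩ := by
  unfold fdeg
  have : F.neighborSet w = Subtype.val '' (FA.neighborSet ⟨w, hw⟩) := by
    ext y
    simp [mem_neighborSet, h]
  rw [this, Set.ncard_image_of_injective _ Subtype.val_injective]

theorem parity_last {V : Type*} [Fintype V] (F : SimpleGraph V) (f : V → ℕ) (x : V)
    (hf : ∀ w, f w ≤ 1) (hs : Even (∑ w, f w)) (h : ∀ w, w ≠ x → fdeg F w % 2 = f w) :
    ∀ w, fdeg F w % 2 = f w := by
  intro w
  by_cases hw : w = x
  swap
  · exact h w hw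
  subst hw
  have hd : ∀ y, fdeg F y = F.degree y := by
    intro y
    unfold fdeg
    rw [← card_neighborFinset_eq_degree, ← Set.ncard_coe_finset, coe_neighborFinset]
  have e := F.sum_degrees_eq_twice_card_edges
  simp only [← hd] at e
  rw [← Finset.add_sum_erase _ _ (Finset.mem_univ w)] at e hs
  have e3 : (∑ y ∈ Finset.univ.erase w, fdeg F y) % 2 = (∑ y ∈ Finset.univ.erase w, f y) % 2 := by
    rw [Finset.sum_nat_mod]
    congr 1
    exact Finset.sum_congr rfl (fun y hy => h y (Finset.ne_of_mem_erase hy))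
  have := hf w
  rw [Nat.even_iff] at hs
  omega

/-- Cut-vertex reduction for `f`-parity perfect forests avoiding a prescribed edge.
Let `G` be connected, `e = uv ∈ E(G)`, `f : V → {0,1}` even-sum, and let `x` be a
cut-vertex of `G`. Let `C` be the connected component of `G − x` meeting `{u, v}`
(described by: `x ∉ C`, `G[C]` connected, `C` closed under adjacency in `G − x`, and
`{u,v} \ {x} ⊆ C`), let `G' = G[C ∪ {x}]`, and let `f'` agree with `f` on `C` and be
even-sum on `G'`. Then `G` has an `f`-parity perfect forest not containing `e` iff
`G'` has an `f'`-parity perfect forest not containing `e`. -/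
theorem cut_vertex_reduction_parity_forest_avoiding_edge {V : Type*} [Fintype V]
    (G : SimpleGraph V) (hG : G.Connected) (u v x : V) (huv : G.Adj u v)
    (f : V → ℕ) (hf01 : ∀ w, f w ≤ 1) (hfsum : Even (∑ w, f w))
    (hcut : ¬ (G.induce (({x} : Set V)ᶜ)).Connected)
    (C : Set V) (hxC : x ∉ C) (hCconn : (G.induce C).Connected)
    (hCclosed : ∀ a ∈ C, ∀ b : V, b ≠ x → G.Adj a b → b ∈ C)
    (hCuv : ∀ w ∈ ({u, v} : Set V), w ≠ x → w ∈ C)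
    (f' : (C ∪ {x} : Set V) → ℕ) (hf'01 : ∀ w, f' w ≤ 1)
    (hf'eq : ∀ w : (C ∪ {x} : Set V), (w : V) ∈ C → f' w = f (w : V))
    (hf'sum : Even (∑ w : (C ∪ {x} : Set V), f' w)) :
    (∃ F : SimpleGraph V, IsSemiperfectForest G F ∧
        (∀ w : V, fdeg F w % 2 = f w) ∧ ¬ F.Adj u v) ↔
    (∃ F' : SimpleGraph (C ∪ {x} : Set V),
        IsSemiperfectForest (G.induce (C ∪ {x} : Set V)) F' ∧
        (∀ w : (C ∪ {x} : Set V), fdeg F' w % 2 = f' w) ∧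
        ¬ ∃ a b : (C ∪ {x} : Set V), (a : V) = u ∧ (b : V) = v ∧ F'.Adj a b) := by
  have hxA : x ∈ C ∪ {x} := Or.inr rfl
  have hxB : x ∈ Cᶜ := hxC
  have hCA : ∀ w ∈ C, ∀ y, G.Adj w y → y ∈ C ∪ {x} := by
    intro w hw y hwy
    by_cases hy : y = x
    · exact Or.inr hy
    · exact Or.inl (hCclosed w hw y hy hwy)
  have hBC : ∀ w ∉ C, w ≠ x → ∀ y, G.Adj w y → y ∈ Cᶜ := by
    intro w hw hwx y hwy hy
    exact hw (hCclosed y hy w hwx hwy.symm)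
  constructor
  · rintro ⟨F, ⟨h1, h2, h3⟩, h4, h5⟩
    refine ⟨F.induce _, ⟨?_, ?_, ?_⟩, ?_, ?_⟩
    · intro a b hab
      exact h1 hab
    · exact h2.induce _
    · intro a b hr hab
      refine h3 _ _ ?_ hab
      exact reach_map _ F Subtype.val (fun c d h => Or.inr h) _ _ hr
    · refine parity_last _ f' ⟨x, hxA⟩ hf'01 hf'sum ?_
      rintro ⟨w, hw⟩ hne
      have hwC : w ∈ C := by
        rcases hw with hw | hw
        · exact hw
        · exact absurd (Subtype.ext (show w = x from hw)) hne
      rw [hf'eq _ hwC, ← h4 w]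
      rw [fdeg_image (C ∪ {x}) F (F.induce _) w hw]
      intro y
      constructor
      · intro h
        exact ⟨hCA w hwC y (h1 h), h⟩
      · rintro ⟨_, h⟩
        exact h
    · rintro ⟨a, b, rfl, rfl, h⟩
      exact h5 h
  · rintro ⟨F', h1, h2, h3⟩
    have hH : (G.induce Cᶜ).Connected := by
      haveI : Nonempty (Cᶜ : Set V) := ⟨⟨x, hxB⟩⟩
      refine ⟨fun a b => ?_⟩
      have := reach_map G (G.induce Cᶜ) (retr Cᶜ x hxB) (by
        intro c d hcd
        by_cases hc : c ∈ C <;> by_cases hd : d ∈ C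
        · left; simp [retr, hc, hd]
        · left
          have : d = x := by by_contra hne; exact hd (hCclosed c hc d hne hcd)
          subst this
          simp [retr, hc]
        · left
          have : c = x := by by_contra hne; exact hc (hCclosed d hd c hne hcd.symm)
          subst this
          simp [retr, hd]
        · right; simpa [retr, hc, hd] using hcd) a b (hG.preconnected a b)
      have ha : (a : V) ∈ Cᶜ := a.2
      have hb : (b : V) ∈ Cᶜ := b.2
      simpa [retr, ha, hb, -Set.mem_compl_iff] using this
    obtain ⟨FB, hB1, hB2⟩ := exists_spf (G.induce Cᶜ) hH ⟨x, hxB⟩ (fun w => f w) (fun w => hf01 _)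
    refine ⟨glue _ _ F' FB, glue_spf G _ _ x hxA hxB ?_ ?_ F' FB h1 hB1, ?_, ?_⟩
    · rintro w (hw | hw) hw'
      · exact absurd hw hw'
      · exact hw
    · intro a b hab
      by_cases ha : a ∈ C
      · exact Or.inl ⟨Or.inl ha, hCA a ha b hab⟩
      by_cases hb : b ∈ C
      · exact Or.inl ⟨hCA b hb a hab.symm, Or.inl hb⟩
      · exact Or.inr ⟨ha, hb⟩
    · refine parity_last _ f x hf01 hfsum ?_
      intro w hwx
      by_cases hw : w ∈ C
      · rw [fdeg_image (C ∪ {x}) _ F' w (Or.inl hw), h2, hf'eq _ hw]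
        intro y
        constructor
        · rintro (⟨_, hy, h⟩ | ⟨h, _⟩)
          · exact ⟨hy, h⟩
          · exact absurd hw h
        · rintro ⟨hy, h⟩
          exact Or.inl ⟨_, hy, h⟩
      · rw [fdeg_image Cᶜ _ FB w hw, hB2 _ (fun h => hwx (congrArg Subtype.val h))]
        intro y
        constructor
        · rintro (⟨h, _⟩ | ⟨_, hy, h⟩)
          · rcases h with h | h
            · exact absurd h hw
            · exact absurd h hwx
          · exact ⟨hy, h⟩
        · rintro ⟨hy, h⟩
          exact Or.inr ⟨_, hy, h⟩
    · rintro (⟨hu, hv, h⟩ | ⟨hu, hv, h⟩)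
      · exact h3 ⟨_, _, rfl, rfl, h⟩
      · have e1 : u = x := by
          by_contra hne; exact hu (hCuv u (by simp) hne)
        have e2 : v = x := by
          by_contra hne; exact hv (hCuv v (by simp) hne)
        exact huv.ne (e1.trans e2.symm)
end
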